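/- arXiv:2410.10191 — 2 statements merged into one kernel-verified Lean document; each statement's English description precedes it below -/
import Mathlib

section
/- For every integer h > 0, every K_h-minor-free edge-weighted graph G and every real ρ > 0, there exist a partition 𝒫 of V(G) into parts each of strong diameter at most ρ and a total order ⪯ on 𝒫 such that for every real r > ρ, wcol_r(G,𝒫,⪯) ≤ C(h−2+2·⌈4h·r/ρ⌉, h−1) · (12+8r/ρ) · (h−1), where C(·,·) denotes the binomial coefficient. -/
open scoped ENNReal

namespace ScatterDim

variable {V : Type}





/-- Total weight of a walk in an edge-weighted graph. -/
noncomputable def walkWeight {G : SimpleGraph V} (w : Sym2 V → ℝ≥0∞)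
    {u v : V} (p : G.Walk u v) : ℝ≥0∞ :=
  (p.edges.map w).sum

/-- Shortest-path metric of an edge-weighted graph: the infimum of the total
weights of walks between the two vertices. -/
noncomputable def gdist (G : SimpleGraph V) (w : Sym2 V → ℝ≥0∞) (u v : V) : ℝ≥0∞ :=
  ⨅ p : G.Walk u v, walkWeight w p

/-- Shortest-path distance measured within the subgraph induced on `S`
(`⊤` if one of the endpoints is not in `S`). -/
noncomputable def distOn (G : SimpleGraph V) (w : Sym2 V → ℝ≥0∞) (S : Set V)
    (u v : V) : ℝ≥0∞ :=
  ⨅ (hu : u ∈ S), ⨅ (hv : v ∈ S), ⨅ (p : (G.induce S).Walk ⟨u, hu⟩ ⟨v, hv⟩),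
    (p.edges.map (fun e => w (e.map Subtype.val))).sum

/-- Distance between two sets of vertices inside the subgraph induced on `S`. -/
noncomputable def setDistOn (G : SimpleGraph V) (w : Sym2 V → ℝ≥0∞) (S : Set V)
    (A B : Set V) : ℝ≥0∞ :=
  ⨅ a ∈ A, ⨅ b ∈ B, distOn G w S a b

/-- Distance from a point to a set. -/
noncomputable def pdist (G : SimpleGraph V) (w : Sym2 V → ℝ≥0∞) (u : V) (X : Set V) : ℝ≥0∞ :=
  ⨅ x ∈ X, gdist G w u x

/-- `Y` is weakly `r`-reachable from `X` (with respect to the partition `P`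
ordered by `le`): there is a path of total weight at most `r` from a vertex of `X`
to a vertex of `Y` in the subgraph induced on the union of the parts `Z` with `Y ⪯ Z`. -/
def WReach (G : SimpleGraph V) (w : Sym2 V → ℝ≥0∞) (P : Set (Set V))
    (le : Set V → Set V → Prop) (r : ℝ) (X Y : Set V) : Prop :=
  setDistOn G w (⋃₀ {Z | Z ∈ P ∧ le Y Z}) X Y ≤ ENNReal.ofReal r

/-- The weak coloring number of `G` with respect to the partition `P`
and the order `le`: the maximum over `X ∈ P` of the number of parts weakly
`r`-reachable from `X`. -/
noncomputable def wcol (G : SimpleGraph V) (w : Sym2 V → ℝ≥0∞) (P : Set (Set V))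
    (le : Set V → Set V → Prop) (r : ℝ) : ℕ :=
  ⨆ X ∈ P, {Y | Y ∈ P ∧ WReach G w P le r X Y}.ncard

/-- `le` is a total (linear) order on the collection `P`. -/
def IsLinearOrderOn {α : Type} (P : Set α) (le : α → α → Prop) : Prop :=
  (∀ X ∈ P, le X X) ∧
  (∀ X ∈ P, ∀ Y ∈ P, le X Y → le Y X → X = Y) ∧
  (∀ X ∈ P, ∀ Y ∈ P, ∀ Z ∈ P, le X Y → le Y Z → le X Z) ∧
  (∀ X ∈ P, ∀ Y ∈ P, le X Y ∨ le Y X)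

/-- An `ε`-ladder of width `r` and length `ℓ` in the metric `dist`. -/
def IsLadder (dist : V → V → ℝ≥0∞) (ε r : ℝ) (ℓ : ℕ) (x p : Fin ℓ → V) : Prop :=
  (∀ i j : Fin ℓ, j < i → dist (p j) (x i) ≤ ENNReal.ofReal r) ∧
  (∀ i : Fin ℓ, ENNReal.ofReal ((1 + ε) * r) < dist (p i) (x i))

/-- `G` contains the complete graph on `h` vertices as a minor, witnessed by
pairwise disjoint connected nonempty branch sets that are pairwise adjacent. -/
def HasCompleteMinor (G : SimpleGraph V) (h : ℕ) : Prop :=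
  ∃ B : Fin h → Set V,
    (∀ i, (G.induce (B i)).Connected) ∧
    (∀ i j, i ≠ j → Disjoint (B i) (B j)) ∧
    (∀ i j, i ≠ j → ∃ u ∈ B i, ∃ v ∈ B j, G.Adj u v)

/-- `(T, bag)` is a tree decomposition of `G`. -/
def IsTreeDecompOf {ι : Type} (G : SimpleGraph V) (T : SimpleGraph ι) (bag : ι → Set V) : Prop :=
  T.IsTree ∧
  (∀ u v : V, G.Adj u v → ∃ t, u ∈ bag t ∧ v ∈ bag t) ∧
  (∀ v : V, (T.induce {t | v ∈ bag t}).Connected)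

/-- `G` has treewidth at most `n`. -/
def TreewidthAtMost (G : SimpleGraph V) (n : ℕ) : Prop :=
  ∃ (ι : Type) (T : SimpleGraph ι) (bag : ι → Set V),
    IsTreeDecompOf G T bag ∧ ∀ t, (bag t).ncard ≤ n + 1

/-- `D` is an `r`-cover of the edge-weighted graph `(G, w)`. -/
def IsCover (G : SimpleGraph V) (w : Sym2 V → ℝ≥0∞) (r : ℝ) (D : Set (Set V)) : Prop :=
  ∀ v : V, ∃ A ∈ D, ∀ u : V, gdist G w v u ≤ ENNReal.ofReal r → u ∈ A


/-! Walks of bounded length inside a set -/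

inductive Wk (G : SimpleGraph V) (w : V → V → ℝ) (A : Set V) : V → V → ℝ → Prop
  | nil {v : V} {c : ℝ} : v ∈ A → 0 ≤ c → Wk G w A v v c
  | cons {v u x : V} {c c' : ℝ} : v ∈ A → G.Adj v u → Wk G w A u x c → w v u + c ≤ c' →
      Wk G w A v x c'

section walks
variable {G : SimpleGraph V} {w : V → V → ℝ} {A B : Set V} {u v x : V} {c c' : ℝ}

theorem Wk.left_mem (h : Wk G w A u v c) : u ∈ A := by cases h <;> assumption

theorem Wk.right_mem (h : Wk G w A u v c) : v ∈ A := by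
  induction h <;> assumption

theorem Wk.nonneg (hw : ∀ a b, 0 ≤ w a b) (h : Wk G w A u v c) : 0 ≤ c := by
  induction h with
  | nil _ h => exact h
  | @cons v u x c c' hv ha hk hc ih => linarith [hw v u]

theorem Wk.mono (h : Wk G w A u v c) (hAB : A ⊆ B) (hc : c ≤ c') : Wk G w B u v c' := by
  induction h generalizing c' with
  | nil h1 h2 => exact .nil (hAB h1) (h2.trans hc)
  | cons hv ha hk hcc ih => exact .cons (hAB hv) ha (ih le_rfl) (hcc.trans hc)

theorem Wk.trans (h : Wk G w A u v c) (h' : Wk G w A v x c') : Wk G w A u x (c + c') := by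
  induction h with
  | nil h1 h2 => exact h'.mono subset_rfl (by linarith)
  | cons hv ha hk hcc ih => exact .cons hv ha (ih h') (by linarith)

theorem Wk.symm (hs : ∀ a b, w a b = w b a) (h : Wk G w A u v c) : Wk G w A v u c := by
  induction h with
  | nil h1 h2 => exact .nil h1 h2
  | @cons v u x c c' hv ha hk hcc ih =>
    have : Wk G w A u v (w v u) := .cons hk.left_mem ha.symm (.nil hv le_rfl) (by rw [hs]; simp)
    exact (ih.trans this).mono subset_rfl (by linarith)

theorem Wk.edge (hu : u ∈ A) (hv : v ∈ A) (ha : G.Adj u v) : Wk G w A u v (w u v) :=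
  .cons hu ha (.nil hv le_rfl) (by simp)

/-- splitting a walk at length g -/
theorem Wk.split (h : Wk G w A u v c) : ∀ g : ℝ, 0 ≤ g →
    Wk G w A u v g ∨ ∃ x x', Wk G w A u x g ∧ G.Adj x x' ∧ Wk G w A x' v (c - g) := by
  induction h with
  | nil h1 h2 => intro g hg; exact .inl (.nil h1 hg)
  | @cons v u x c c' hv ha hk hcc ih =>
    intro g hg
    by_cases hwg : w v u ≤ g
    · rcases ih (g - w v u) (by linarith) with h | ⟨y, y', h1, h2, h3⟩
      · exact .inl (.cons hv ha h (by linarith))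
      · exact .inr ⟨y, y', .cons hv ha h1 (by linarith), h2, h3.mono subset_rfl (by linarith)⟩
    · exact .inr ⟨v, u, .nil hv hg, ha, hk.mono subset_rfl (by linarith)⟩

/-- closedness -/
theorem Wk.stay (h : Wk G w A u v c) {C : Set V} (hu : u ∈ C)
    (hC : ∀ a ∈ C, ∀ b ∈ A, G.Adj a b → b ∈ C) : Wk G w (A ∩ C) u v c := by
  induction h with
  | nil h1 h2 => exact .nil ⟨h1, hu⟩ h2
  | cons hv ha hk hcc ih => exact .cons ⟨hv, hu⟩ ha (ih (hC _ hu _ hk.left_mem ha)) hcc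

/-- A walk either avoids Z or hits it. -/
theorem Wk.hit (hw : ∀ a b, 0 ≤ w a b) (h : Wk G w A u v c) (Z : Set V) : Wk G w (A \ Z) u v c ∨
    ∃ z ∈ Z, Wk G w A u z c ∧ Wk G w A z v c := by
  induction h with
  | @nil v c h1 h2 =>
    by_cases hz : v ∈ Z
    · exact .inr ⟨v, hz, .nil h1 h2, .nil h1 h2⟩
    · exact .inl (.nil ⟨h1, hz⟩ h2)
  | @cons v u x c c' hv ha hk hcc ih =>
    by_cases hz : v ∈ Z
    · exact .inr ⟨v, hz, .nil hv (by linarith [hw v u, hk.nonneg hw]), .cons hv ha hk hcc⟩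
    rcases ih with h | ⟨z, hz, h1, h2⟩
    · exact .inl (.cons ⟨hv, hz⟩ ha h hcc)
    · exact .inr ⟨z, hz, .cons hv ha h1 hcc, h2.mono subset_rfl (by linarith [hw v u])⟩

end walks

/-- vertices that can reach `Q` through `U` -/
inductive Lv (G : SimpleGraph V) (U Q : Set V) : V → Prop
  | base {v : V} : v ∈ Q → Lv G U Q v
  | step {v u : V} : v ∈ U → G.Adj v u → Lv G U Q u → Lv G U Q v

theorem Lv.of_wk {G : SimpleGraph V} {w : V → V → ℝ} {U Q : Set V} {u v : V} {c : ℝ}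
    (h : Wk G w U u v c) (hv : Lv G U Q v) : Lv G U Q u := by
  induction h with
  | nil h1 h2 => exact hv
  | cons hv' ha hk hcc ih => exact .step hv' ha (ih hv)

theorem Lv.exists_nbr {G : SimpleGraph V} {w : V → V → ℝ} {U Q : Set V} {u : V}
    (h : Lv G U Q u) (hu : u ∈ U) (hQ : ∀ q ∈ Q, q ∉ U) :
    ∃ v q c, Wk G w U u v c ∧ q ∈ Q ∧ G.Adj v q := by
  induction h with
  | base h => exact absurd hu (hQ _ h)
  | @step v u' hv ha hl ih =>
    by_cases hu' : u' ∈ U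
    · obtain ⟨x, q, c, h1, h2, h3⟩ := ih hu'
      exact ⟨x, q, _, .cons hv ha h1 le_rfl, h2, h3⟩
    · cases hl with
      | base h => exact ⟨v, u', 0, .nil hv le_rfl, h, ha⟩
      | step h => exact absurd h hu'

/-- exact walks to a seed set -/
inductive RS (G : SimpleGraph V) (w : V → V → ℝ) (K C : Set V) : V → ℝ → ℕ → Prop
  | base {k : V} : k ∈ K → RS G w K C k 0 0
  | step {v u : V} {c : ℝ} {m : ℕ} : v ∈ C → G.Adj v u → RS G w K C u c m →
      RS G w K C v (w v u + c) (m + 1)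

theorem RS.nonneg {G : SimpleGraph V} {w : V → V → ℝ} {K C : Set V} {v : V} {c : ℝ} {m : ℕ}
    (hw : ∀ a b, 0 ≤ w a b) (h : RS G w K C v c m) : 0 ≤ c := by
  induction h with
  | base => exact le_rfl
  | step hv ha hr ih => exact add_nonneg (hw _ _) ih

theorem RS.of_wk {G : SimpleGraph V} {w : V → V → ℝ} {K C : Set V} {u v : V} {c c' : ℝ} {m : ℕ}
    (h : Wk G w C u v c) (hr : RS G w K C v c' m) : ∃ d m', d ≤ c + c' ∧ RS G w K C u d m' := by
  induction h with
  | nil h1 h2 => exact ⟨c', m, by linarith, hr⟩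
  | cons hv ha hk hcc ih =>
    obtain ⟨d, m', h1, h2⟩ := ih hr
    exact ⟨_, _, by linarith, .step hv ha h2⟩

theorem RS.mem_closure {G : SimpleGraph V} {w : V → V → ℝ} {K C : Set V} {v : V} {c : ℝ} {m : ℕ}
    (h : RS G w K C v c m) :
    c ∈ AddSubmonoid.closure (Set.range (fun p : V × V => w p.1 p.2)) := by
  induction h with
  | base => exact zero_mem _
  | step hv ha hr ih => exact add_mem (AddSubmonoid.subset_closure ⟨(_, _), rfl⟩) ih

theorem RS.exists_min [Finite V] {G : SimpleGraph V} {w : V → V → ℝ} (hw : ∀ a b, 0 ≤ w a b)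
    {K C : Set V} {v : V} (h : ∃ c m, RS G w K C v c m) :
    ∃ c m, RS G w K C v c m ∧ (∀ c' m', RS G w K C v c' m' → c ≤ c') ∧
      ∀ m', RS G w K C v c m' → m ≤ m' := by
  classical
  have hp : (AddSubmonoid.closure (Set.range (fun p : V × V => w p.1 p.2)) : Set ℝ).IsPWO := by
    apply Set.IsPWO.addSubmonoid_closure
    · rintro _ ⟨p, rfl⟩; exact hw _ _
    · exact (Set.finite_range _).isPWO
  have hq : {c | ∃ m, RS G w K C v c m}.IsWF :=
    hp.isWF.mono (by rintro c ⟨m, hm⟩; exact hm.mem_closure)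
  have hne : {c | ∃ m, RS G w K C v c m}.Nonempty := by
    obtain ⟨c, m, h⟩ := h; exact ⟨c, m, h⟩
  have hm := hq.min_mem hne
  refine ⟨hq.min hne, Nat.find hm, Nat.find_spec hm, ?_, ?_⟩
  · intro c' m' h'; exact hq.min_le hne ⟨m', h'⟩
  · intro m' h'; exact Nat.find_min' hm h'

/-- shortest path forest -/
theorem exists_spf [Finite V] (G : SimpleGraph V) (w : V → V → ℝ) (hw : ∀ a b, 0 ≤ w a b)
    (K C : Set V) : ∃ (d : V → ℝ) (n : V → ℕ) (par : V → V),
      (∀ k ∈ K, d k = 0 ∧ par k = k) ∧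
      (∀ v c m, RS G w K C v c m → 0 ≤ d v ∧ d v ≤ c) ∧
      (∀ v c m, RS G w K C v c m → ∃ m', RS G w K C v (d v) m') ∧
      (∀ v c m, RS G w K C v c m → v ∉ K → v ∈ C ∧ G.Adj v (par v) ∧
        (∃ c' m', RS G w K C (par v) c' m') ∧ d v = w v (par v) + d (par v) ∧ n (par v) < n v) := by
  classical
  have key : ∀ v, ∃ c m, (∃ c m, RS G w K C v c m) →
      RS G w K C v c m ∧ (∀ c' m', RS G w K C v c' m' → c ≤ c') ∧
      ∀ m', RS G w K C v c m' → m ≤ m' := by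
    intro v
    by_cases h : ∃ c m, RS G w K C v c m
    · obtain ⟨c, m, h'⟩ := RS.exists_min hw h
      exact ⟨c, m, fun _ => h'⟩
    · exact ⟨0, 0, fun h' => absurd h' h⟩
  choose d n hdn using key
  have key2 : ∀ v, ∃ u, (v ∈ K → u = v) ∧ ((∃ c m, RS G w K C v c m) → v ∉ K → v ∈ C ∧ G.Adj v u ∧
        (∃ c' m', RS G w K C u c' m') ∧ d v = w v u + d u ∧ n u < n v) := by
    intro v
    by_cases hv : v ∈ K
    · exact ⟨v, fun _ => rfl, fun _ h => absurd hv h⟩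
    by_cases h : ∃ c m, RS G w K C v c m
    · obtain ⟨h1, h2, h3⟩ := hdn v h
      generalize hc : d v = c at h1 h2 h3
      generalize hm : n v = m at h1 h2 h3
      cases h1 with
      | base hk => exact absurd hk hv
      | @step _ u c m hvC ha hr =>
        refine ⟨u, fun h => absurd h hv, fun _ _ => ⟨hvC, ha, ⟨_, _, hr⟩, ?_⟩⟩
        obtain ⟨g1, g2, g3⟩ := hdn u ⟨_, _, hr⟩
        have e1 := g2 _ _ hr
        have e2 := h2 _ _ (.step hvC ha g1)
        have e : d u = c := by linarith
        have := g3 m (e ▸ hr)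
        exact ⟨by rw [e], by omega⟩
    · exact ⟨v, fun _ => rfl, fun h' => absurd h' h⟩
  choose par hpar using key2
  refine ⟨d, n, par, ?_, ?_, ?_, ?_⟩
  · intro k hk
    have h1 : RS G w K C k 0 0 := .base hk
    have h2 := hdn k ⟨_, _, h1⟩
    exact ⟨le_antisymm (h2.2.1 _ _ h1) (h2.1.nonneg hw), (hpar k).1 hk⟩
  · intro v c m h
    have h2 := hdn v ⟨_, _, h⟩
    exact ⟨h2.1.nonneg hw, h2.2.1 _ _ h⟩
  · intro v c m h
    exact ⟨_, (hdn v ⟨_, _, h⟩).1⟩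
  · intro v c m h hv
    exact (hpar v).2 ⟨_, _, h⟩ hv

theorem exists_seed [Finite V] {par : V → V} {n : V → ℕ} {K : Set V} {R : V → Prop}
    (hK : ∀ k ∈ K, par k = k)
    (hR : ∀ v, R v → v ∉ K → R (par v) ∧ n (par v) < n v) :
    ∃ sd : V → V, (∀ k ∈ K, sd k = k) ∧ ∀ v, R v → sd v ∈ K ∧ sd v = sd (par v) := by
  classical
  have fix : ∀ m, ∀ k ∈ K, par^[m] k = k := by
    intro m k hk
    exact Function.iterate_fixed (hK k hk) m
  have key : ∀ m v, R v → n v ≤ m → par^[m] v ∈ K := by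
    intro m
    induction m with
    | zero =>
      intro v hv hn
      by_contra hk
      have := (hR v hv hk).2
      omega
    | succ m ih =>
      intro v hv hn
      by_cases hk : v ∈ K
      · rw [fix _ _ hk]; exact hk
      · have := hR v hv hk
        exact ih _ this.1 (by omega)
  have := Fintype.ofFinite V
  obtain ⟨N, hN⟩ : ∃ N, ∀ v, n v ≤ N := ⟨Finset.univ.sup n, fun v => Finset.le_sup (Finset.mem_univ v)⟩
  refine ⟨par^[N], fix N, fun v hv => ⟨key N v hv (hN v), ?_⟩⟩
  rw [← Function.iterate_succ_apply, Function.iterate_succ_apply', hK _ (key N v hv (hN v))]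

structure St (V : Type) where
  U : Set V
  σ : V → ℕ
  lab : V → ℕ × ℕ
  T : Set V
  δ : V → ℝ
  S : ℕ → Finset ℕ
  D : ℕ → Set V
  n : ℕ
  rad : V → ℕ

namespace St

def Q (s : St V) (X : ℕ) : Set V := {x | x ∉ s.U ∧ s.σ x = X}
def M (s : St V) (X : ℕ) : Set V := {x | x ∈ s.U ∨ X ≤ s.σ x}
def Pt (s : St V) (v : V) : Set V := {x | x ∉ s.U ∧ s.σ x = s.σ v ∧ s.lab x = s.lab v}
def L (G : SimpleGraph V) (s : St V) (X : ℕ) (v : V) : Prop := Lv G s.U (s.Q X) v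
def Buf (G : SimpleGraph V) (w : V → V → ℝ) (γ : ℝ) (s : St V) (u : V) (X : ℕ) : Prop :=
  ∀ u' c, Wk G w s.U u u' c → ∀ x, s.L G X x → ¬ Wk G w (s.M X) u' x γ

theorem L_mono {G : SimpleGraph V} {s s' : St V} {X : ℕ} (hU : s'.U ⊆ s.U)
    (hQ : ∀ v ∈ s'.Q X, s.L G X v) {v : V} (h : s'.L G X v) : s.L G X v := by
  induction h with
  | base h => exact hQ _ h
  | step hv ha hl ih => exact .step (hU hv) ha ih

theorem Buf.mono {G : SimpleGraph V} {w : V → V → ℝ} {γ : ℝ} {s s' : St V} {X : ℕ} {u : V}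
    (hU : s'.U ⊆ s.U) (hL : ∀ v, s'.L G X v → s.L G X v) (hM : s'.M X ⊆ s.M X)
    (h : s.Buf G w γ u X) : s'.Buf G w γ u X := by
  intro u' c hk x hx hwk
  exact h u' c (hk.mono hU le_rfl) x (hL _ hx) (hwk.mono hM le_rfl)

theorem Buf.conn {G : SimpleGraph V} {w : V → V → ℝ} {γ : ℝ} {s : St V} {X : ℕ} {u v : V} {c : ℝ}
    (h : s.Buf G w γ u X) (hk : Wk G w s.U u v c) : s.Buf G w γ v X := by
  intro u' c' hk' x hx hwk
  exact h u' _ (hk.trans hk') x hx hwk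

open Classical in
structure Inv (G : SimpleGraph V) (w : V → V → ℝ) (h : ℕ) (γ ρ : ℝ) (s : St V) : Prop where
  σn : ∀ v, v ∉ s.U → s.σ v < s.n
  Sn : ∀ t < s.n, ∀ X ∈ s.S t, X < t
  card : ∀ t < s.n, (s.S t).card + 2 ≤ h
  cl : ∀ t < s.n, ∀ X ∈ s.S t, ∀ Y ∈ s.S t, X < Y → X ∈ s.S Y
  adjS : ∀ t < s.n, ∀ X ∈ s.S t, ∃ u ∈ s.Q X, ∃ v ∈ s.Q t, G.Adj u v
  LD : ∀ t < s.n, ∀ v, s.L G t v → v ∈ s.D t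
  J : ∀ t < s.n, ∀ u ∈ s.D t, ∀ X < t, s.L G X u → X ∈ s.S t
  K : ∀ t < s.n, ∀ u ∈ s.D t, ∀ v, v ∉ s.D t → G.Adj u v → v ∉ s.U ∧ s.σ v ∈ s.S t
  F : ∀ t < s.n, ∀ u ∈ s.D t, ∀ X < t, X ∉ s.S t → ∀ x, s.L G X x → ¬ Wk G w (s.M X) u x γ
  E : ∀ v, v ∉ s.U → ∃ z ∈ s.T, z ∈ s.Pt v ∧ Wk G w (s.Pt v) v z (γ * s.rad v)
  TU : ∀ z ∈ s.T, z ∉ s.U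
  Tconn : ∀ z ∈ s.T, ∀ z' ∈ s.T, s.σ z = s.σ z' → ∃ c, Wk G w (s.Q (s.σ z)) z z' c
  Tdiam : ∀ z ∈ s.T, ∀ z' ∈ s.T, s.σ z = s.σ z' → s.lab z = s.lab z' →
    Wk G w (s.Pt z) z z' (ρ / 2)
  Tδ : ∀ z ∈ s.T, ∀ z' ∈ s.T, s.σ z = s.σ z' → ∀ c, Wk G w (s.M (s.σ z)) z z' c →
    s.δ z ≤ s.δ z' + c
  Tlab : ∀ z ∈ s.T, (s.lab z).1 ∈ insert (s.σ z) (s.S (s.σ z)) ∧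
    (s.lab z).2 = ⌊2 * s.δ z / ρ⌋₊ ∧ 0 ≤ s.δ z
  radb : ∀ v, v ∉ s.U → s.rad v ≤ (s.S (s.σ v)).card
  radU : ∀ b, b ∉ s.U → ∀ u ∈ s.U, G.Adj b u →
    s.rad b ≤ ((s.S (s.σ b)).filter (fun X => s.Buf G w γ u X)).card

open Classical in
theorem grow [Finite V] {G : SimpleGraph V} {w : V → V → ℝ} {h : ℕ} {γ ρ : ℝ}
    (hw : ∀ a b, 0 ≤ w a b) (hs : ∀ a b, w a b = w b a)
    {s : St V} (I : Inv G w h γ ρ s) {X : ℕ} {c0 : V} (hc0 : c0 ∈ s.U)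
    (hL0 : ¬ s.L G X c0) (hB : ¬ s.Buf G w γ c0 X) :
    ∃ s' : St V, Inv G w h γ ρ s' ∧ s'.U ⊂ s.U := by
  -- component
  set C : Set V := {v | ∃ c, Wk G w s.U c0 v c} with hC
  have hCU : C ⊆ s.U := by rintro v ⟨c, hc⟩; exact hc.right_mem
  have hcl : ∀ a ∈ C, ∀ b ∈ s.U, G.Adj a b → b ∈ C := by
    rintro a ⟨c, hc⟩ b hb hab
    exact ⟨_, hc.trans (.edge (hc.right_mem) hb hab)⟩
  have hCC : ∀ a ∈ C, ∀ b ∈ C, ∃ c, Wk G w s.U a b c := by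
    rintro a ⟨c, hc⟩ b ⟨c', hc'⟩
    exact ⟨_, (hc.symm hs).trans hc'⟩
  have hCL : ∀ v ∈ C, ¬ s.L G X v := by
    rintro v ⟨c, hc⟩ hv
    exact hL0 (Lv.of_wk hc hv)
  set K : Set V := {b | b ∈ s.M X ∧ b ∉ C ∧ ∃ c ∈ C, G.Adj c b} with hK
  have hKU : ∀ b ∈ K, b ∉ s.U := by
    rintro b ⟨_, hb, c, hc, hcb⟩ hbU
    exact hb (hcl c hc b hbU hcb)
  obtain ⟨d, n, par, sp1, sp2, sp3, sp4⟩ := exists_spf G w hw K C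
  have hRn : ∀ v, (∃ c m, RS G w K C v c m) → v ∉ K →
      (∃ c m, RS G w K C (par v) c m) ∧ n (par v) < n v := by
    rintro v ⟨c, m, h⟩ hv
    obtain ⟨-, -, h1, -, h2⟩ := sp4 v c m h hv
    exact ⟨h1, h2⟩
  obtain ⟨sd, sd1, sd2⟩ := exists_seed (fun k hk => (sp1 k hk).2) hRn
  set N : Set V := {v | v ∈ C ∧ (∃ c m, RS G w K C v c m) ∧ d v ≤ γ} with hN
  have hNC : N ⊆ C := fun v hv => hv.1
  -- exit lemma
  have exit : ∀ v x c, Wk G w (s.M X) v x c → v ∈ C → x ∉ C → ∃ c' m, RS G w K C v c' m ∧ c' ≤ c := by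
    intro v x c hk
    induction hk with
    | nil => intro h1 h2; exact absurd h1 h2
    | @cons v u x c c' hv ha hk hcc ih =>
      intro h1 h2
      by_cases hu : u ∈ C
      · obtain ⟨e, m, h3, h4⟩ := ih hu h2
        exact ⟨_, _, .step h1 ha h3, by linarith⟩
      · have : u ∈ K := ⟨hk.left_mem, hu, v, h1, ha⟩
        exact ⟨_, _, .step h1 ha (.base this), by linarith [hk.nonneg hw]⟩
  have hNne : N.Nonempty := by
    simp only [Buf, not_forall, not_not] at hB
    obtain ⟨u', c, h1, x, hx, h2⟩ := hB
    have hu' : u' ∈ C := ⟨c, h1⟩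
    obtain ⟨c', m, h3, h4⟩ := exit u' x γ h2 hu' (fun hxC => hCL x hxC hx)
    exact ⟨u', hu', ⟨_, _, h3⟩, (sp2 _ _ _ h3).2.trans h4⟩
  -- facts about seeds
  have hsd : ∀ v ∈ N, sd v ∈ K := fun v hv => (sd2 v hv.2.1).1
  have hKX : ∀ b ∈ K, s.σ b < s.n ∧ X ∈ s.S (s.σ b) ∧ (∀ v ∈ C, s.L G (s.σ b) v) := by
    intro b hb
    have hbU := hKU b hb
    obtain ⟨hbM, hbC, c, hc, hcb⟩ := hb
    have hcL : ∀ v ∈ C, s.L G (s.σ b) v := by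
      intro v hv
      obtain ⟨e, he⟩ := hCC v hv c hc
      exact Lv.of_wk he (.step (hCU hc) hcb (.base ⟨hbU, rfl⟩))
    refine ⟨I.σn b hbU, ?_, hcL⟩
    by_contra hX
    have h1 : X ≤ s.σ b := by
      rcases hbM with h | h
      · exact absurd h hbU
      · exact h
    have h2 : X ≠ s.σ b := by
      rintro rfl
      exact hCL c hc (hcL c hc)
    apply hB
    intro u' e he x hx
    exact I.F _ (I.σn b hbU) u' (I.LD _ (I.σn b hbU) _ (hcL u' ⟨e, he⟩)) X (by omega) hX x hx
  set f : V → V := fun v => if v ∈ N then sd v else v with hf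
  have fN : ∀ v ∈ N, f v = sd v := fun v hv => if_pos hv
  have fnN : ∀ v, v ∉ N → f v = v := fun v hv => if_neg hv
  have foU : ∀ v, v ∉ s.U → f v = v := fun v hv => fnN v (fun h => hv (hCU h.1))
  let s' : St V := { s with
    U := s.U \ N, σ := fun v => s.σ (f v), lab := fun v => s.lab (f v)
    rad := fun v => if v ∈ N then s.rad (sd v) + 1 else s.rad v }
  have hUU : s'.U ⊆ s.U := Set.sdiff_subset
  have new : ∀ v, v ∉ s'.U → v ∈ s.U → v ∈ N := by
    intro v h1 h2; by_contra h3; exact h1 ⟨h2, h3⟩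
  have nU : ∀ v, v ∉ s.U → v ∉ s'.U := fun v hv h => hv (hUU h)
  have fU : ∀ v, v ∉ s'.U → f v ∉ s.U := by
    intro v hv
    by_cases h : v ∈ N
    · rw [fN v h]; exact hKU _ (hsd v h)
    · rw [fnN v h]; intro h'; exact h (new v hv h')
  have σo : ∀ v, v ∉ s.U → s'.σ v = s.σ v := fun v hv => by
    change s.σ (f v) = _; rw [foU v hv]
  have labo : ∀ v, v ∉ s.U → s'.lab v = s.lab v := fun v hv => by
    change s.lab (f v) = _; rw [foU v hv]
  have rado : ∀ v, v ∉ s.U → s'.rad v = s.rad v := fun v hv =>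
    if_neg (fun h => hv (hCU h.1))
  have QQ : ∀ t, s.Q t ⊆ s'.Q t := fun t v hv => ⟨nU v hv.1, by rw [σo v hv.1]; exact hv.2⟩
  have PP : ∀ v, v ∉ s.U → s.Pt v ⊆ s'.Pt v := by
    intro v hv x hx
    exact ⟨nU x hx.1, by rw [σo v hv, σo x hx.1]; exact hx.2.1,
      by rw [labo v hv, labo x hx.1]; exact hx.2.2⟩
  have MM : ∀ t, s'.M t ⊆ s.M t := by
    intro t v hv
    by_cases hvU : v ∈ s.U
    · exact .inl hvU
    · rcases hv with hv | hv
      · exact .inl (hUU hv)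
      · right; rw [← σo v hvU]; exact hv
  have LL : ∀ t v, s'.L G t v → s.L G t v := by
    intro t v
    apply L_mono hUU
    rintro x ⟨hx1, hx2⟩
    by_cases hxU : x ∈ s.U
    · have hxN := new x hx1 hxU
      have h1 := (hKX _ (hsd x hxN)).2.2 x hxN.1
      have h2 : s.σ (f x) = t := hx2
      rw [fN x hxN] at h2
      rwa [h2] at h1
    · exact .base ⟨hxU, by rw [← σo x hxU]; exact hx2⟩
  have TU := I.TU
  -- walks to the seed
  have chain : ∀ m v, n v ≤ m → (v ∈ N ∨ v ∈ K) → Wk G w (s'.Pt v) v (sd v) (d v) := by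
    intro m
    induction m with
    | zero =>
      rintro v hn (hv | hv)
      · have hvK : v ∉ K := fun h => h.2.1 hv.1
        have := (hRn v hv.2.1 hvK).2
        omega
      · rw [sd1 v hv, (sp1 v hv).1]
        exact .nil ⟨nU v (hKU v hv), rfl, rfl⟩ le_rfl
    | succ m ih =>
      rintro v hn (hv | hv)
      · have hvK : v ∉ K := fun h => h.2.1 hv.1
        obtain ⟨c, e, hr⟩ := hv.2.1
        obtain ⟨h1, h2, h3, h4, h5⟩ := sp4 v c e hr hvK
        have hp : par v ∈ N ∨ par v ∈ K := by
          by_cases hk : par v ∈ K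
          · exact .inr hk
          · obtain ⟨c', e', hr'⟩ := h3
            exact .inl ⟨(sp4 _ _ _ hr' hk).1, ⟨_, _, hr'⟩, by linarith [hw v (par v), hv.2.2]⟩
        have h6 := ih (par v) (by omega) hp
        have hsdp := (sd2 v hv.2.1).2
        have hfp : f (par v) = f v := by
          rw [fN v hv, hsdp]
          rcases hp with h | h
          · rw [fN _ h]
          · rw [foU _ (hKU _ h), sd1 _ h]
        have hpt : s'.Pt (par v) = s'.Pt v := by
          simp only [Pt, s', hfp]
        rw [hpt, ← hsdp] at h6
        refine .cons ⟨fun h => h.2 hv, rfl, rfl⟩ h2 h6 h4.ge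
      · rw [sd1 v hv, (sp1 v hv).1]
        exact .nil ⟨nU v (hKU v hv), rfl, rfl⟩ le_rfl
  -- radius
  have radN : ∀ v ∈ N, ∃ c' ∈ C, s.rad (sd v) ≤
      ((s.S (s.σ (sd v))).filter (fun Z => s.Buf G w γ c' Z)).card ∧ ¬ s.Buf G w γ c' X := by
    intro v hv
    have hb := hsd v hv
    obtain ⟨-, -, c', hc', hadj⟩ := id hb
    refine ⟨c', hc', I.radU _ (hKU _ hb) c' (hCU hc') hadj.symm, fun hbuf => hB ?_⟩
    obtain ⟨e, he⟩ := hCC c' hc' c0 ⟨0, .nil hc0 le_rfl⟩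
    exact hbuf.conn he
  have BB : ∀ u Z, s.Buf G w γ u Z → s'.Buf G w γ u Z := fun u Z hb =>
    hb.mono hUU (LL Z) (MM Z)
  have BX : ∀ u ∈ C, s'.Buf G w γ u X := by
    intro u hu u' c hk x hx hwk
    have hu' : u' ∈ C := (hk.stay hu (fun a ha b hb hab => hcl a ha b (hUU hb) hab)).right_mem.2
    obtain ⟨c', m, h3, h4⟩ := exit u' x γ (hwk.mono (MM X) le_rfl) hu'
      (fun hxC => hCL x hxC (LL _ _ hx))
    exact hk.right_mem.2 ⟨hu', ⟨_, _, h3⟩, (sp2 _ _ _ h3).2.trans h4⟩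
  have radN' : ∀ v ∈ N, ∀ u ∈ C, s.rad (sd v) + 1 ≤
      ((s.S (s.σ (sd v))).filter (fun Z => s'.Buf G w γ u Z)).card := by
    intro v hv u hu
    obtain ⟨c', hc', h1, h2⟩ := radN v hv
    refine (Nat.succ_le_succ h1).trans ?_
    rw [Nat.succ_eq_add_one, ← Finset.card_insert_of_notMem (a := X)
      (fun h => h2 (Finset.mem_filter.1 h).2)]
    apply Finset.card_le_card
    intro Z hZ
    rw [Finset.mem_insert, Finset.mem_filter] at hZ
    rw [Finset.mem_filter]
    rcases hZ with rfl | ⟨hZ1, hZ2⟩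
    · exact ⟨(hKX _ (hsd v hv)).2.1, BX u hu⟩
    · obtain ⟨e, he⟩ := hCC c' hc' u hu
      exact ⟨hZ1, BB _ _ (hZ2.conn he)⟩
  refine ⟨s', ?_, ?_⟩
  · constructor
    · intro v hv
      exact I.σn _ (fU v hv)
    · exact I.Sn
    · exact I.card
    · exact I.cl
    · intro t ht Z hZ
      obtain ⟨u, hu, v, hv, huv⟩ := I.adjS t ht Z hZ
      exact ⟨u, QQ _ hu, v, QQ _ hv, huv⟩
    · intro t ht v hv
      exact I.LD t ht v (LL _ _ hv)
    · intro t ht u hu Z hZ hl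
      exact I.J t ht u hu Z hZ (LL _ _ hl)
    · intro t ht u hu v hv huv
      obtain ⟨h1, h2⟩ := I.K t ht u hu v hv huv
      exact ⟨nU v h1, by rw [σo v h1]; exact h2⟩
    · intro t ht u hu Z hZ hZS x hx hk
      exact I.F t ht u hu Z hZ hZS x (LL _ _ hx) (hk.mono (MM Z) le_rfl)
    · intro v hv
      by_cases hvU : v ∈ s.U
      · have hvN := new v hv hvU
        have h1 := chain (n v) v le_rfl (.inl hvN)
        have hbU := hKU _ (hsd v hvN)
        obtain ⟨z, hz, hz1, hz2⟩ := I.E (sd v) hbU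
        have hpt : s'.Pt v = s'.Pt (sd v) := by
          simp only [Pt, s', fN v hvN, foU _ hbU]
        rw [hpt] at h1 ⊢
        refine ⟨z, hz, PP _ hbU hz1, ?_⟩
        have h2 := h1.trans (hz2.mono (PP _ hbU) le_rfl)
        refine h2.mono subset_rfl ?_
        have : s'.rad v = s.rad (sd v) + 1 := if_pos hvN
        rw [this]
        push_cast
        linarith [hvN.2.2]
      · obtain ⟨z, hz, hz1, hz2⟩ := I.E v hvU
        refine ⟨z, hz, PP v hvU hz1, ?_⟩
        rw [rado v hvU]
        exact hz2.mono (PP v hvU) le_rfl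
    · intro z hz; exact nU z (TU z hz)
    · intro z hz z' hz' e
      rw [σo z (TU z hz), σo z' (TU z' hz')] at e
      rw [σo z (TU z hz)]
      obtain ⟨c, hc⟩ := I.Tconn z hz z' hz' e
      exact ⟨c, hc.mono (QQ _) le_rfl⟩
    · intro z hz z' hz' e e'
      rw [σo z (TU z hz), σo z' (TU z' hz')] at e
      rw [labo z (TU z hz), labo z' (TU z' hz')] at e'
      exact (I.Tdiam z hz z' hz' e e').mono (PP z (TU z hz)) le_rfl
    · intro z hz z' hz' e c hk
      rw [σo z (TU z hz)] at hk
      rw [σo z (TU z hz), σo z' (TU z' hz')] at e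
      exact I.Tδ z hz z' hz' e c (hk.mono (MM _) le_rfl)
    · intro z hz
      rw [σo z (TU z hz), labo z (TU z hz)]
      exact I.Tlab z hz
    · intro v hv
      by_cases hvU : v ∈ s.U
      · have hvN := new v hv hvU
        have h1 := radN' v hvN v hvN.1
        have e1 : s'.rad v = s.rad (sd v) + 1 := if_pos hvN
        have e2 : s'.σ v = s.σ (sd v) := by change s.σ (f v) = _; rw [fN v hvN]
        rw [e1, e2]
        exact h1.trans (Finset.card_filter_le _ _)
      · rw [rado v hvU, σo v hvU]; exact I.radb v hvU
    · intro b hb u hu hbu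
      by_cases hbU : b ∈ s.U
      · have hbN := new b hb hbU
        have h1 := radN' b hbN u (hcl b hbN.1 u (hUU hu) hbu)
        have e1 : s'.rad b = s.rad (sd b) + 1 := if_pos hbN
        have e2 : s'.σ b = s.σ (sd b) := by change s.σ (f b) = _; rw [fN b hbN]
        rw [e1, e2]
        exact h1
      · rw [rado b hbU, σo b hbU]
        refine (I.radU b hbU u (hUU hu) hbu).trans (Finset.card_le_card ?_)
        intro Z hZ
        rw [Finset.mem_filter] at hZ ⊢
        exact ⟨hZ.1, BB _ _ hZ.2⟩
  · refine ⟨hUU, fun h => ?_⟩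
    obtain ⟨v, hv⟩ := hNne
    exact (h (hCU hv.1)).2 hv

end St
theorem Wk.reach {G : SimpleGraph V} {w : V → V → ℝ} {A : Set V} {u v : V} {c : ℝ}
    (h : Wk G w A u v c) :
    (G.induce A).Reachable ⟨u, h.left_mem⟩ ⟨v, h.right_mem⟩ := by
  induction h with
  | nil h1 h2 => exact SimpleGraph.Reachable.refl _
  | @cons v u x c c' hv ha hk hcc ih =>
    refine SimpleGraph.Reachable.trans (SimpleGraph.Adj.reachable ?_) ih
    exact ha

theorem connected_of_wk {G : SimpleGraph V} {w : V → V → ℝ} {A : Set V} (hA : A.Nonempty)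
    (h : ∀ u ∈ A, ∀ v ∈ A, ∃ c, Wk G w A u v c) : (G.induce A).Connected := by
  rw [SimpleGraph.connected_iff]
  refine ⟨?_, hA.to_subtype⟩
  rintro ⟨u, hu⟩ ⟨v, hv⟩
  obtain ⟨c, hc⟩ := h u hu v hv
  exact hc.reach

theorem minor_of_finset {G : SimpleGraph V} {h : ℕ} (F : Finset ℕ) (hF : h ≤ F.card) (B : ℕ → Set V)
    (h1 : ∀ i ∈ F, (G.induce (B i)).Connected)
    (h2 : ∀ i ∈ F, ∀ j ∈ F, i ≠ j → Disjoint (B i) (B j))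
    (h3 : ∀ i ∈ F, ∀ j ∈ F, i < j → ∃ u ∈ B i, ∃ v ∈ B j, G.Adj u v) : HasCompleteMinor G h := by
  let e : Fin h → ℕ := fun i => F.orderEmbOfFin rfl (Fin.castLE hF i)
  have he : ∀ i, e i ∈ F := fun i => Finset.orderEmbOfFin_mem _ _ _
  have inj : Function.Injective e := by
    intro i j hij
    have := (F.orderEmbOfFin rfl).injective hij
    exact Fin.castLE_injective hF this
  refine ⟨fun i => B (e i), fun i => h1 _ (he i), fun i j hij => h2 _ (he i) _ (he j) (inj.ne hij), ?_⟩
  intro i j hij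
  rcases lt_or_gt_of_ne (inj.ne hij) with hlt | hlt
  · exact h3 _ (he i) _ (he j) hlt
  · obtain ⟨u, hu, v, hv, huv⟩ := h3 _ (he j) _ (he i) hlt
    exact ⟨v, hv, u, hu, huv.symm⟩

namespace St

theorem Inv.Qconn {G : SimpleGraph V} {w : V → V → ℝ} {h : ℕ} {γ ρ : ℝ}
    (hs : ∀ a b, w a b = w b a)
    {s : St V} (I : Inv G w h γ ρ s) (X : ℕ) :
    ∀ u ∈ s.Q X, ∀ v ∈ s.Q X, ∃ c, Wk G w (s.Q X) u v c := by
  rintro u hu v hv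
  have hp : ∀ u ∈ s.Q X, s.Pt u ⊆ s.Q X := by
    rintro u hu x hx
    exact ⟨hx.1, hx.2.1.trans hu.2⟩
  obtain ⟨z, hz, hz1, hz2⟩ := I.E u hu.1
  obtain ⟨z', hz', hz1', hz2'⟩ := I.E v hv.1
  have e : s.σ z = X := hz1.2.1.trans hu.2
  have e' : s.σ z' = X := hz1'.2.1.trans hv.2
  obtain ⟨c, hc⟩ := I.Tconn z hz z' hz' (e.trans e'.symm)
  rw [e] at hc
  exact ⟨_, ((hz2.mono (hp u hu) le_rfl).trans hc).trans ((hz2'.mono (hp v hv) le_rfl).symm hs)⟩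

open Classical in
theorem create [Finite V] {G : SimpleGraph V} {w : V → V → ℝ} {h : ℕ} {γ ρ : ℝ}
    (hw : ∀ a b, 0 ≤ w a b) (hs : ∀ a b, w a b = w b a) (hρ : 0 < ρ)
    (hm : ¬ HasCompleteMinor G h)
    {s : St V} (I : Inv G w h γ ρ s) {c0 : V} (hc0 : c0 ∈ s.U)
    (hB : ∀ X < s.n, ¬ s.L G X c0 → s.Buf G w γ c0 X) :
    ∃ s' : St V, Inv G w h γ ρ s' ∧ s'.U ⊂ s.U := by
  -- component
  set C : Set V := {v | ∃ c, Wk G w s.U c0 v c} with hC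
  have hc0C : c0 ∈ C := ⟨0, .nil hc0 le_rfl⟩
  have hCU : C ⊆ s.U := by rintro v ⟨c, hc⟩; exact hc.right_mem
  have hcl : ∀ a ∈ C, ∀ b ∈ s.U, G.Adj a b → b ∈ C := by
    rintro a ⟨c, hc⟩ b hb hab
    exact ⟨_, hc.trans (.edge (hc.right_mem) hb hab)⟩
  have hCC' : ∀ a ∈ C, ∀ b c, Wk G w s.U a b c → Wk G w C a b c := by
    intro a ha b c hk
    exact (hk.stay ha hcl).mono Set.inter_subset_right le_rfl
  have hCC : ∀ a ∈ C, ∀ b ∈ C, ∃ c, Wk G w C a b c := by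
    rintro a ha b ⟨c', hc'⟩
    obtain ⟨c, hc⟩ := id ha
    exact ⟨_, hCC' a ha b _ ((hc.symm hs).trans hc')⟩
  set S0 : Finset ℕ := (Finset.range s.n).filter (fun X => s.L G X c0) with hS0
  have hS0m : ∀ X, X ∈ S0 ↔ X < s.n ∧ s.L G X c0 := by intro X; simp [hS0]
  have hCL : ∀ X, ∀ v ∈ C, s.L G X v → s.L G X c0 := by
    rintro X v ⟨c, hc⟩ hv
    exact Lv.of_wk hc hv
  -- attachment points
  have hcz : ∀ X, ∃ v ∈ C, X ∈ S0 → ∃ q ∈ s.Q X, G.Adj v q := by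
    intro X
    by_cases hX : X ∈ S0
    · obtain ⟨v, q, c, h1, h2, h3⟩ := Lv.exists_nbr (w := w) ((hS0m X).1 hX).2 hc0 (fun q hq => hq.1)
      exact ⟨v, ⟨c, h1⟩, fun _ => ⟨q, h2, h3⟩⟩
    · exact ⟨c0, hc0C, fun h => absurd h hX⟩
  choose cz czC czq using hcz
  -- cardinality
  have hcard : S0.card + 2 ≤ h := by
    by_contra hlt
    apply hm
    have hn : s.n ∉ S0 := fun h => lt_irrefl _ ((hS0m _).1 h).1
    refine minor_of_finset (insert s.n S0) (by rw [Finset.card_insert_of_notMem hn]; omega)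
      (fun X => if X = s.n then C else s.Q X) ?_ ?_ ?_
    · intro X hX
      by_cases e : X = s.n
      · rw [if_pos e]
        exact connected_of_wk ⟨c0, hc0C⟩ hCC
      · rw [if_neg e]
        have hX' : X ∈ S0 := by simpa [e] using hX
        obtain ⟨q, hq, -⟩ := czq X hX'
        exact connected_of_wk ⟨q, hq⟩ (I.Qconn hs X)
    · intro X hX Y hY hXY
      rw [Set.disjoint_left]
      intro x hx hy
      by_cases e : X = s.n
      · by_cases e' : Y = s.n
        · exact hXY (e.trans e'.symm)
        · rw [if_pos e] at hx
          rw [if_neg e'] at hy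
          exact hy.1 (hCU hx)
      · rw [if_neg e] at hx
        by_cases e' : Y = s.n
        · rw [if_pos e'] at hy
          exact hx.1 (hCU hy)
        · rw [if_neg e'] at hy
          exact hXY (hx.2.symm.trans hy.2)
    · intro X hX Y hY hXY
      have hle : Y ≤ s.n := by
        rcases Finset.mem_insert.1 hY with h | h
        · exact h.le
        · exact ((hS0m _).1 h).1.le
      have e : X ≠ s.n := by omega
      have hX' : X ∈ S0 := by simpa [e] using hX
      by_cases e' : Y = s.n
      · rw [if_neg e, if_pos e']
        obtain ⟨q, hq, hq'⟩ := czq X hX'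
        exact ⟨q, hq, _, czC X, hq'.symm⟩
      · rw [if_neg e, if_neg e']
        have hY' : Y ∈ S0 := by simpa [e'] using hY
        have hYn : Y < s.n := by omega
        exact I.adjS Y hYn X (I.J Y hYn c0 (I.LD Y hYn c0 ((hS0m _).1 hY').2) X hXY ((hS0m _).1 hX').2)
  obtain ⟨d, n, par, sp1, sp2, sp3, sp4⟩ := exists_spf G w hw {c0} C
  have hd0 : d c0 = 0 := (sp1 c0 rfl).1
  have hp0 : par c0 = c0 := (sp1 c0 rfl).2
  have hRS : ∀ v ∈ C, ∃ c m, RS G w {c0} C v c m := by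
    intro v hv
    obtain ⟨c, hc⟩ := hCC v hv c0 hc0C
    obtain ⟨e, m, -, h⟩ := RS.of_wk hc (RS.base (K := {c0}) rfl)
    exact ⟨e, m, h⟩
  have hd : ∀ u ∈ C, ∀ v ∈ C, ∀ c, Wk G w C u v c → d u ≤ d v + c := by
    intro u hu v hv c hk
    obtain ⟨e, m, hr⟩ := hRS v hv
    obtain ⟨m', hr'⟩ := sp3 v e m hr
    obtain ⟨e', m'', h1, h2⟩ := RS.of_wk hk hr'
    linarith [(sp2 _ _ _ h2).2]
  have hdn : ∀ v ∈ C, 0 ≤ d v := by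
    intro v hv
    obtain ⟨e, m, hr⟩ := hRS v hv
    exact (sp2 _ _ _ hr).1
  have hpar : ∀ v ∈ C, v ≠ c0 → G.Adj v (par v) ∧ d v = w v (par v) + d (par v) ∧ n (par v) < n v := by
    intro v hv hv0
    obtain ⟨e, m, hr⟩ := hRS v hv
    obtain ⟨-, h1, -, h2, h3⟩ := sp4 _ _ _ hr hv0
    exact ⟨h1, h2, h3⟩
  have hpC : ∀ v ∈ C, par v ∈ C := by
    intro v hv
    by_cases e : v = c0
    · rw [e, hp0]; exact hc0C
    · obtain ⟨e', m, hr⟩ := hRS v hv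
      obtain ⟨-, h1, ⟨_, _, hr'⟩, h2, h3⟩ := sp4 _ _ _ hr e
      by_cases e'' : par v = c0
      · rw [e'']; exact hc0C
      · exact (sp4 _ _ _ hr' e'').1
  let P : ℕ → V → Prop := fun z v => ∃ j, par^[j] (cz z) = v
  have Ppar : ∀ z v, P z v → P z (par v) := by
    rintro z v ⟨j, rfl⟩
    exact ⟨j + 1, Function.iterate_succ_apply' _ _ _⟩
  have Ppars : ∀ z v, P z v → ∀ j, P z (par^[j] v) := by
    intro z v h j
    induction j with
    | zero => exact h
    | succ j ih => rw [Function.iterate_succ_apply']; exact Ppar _ _ ih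
  set T0 : Set V := {v | ∃ z, z ∈ insert s.n S0 ∧ P z v} with hT0
  have hT0C : T0 ⊆ C := by
    rintro v ⟨z, -, j, rfl⟩
    induction j with
    | zero => exact czC z
    | succ j ih => rw [Function.iterate_succ_apply']; exact hpC _ ih
  have hT0U : T0 ⊆ s.U := hT0C.trans hCU
  have T0par : ∀ v ∈ T0, par v ∈ T0 := by
    rintro v ⟨z, hz, h⟩; exact ⟨z, hz, Ppar _ _ h⟩
  have czT : ∀ z ∈ insert s.n S0, cz z ∈ T0 := fun z hz => ⟨z, hz, 0, rfl⟩
  have T0c : ∀ m, ∀ v ∈ T0, n v ≤ m → ∃ c, Wk G w T0 v c0 c := by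
    intro m
    induction m with
    | zero =>
      intro v hv hn
      by_cases e : v = c0
      · subst e; exact ⟨0, .nil hv le_rfl⟩
      · have := (hpar v (hT0C hv) e).2.2; omega
    | succ m ih =>
      intro v hv hn
      by_cases e : v = c0
      · subst e; exact ⟨0, .nil hv le_rfl⟩
      · obtain ⟨h1, -, h2⟩ := hpar v (hT0C hv) e
        obtain ⟨c, hc⟩ := ih (par v) (T0par v hv) (by omega)
        exact ⟨_, .cons hv h1 hc le_rfl⟩
  let leg : V → ℕ := fun v => sInf {z | z ∈ insert s.n S0 ∧ P z v}
  have leg1 : ∀ v ∈ T0, leg v ∈ insert s.n S0 ∧ P (leg v) v := by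
    intro v hv
    exact Nat.sInf_mem (s := {z | z ∈ insert s.n S0 ∧ P z v}) hv
  have leg2 : ∀ v z, z ∈ insert s.n S0 → P z v → leg v ≤ z := by
    intro v z hz hP
    exact Nat.sInf_le ⟨hz, hP⟩
  let s' : St V :=
    { U := s.U \ T0
      σ := fun v => if v ∈ T0 then s.n else s.σ v
      lab := fun v => if v ∈ T0 then (leg v, ⌊2 * d v / ρ⌋₊) else s.lab v
      T := s.T ∪ T0
      δ := fun v => if v ∈ T0 then d v else s.δ v
      S := fun t => if t = s.n then S0 else s.S t
      D := fun t => if t = s.n then C else s.D t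
      n := s.n + 1
      rad := fun v => if v ∈ T0 then 0 else s.rad v }
  have hUU : s'.U ⊆ s.U := Set.sdiff_subset
  have new : ∀ v, v ∉ s'.U → v ∈ s.U → v ∈ T0 := by
    intro v h1 h2; by_contra h3; exact h1 ⟨h2, h3⟩
  have nU : ∀ v, v ∉ s.U → v ∉ s'.U := fun v hv h => hv (hUU h)
  have nT : ∀ v, v ∉ s.U → v ∉ T0 := fun v hv h => hv (hT0U h)
  have TnU : ∀ v ∈ T0, v ∉ s'.U := fun v hv h => h.2 hv
  have σo : ∀ v, v ∉ s.U → s'.σ v = s.σ v := fun v hv => if_neg (nT v hv)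
  have labo : ∀ v, v ∉ s.U → s'.lab v = s.lab v := fun v hv => if_neg (nT v hv)
  have δo : ∀ v, v ∉ s.U → s'.δ v = s.δ v := fun v hv => if_neg (nT v hv)
  have rado : ∀ v, v ∉ s.U → s'.rad v = s.rad v := fun v hv => if_neg (nT v hv)
  have σT : ∀ v ∈ T0, s'.σ v = s.n := fun v hv => if_pos hv
  have labT : ∀ v ∈ T0, s'.lab v = (leg v, ⌊2 * d v / ρ⌋₊) := fun v hv => if_pos hv
  have δT : ∀ v ∈ T0, s'.δ v = d v := fun v hv => if_pos hv
  have radT : ∀ v ∈ T0, s'.rad v = 0 := fun v hv => if_pos hv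
  have So : ∀ t < s.n, s'.S t = s.S t := fun t ht => if_neg ht.ne
  have Do : ∀ t < s.n, s'.D t = s.D t := fun t ht => if_neg ht.ne
  have Sn : s'.S s.n = S0 := if_pos rfl
  have Dn : s'.D s.n = C := if_pos rfl
  have QQ : ∀ t, s.Q t ⊆ s'.Q t := fun t v hv => ⟨nU v hv.1, by rw [σo v hv.1]; exact hv.2⟩
  have PP : ∀ v, v ∉ s.U → s.Pt v ⊆ s'.Pt v := by
    intro v hv x hx
    exact ⟨nU x hx.1, by rw [σo v hv, σo x hx.1]; exact hx.2.1,
      by rw [labo v hv, labo x hx.1]; exact hx.2.2⟩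
  have MM : ∀ t, s'.M t ⊆ s.M t := by
    intro t v hv
    by_cases hvU : v ∈ s.U
    · exact .inl hvU
    · rcases hv with hv | hv
      · exact .inl (hUU hv)
      · right; rw [← σo v hvU]; exact hv
  have MU : s'.M s.n ⊆ s.U := by
    intro v hv
    by_contra hvU
    rcases hv with hv | hv
    · exact hvU (hUU hv)
    · rw [σo v hvU] at hv
      have := I.σn v hvU
      omega
  have LL : ∀ t < s.n, ∀ v, s'.L G t v → s.L G t v := by
    intro t ht v
    apply L_mono hUU
    rintro x ⟨hx1, hx2⟩
    by_cases hxU : x ∈ s.U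
    · rw [σT x (new x hx1 hxU)] at hx2
      omega
    · exact .base ⟨hxU, by rw [← σo x hxU]; exact hx2⟩
  have LC : ∀ v, s'.L G s.n v → v ∈ C := by
    intro v hv
    induction hv with
    | @base x hx =>
      obtain ⟨hx1, hx2⟩ := hx
      by_cases hxU : x ∈ s.U
      · exact hT0C (new x hx1 hxU)
      · rw [σo x hxU] at hx2
        have := I.σn x hxU
        omega
    | step hv ha hl ih => exact hcl _ ih _ (hUU hv) ha.symm
  have TU := I.TU
  have lt_or : ∀ t < s'.n, t < s.n ∨ t = s.n := fun t ht => Nat.lt_succ_iff_lt_or_eq.1 ht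
  have TT : ∀ z ∈ s'.T, ∀ z' ∈ s'.T, s'.σ z = s'.σ z' →
      (z ∈ T0 ∧ z' ∈ T0) ∨ (z ∈ s.T ∧ z' ∈ s.T ∧ s.σ z = s.σ z') := by
    rintro z (hz | hz) z' (hz' | hz') e
    · rw [σo z (TU z hz), σo z' (TU z' hz')] at e
      exact .inr ⟨hz, hz', e⟩
    · rw [σo z (TU z hz), σT z' hz'] at e
      have := I.σn z (TU z hz)
      omega
    · rw [σT z hz, σo z' (TU z' hz')] at e
      have := I.σn z' (TU z' hz')
      omega
    · exact .inl ⟨hz, hz'⟩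
  -- diameter
  have diam : ∀ j, ∀ u ∈ T0, par^[j] u ∈ T0 → s'.lab u = s'.lab (par^[j] u) →
      Wk G w (s'.Pt u) u (par^[j] u) (d u - d (par^[j] u)) := by
    intro j
    induction j with
    | zero => intro u hu _ _; exact .nil ⟨TnU u hu, rfl, rfl⟩ (by simp)
    | succ j ih =>
      intro u hu hv e
      by_cases e0 : u = c0
      · subst e0
        have hfix : par^[j+1] u = u := Function.iterate_fixed hp0 _
        rw [hfix]
        exact .nil ⟨TnU u hu, rfl, rfl⟩ (by simp)
      obtain ⟨h1, h2, -⟩ := hpar u (hT0C hu) e0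
      have hpu := T0par u hu
      have dmono : ∀ j, ∀ x ∈ C, d (par^[j] x) ≤ d x := by
        intro j
        induction j with
        | zero => intro x _; exact le_rfl
        | succ j ih =>
          intro x hx
          refine (ih _ (hpC x hx)).trans ?_
          by_cases ex : x = c0
          · rw [ex, hp0]
          · linarith [(hpar x hx ex).2.1, hw x (par x)]
      have hlab : s'.lab (par u) = s'.lab u := by
        have e' := e
        rw [labT _ hu, labT _ hv, Prod.mk.injEq] at e'
        rw [labT _ hpu, labT _ hu, Prod.mk.injEq]
        have hl := leg1 u hu
        have hl' := leg1 _ hpu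
        constructor
        · apply le_antisymm
          · exact leg2 _ _ hl.1 (Ppar _ _ hl.2)
          · rw [e'.1]
            apply leg2 _ _ hl'.1
            exact Ppars _ _ hl'.2 j
        · apply le_antisymm
          · apply Nat.floor_mono
            have := dmono 1 u (hT0C hu)
            simp only [Function.iterate_one] at this
            gcongr
          · rw [e'.2]
            apply Nat.floor_mono
            have := dmono j (par u) (hpC u (hT0C hu))
            rw [Function.iterate_succ_apply]
            gcongr
      have h3 := ih (par u) hpu hv (hlab.trans e)
      have hpt : s'.Pt (par u) = s'.Pt u := by
        simp only [Pt, hlab, σT _ hpu, σT _ hu]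
      rw [hpt] at h3
      refine .cons ⟨TnU u hu, rfl, rfl⟩ h1 h3 ?_
      rw [Function.iterate_succ_apply]
      linarith
  have diam' : ∀ j, ∀ u ∈ T0, par^[j] u ∈ T0 → s'.lab u = s'.lab (par^[j] u) →
      Wk G w (s'.Pt u) u (par^[j] u) (ρ / 2) := by
    intro j u hu hv e
    refine (diam j u hu hv e).mono subset_rfl ?_
    rw [labT _ hu, labT _ hv, Prod.mk.injEq] at e
    have h1 := Nat.lt_floor_add_one (2 * d u / ρ)
    have h2 := Nat.floor_le (a := 2 * d (par^[j] u) / ρ)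
      (div_nonneg (mul_nonneg zero_le_two (hdn _ (hT0C hv))) hρ.le)
    rw [e.2] at h1
    have h3 : 2 * d u / ρ < 2 * d (par^[j] u) / ρ + 1 := by linarith
    rw [div_add_one hρ.ne', div_lt_div_iff_of_pos_right hρ] at h3
    linarith
  refine ⟨s', ?_, ?_⟩
  · constructor
    · intro v hv
      by_cases hvU : v ∈ s.U
      · rw [σT v (new v hv hvU)]; exact Nat.lt_succ_self _
      · rw [σo v hvU]; exact (I.σn v hvU).trans (Nat.lt_succ_self _)
    · intro t ht X hX
      rcases lt_or t ht with h | rfl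
      · rw [So t h] at hX; exact I.Sn t h X hX
      · rw [Sn] at hX; exact ((hS0m X).1 hX).1
    · intro t ht
      rcases lt_or t ht with h | rfl
      · rw [So t h]; exact I.card t h
      · rw [Sn]; exact hcard
    · intro t ht X hX Y hY hXY
      rcases Nat.lt_succ_iff_lt_or_eq.1 ht with h | rfl
      · rw [So t h] at hX hY
        have hYn := (I.Sn t h Y hY).trans h
        rw [So Y hYn]; exact I.cl t h X hX Y hY hXY
      · rw [Sn] at hX hY
        have hYn := ((hS0m _).1 hY).1
        rw [So Y hYn]
        exact I.J Y hYn c0 (I.LD Y hYn c0 ((hS0m _).1 hY).2) X hXY ((hS0m _).1 hX).2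
    · intro t ht X hX
      rcases lt_or t ht with h | rfl
      · rw [So t h] at hX
        obtain ⟨u, hu, v, hv, huv⟩ := I.adjS t h X hX
        exact ⟨u, QQ _ hu, v, QQ _ hv, huv⟩
      · rw [Sn] at hX
        obtain ⟨q, hq, hq'⟩ := czq X hX
        have hT := czT X (Finset.mem_insert_of_mem hX)
        exact ⟨q, QQ _ hq, cz X, ⟨TnU _ hT, σT _ hT⟩, hq'.symm⟩
    · intro t ht v hv
      rcases lt_or t ht with h | rfl
      · rw [Do t h]; exact I.LD t h v (LL _ h _ hv)
      · rw [Dn]; exact LC v hv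
    · intro t ht u hu X hX hl
      rcases lt_or t ht with h | rfl
      · rw [Do t h] at hu; rw [So t h]; exact I.J t h u hu X hX (LL _ (hX.trans h) _ hl)
      · rw [Dn] at hu; rw [Sn]
        exact (hS0m X).2 ⟨hX, hCL X u hu (LL _ hX _ hl)⟩
    · intro t ht u hu v hv huv
      rcases lt_or t ht with h | rfl
      · rw [Do t h] at hu hv; rw [So t h]
        obtain ⟨h1, h2⟩ := I.K t h u hu v hv huv
        exact ⟨nU v h1, by rw [σo v h1]; exact h2⟩
      · rw [Dn] at hu hv; rw [Sn]
        have hvU : v ∉ s.U := fun h => hv (hcl u hu v h huv)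
        refine ⟨nU v hvU, ?_⟩
        rw [σo v hvU]
        exact (hS0m _).2 ⟨I.σn v hvU, hCL _ u hu (.step (hCU hu) huv (.base ⟨hvU, rfl⟩))⟩
    · intro t ht u hu X hX hXS x hx hk
      rcases lt_or t ht with h | rfl
      · rw [Do t h] at hu; rw [So t h] at hXS
        exact I.F t h u hu X hX hXS x (LL _ (hX.trans h) _ hx) (hk.mono (MM X) le_rfl)
      · rw [Dn] at hu; rw [Sn] at hXS
        obtain ⟨c, hc⟩ := hu
        exact hB X hX (fun hl => hXS ((hS0m X).2 ⟨hX, hl⟩)) u c hc x (LL _ hX _ hx)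
          (hk.mono (MM X) le_rfl)
    · intro v hv
      by_cases hvU : v ∈ s.U
      · have hvT := new v hv hvU
        refine ⟨v, .inr hvT, ⟨hv, rfl, rfl⟩, .nil ⟨hv, rfl, rfl⟩ ?_⟩
        rw [radT v hvT]; simp
      · obtain ⟨z, hz, hz1, hz2⟩ := I.E v hvU
        refine ⟨z, .inl hz, PP v hvU hz1, ?_⟩
        rw [rado v hvU]
        exact hz2.mono (PP v hvU) le_rfl
    · rintro z (hz | hz)
      · exact nU z (TU z hz)
      · exact TnU z hz
    · intro z hz z' hz' e
      rcases TT z hz z' hz' e with ⟨h1, h2⟩ | ⟨h1, h2, h3⟩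
      · rw [σT z h1]
        obtain ⟨c, hc⟩ := T0c _ z h1 le_rfl
        obtain ⟨c', hc'⟩ := T0c _ z' h2 le_rfl
        refine ⟨_, (hc.trans (hc'.symm hs)).mono ?_ le_rfl⟩
        intro x hx
        exact ⟨TnU x hx, σT x hx⟩
      · rw [σo z (TU z h1)]
        obtain ⟨c, hc⟩ := I.Tconn z h1 z' h2 h3
        exact ⟨c, hc.mono (QQ _) le_rfl⟩
    · intro z hz z' hz' e e'
      rcases TT z hz z' hz' e with ⟨h1, h2⟩ | ⟨h1, h2, h3⟩
      · have hleg : leg z = leg z' := by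
          have e2 := e'
          rw [labT _ h1, labT _ h2, Prod.mk.injEq] at e2
          exact e2.1
        obtain ⟨a, ha⟩ := (leg1 z h1).2
        obtain ⟨b, hb⟩ := (leg1 z' h2).2
        rw [← hleg] at hb
        have hpt : s'.Pt z = s'.Pt z' := by simp only [Pt, e, e']
        rcases le_total a b with hab | hab
        · have : par^[b - a] z = z' := by
            rw [← ha, ← Function.iterate_add_apply, Nat.sub_add_cancel hab, hb]
          have h3 := diam' (b - a) z h1 (by rw [this]; exact h2) (by rw [this]; exact e')
          rwa [this] at h3
        · have : par^[a - b] z' = z := by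
            rw [← hb, ← Function.iterate_add_apply, Nat.sub_add_cancel hab, ha]
          have h3 := diam' (a - b) z' h2 (by rw [this]; exact h1) (by rw [this]; exact e'.symm)
          rw [this] at h3
          rw [hpt]
          exact h3.symm hs
      · rw [labo z (TU z h1), labo z' (TU z' h2)] at e'
        exact (I.Tdiam z h1 z' h2 h3 e').mono (PP z (TU z h1)) le_rfl
    · intro z hz z' hz' e c hk
      rcases TT z hz z' hz' e with ⟨h1, h2⟩ | ⟨h1, h2, h3⟩
      · rw [σT z h1] at hk
        rw [δT z h1, δT z' h2]
        exact hd z (hT0C h1) z' (hT0C h2) c (hCC' z (hT0C h1) z' c (hk.mono MU le_rfl))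
      · rw [σo z (TU z h1)] at hk
        rw [δo z (TU z h1), δo z' (TU z' h2)]
        exact I.Tδ z h1 z' h2 h3 c (hk.mono (MM _) le_rfl)
    · rintro z (hz | hz)
      · rw [σo z (TU z hz), labo z (TU z hz), δo z (TU z hz), So _ (I.σn z (TU z hz))]
        exact I.Tlab z hz
      · rw [σT z hz, labT z hz, δT z hz, Sn]
        exact ⟨(leg1 z hz).1, rfl, hdn z (hT0C hz)⟩
    · intro v hv
      by_cases hvU : v ∈ s.U
      · rw [radT v (new v hv hvU)]; exact Nat.zero_le _
      · rw [rado v hvU, σo v hvU, So _ (I.σn v hvU)]; exact I.radb v hvU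
    · intro b hb u hu hbu
      by_cases hbU : b ∈ s.U
      · rw [radT b (new b hb hbU)]; exact Nat.zero_le _
      · rw [rado b hbU, σo b hbU, So _ (I.σn b hbU)]
        refine (I.radU b hbU u (hUU hu) hbu).trans (Finset.card_le_card ?_)
        intro Z hZ
        rw [Finset.mem_filter] at hZ ⊢
        have hn := I.σn b hbU
        exact ⟨hZ.1, hZ.2.mono hUU (LL Z ((I.Sn _ hn Z hZ.1).trans hn)) (MM Z)⟩
  · refine ⟨hUU, fun h => ?_⟩
    have hT := czT s.n (Finset.mem_insert_self _ _)
    exact (h (hT0U hT)).2 hT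

theorem exists_final [Finite V] {G : SimpleGraph V} {w : V → V → ℝ} {h : ℕ} {γ ρ : ℝ}
    (hw : ∀ a b, 0 ≤ w a b) (hs : ∀ a b, w a b = w b a) (hρ : 0 < ρ)
    (hm : ¬ HasCompleteMinor G h) :
    ∃ s : St V, Inv G w h γ ρ s ∧ s.U = ∅ := by
  have key : ∀ k, ∀ s : St V, Inv G w h γ ρ s → s.U.ncard ≤ k →
      ∃ s : St V, Inv G w h γ ρ s ∧ s.U = ∅ := by
    intro k
    induction k with
    | zero =>
      intro s I hk
      exact ⟨s, I, (Set.ncard_eq_zero (Set.toFinite _)).1 (by omega)⟩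
    | succ k ih =>
      intro s I hk
      by_cases hU : s.U = ∅
      · exact ⟨s, I, hU⟩
      have : ∃ s' : St V, Inv G w h γ ρ s' ∧ s'.U ⊂ s.U := by
        by_cases hp : ∃ X, ∃ c0 ∈ s.U, ¬ s.L G X c0 ∧ ¬ s.Buf G w γ c0 X
        · obtain ⟨X, c0, h1, h2, h3⟩ := hp
          exact grow hw hs I h1 h2 h3
        · obtain ⟨c0, hc0⟩ := Set.nonempty_iff_ne_empty.2 hU
          refine create hw hs hρ hm I hc0 ?_
          intro X hX hl
          by_contra hb
          exact hp ⟨X, c0, hc0, hl, hb⟩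
      obtain ⟨s', I', hlt⟩ := this
      have := Set.ncard_lt_ncard hlt (Set.toFinite _)
      exact ih s' I' (by omega)
  let s0 : St V := ⟨Set.univ, fun _ => 0, fun _ => (0, 0), ∅, fun _ => 0, fun _ => ∅, fun _ => ∅, 0,
    fun _ => 0⟩
  refine key _ s0 ?_ le_rfl
  constructor <;> simp [s0]

end St
/-- descending chains of at most `d` steps -/
inductive Rh (S : ℕ → Finset ℕ) : ℕ → ℕ → ℕ → Prop
  | refl (d a : ℕ) : Rh S d a a
  | step {d a b x : ℕ} : x ∈ S a → Rh S d x b → Rh S (d + 1) a b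

theorem Rh.succ {S : ℕ → Finset ℕ} {d a b : ℕ} (h : Rh S d a b) : Rh S (d + 1) a b := by
  induction h with
  | refl d a => exact .refl _ _
  | step hx hr ih => exact .step hx ih

theorem Rh.mono {S : ℕ → Finset ℕ} {d d' a b : ℕ} (h : Rh S d a b) (hd : d ≤ d') : Rh S d' a b := by
  induction hd with
  | refl => exact h
  | step _ ih => exact ih.succ

theorem Rh.sub {S S' : ℕ → Finset ℕ} (hS : ∀ a, S a ⊆ S' a) {d a b : ℕ} (h : Rh S d a b) :
    Rh S' d a b := by
  induction h with
  | refl d a => exact .refl _ _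
  | step hx hr ih => exact .step (hS _ hx) ih

theorem Rh.cross {S : ℕ → Finset ℕ} (cl : ∀ a, ∀ x ∈ S a, ∀ y ∈ S a, x < y → x ∈ S y)
    {d a b t : ℕ} (h : Rh S d a b) (ht : t ∈ S a) :
    Rh (fun a => (S a).filter (t < ·)) d a b ∨ Rh S d t b := by
  induction h with
  | refl d a => exact .inl (.refl _ _)
  | @step d a b x hx hr ih =>
    rcases lt_trichotomy x t with h | h | h
    · exact .inr (.step (cl a x hx t ht h) hr)
    · subst h; exact .inr hr.succ
    · rcases ih (cl a t ht x hx h) with h' | h'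
      · exact .inl (.step (Finset.mem_filter.2 ⟨hx, h⟩) h')
      · exact .inr h'.succ

theorem Rh.count : ∀ (m d j : ℕ), d + j ≤ m → ∀ (S : ℕ → Finset ℕ)
    (_ : ∀ a, ∀ x ∈ S a, ∀ y ∈ S a, x < y → x ∈ S y)
    (a : ℕ) (_ : ∀ b e, Rh S e a b → (S b).card ≤ j),
    ∃ F : Finset ℕ, F.card ≤ (d + j).choose j ∧ ∀ b, Rh S d a b → b ∈ F := by
  intro m
  induction m with
  | zero =>
    intro d j hm S cl a hj
    obtain ⟨rfl, rfl⟩ : d = 0 ∧ j = 0 := by omega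
    refine ⟨{a}, by simp, fun b hb => ?_⟩
    cases hb; simp
  | succ m ih =>
    intro d j hm S cl a hj
    have triv : (∀ b, Rh S d a b → b = a) → ∃ F : Finset ℕ, F.card ≤ (d + j).choose j ∧
        ∀ b, Rh S d a b → b ∈ F := by
      intro h
      refine ⟨{a}, ?_, fun b hb => by simp [h b hb]⟩
      rw [Finset.card_singleton]; exact Nat.choose_pos (Nat.le_add_left j d)
    by_cases hS : S a = ∅
    · apply triv
      intro b hb
      cases hb with
      | refl => rfl
      | step hx => rw [hS] at hx; simp at hx
    rcases d with _ | d
    · apply triv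
      intro b hb
      cases hb; rfl
    have hja := hj a 0 (.refl _ _)
    have hne : (S a).Nonempty := Finset.nonempty_iff_ne_empty.2 hS
    have hpos := Finset.card_pos.2 hne
    rcases j with _ | j
    · omega
    set t := (S a).min' hne with ht
    have hta : t ∈ S a := Finset.min'_mem _ _
    obtain ⟨F1, hF1, hF1'⟩ := ih d (j + 1) (by omega) S cl t
      (fun b e hb => hj b (e + 1) (.step hta hb))
    have htr : ∀ b e a, t ∈ S a → Rh (fun a => (S a).filter (t < ·)) e a b → t ∈ S b := by
      intro b e a hta hb
      induction hb with
      | refl d a => exact hta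
      | @step d a b x hx hr ih =>
        obtain ⟨h1, h2⟩ := Finset.mem_filter.1 hx
        exact ih (cl a t hta x h1 h2)
    obtain ⟨F2, hF2, hF2'⟩ := ih (d + 1) j (by omega) (fun a => (S a).filter (t < ·))
      (by
        intro a x hx y hy hxy
        rw [Finset.mem_filter] at hx hy ⊢
        exact ⟨cl a x hx.1 y hy.1 hxy, hx.2⟩) a
      (by
        intro b e hb
        have h1 := htr b e a hta hb
        have h2 := hj b e (hb.sub (fun a => Finset.filter_subset _ _))
        have h3 : ((S b).filter (t < ·)).card < (S b).card := by
          apply Finset.card_lt_card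
          refine ⟨Finset.filter_subset _ _, fun h => ?_⟩
          have := (Finset.mem_filter.1 (h h1)).2
          exact lt_irrefl _ this
        change ((S b).filter (t < ·)).card ≤ j
        omega)
    refine ⟨F1 ∪ F2, ?_, ?_⟩
    · refine (Finset.card_union_le _ _).trans ?_
      have e : d + 1 + (j + 1) = (d + (j + 1)) + 1 := by omega
      have e2 : d + 1 + j = d + (j + 1) := by omega
      rw [e, Nat.choose_succ_succ]
      rw [e2] at hF2
      simp only [Nat.succ_eq_add_one]
      omega
    · intro b hb
      rw [Finset.mem_union]
      cases hb with
      | refl => exact .inr (hF2' _ (.refl _ _))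
      | @step _ _ _ x hx hr =>
        have hle : t ≤ x := Finset.min'_le _ _ hx
        rcases hle.eq_or_lt with h | h
        · rw [← h] at hr; exact .inl (hF1' _ hr)
        · rcases hr.cross cl (cl a t hta x hx h) with h' | h'
          · exact .inr (hF2' _ (.step (Finset.mem_filter.2 ⟨hx, h⟩) h'))
          · exact .inl (hF1' _ h')

namespace St

section final
variable {G : SimpleGraph V} {w : V → V → ℝ} {h : ℕ} {γ ρ : ℝ} {s : St V}

theorem Inv.stayD (I : Inv G w h γ ρ s) (hU : s.U = ∅) {a : ℕ} (ha : a < s.n) {v x : V} {c : ℝ}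
    (hk : Wk G w (s.M a) v x c) (hv : v ∈ s.D a) : x ∈ s.D a := by
  refine (hk.stay hv ?_).right_mem.2
  intro p hp q hq hpq
  by_contra hqD
  have h1 := I.Sn a ha _ (I.K a ha p hp q hqD hpq).2
  rcases hq with hq | hq
  · rw [hU] at hq; exact hq
  · omega

theorem Inv.memD (I : Inv G w h γ ρ s) (hU : s.U = ∅) (v : V) : s.σ v < s.n ∧ v ∈ s.D (s.σ v) := by
  have hv : v ∉ s.U := by rw [hU]; exact id
  exact ⟨I.σn v hv, I.LD _ (I.σn v hv) v (.base ⟨hv, rfl⟩)⟩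

theorem Inv.chunk (I : Inv G w h γ ρ s) (hw : ∀ a b, 0 ≤ w a b) (hU : s.U = ∅) {a : ℕ}
    (ha : a < s.n) {v x : V} (hv : v ∈ s.D a) :
    ∀ k b, a = b + k → Wk G w (s.M b) v x γ →
      ∃ a', (a' = a ∨ a' ∈ s.S a) ∧ b ≤ a' ∧ x ∈ s.D a' ∧ x ∈ s.M a' := by
  intro k
  induction k with
  | zero =>
    intro b hb hk
    have e : b = a := by omega
    subst e
    exact ⟨b, .inl rfl, le_rfl, I.stayD hU ha hk hv, hk.right_mem⟩
  | succ k ih =>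
    intro b hb hk
    rcases hk.hit hw {z | s.σ z = b} with h1 | ⟨z, hz, h1, h2⟩
    · obtain ⟨a', h3, h4, h5⟩ := ih (b + 1) (by omega) (h1.mono (by
        rintro y ⟨hy1, hy2⟩
        right
        rcases hy1 with hy1 | hy1
        · rw [hU] at hy1; exact absurd hy1 id
        · have : s.σ y ≠ b := hy2
          omega) le_rfl)
      exact ⟨a', h3, by omega, h5⟩
    · have hz' : s.σ z = b := hz
      have hzD := I.memD hU z
      rw [hz'] at hzD
      refine ⟨b, .inr ?_, le_rfl, I.stayD hU hzD.1 h2 hzD.2, h2.right_mem⟩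
      by_contra hbS
      exact I.F a ha v hv b (by omega) hbS z (.base ⟨by rw [hU]; exact id, hz'⟩) h1

theorem Inv.hop (I : Inv G w h γ ρ s) (hw : ∀ a b, 0 ≤ w a b) (hγ : 0 ≤ γ) (hU : s.U = ∅) :
    ∀ (k : ℕ) (a b : ℕ) (v y : V) (c : ℝ), Wk G w (s.M b) v y c → c ≤ (k + 1) * γ → a < s.n →
      v ∈ s.D a → b ≤ a → s.σ y = b → Rh s.S (2 * k + 1) a b := by
  have hMM : ∀ {x : V} {a : ℕ}, x ∈ s.M a → a ≤ s.σ x := by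
    rintro x a (hx | hx)
    · rw [hU] at hx; exact absurd hx id
    · exact hx
  have one : ∀ (a b : ℕ) (v y : V), Wk G w (s.M b) v y γ → a < s.n →
      v ∈ s.D a → b ≤ a → s.σ y = b → Rh s.S 1 a b := by
    intro a b v y hk ha hv hb hy
    obtain ⟨a', h1, h2, h3, h4⟩ := I.chunk hw hU ha hv (a - b) b (by omega) hk
    have : a' = b := by have := hMM h4; omega
    subst this
    rcases h1 with h1 | h1
    · rw [h1]; exact .refl _ _
    · exact .step h1 (.refl _ _)
  intro k
  induction k with
  | zero =>
    intro a b v y c hk hc ha hv hb hy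
    exact one a b v y (hk.mono subset_rfl (by simpa using hc)) ha hv hb hy
  | succ k ih =>
    intro a b v y c hk hc ha hv hb hy
    rcases hk.split γ hγ with h1 | ⟨x, x', h1, h2, h3⟩
    · exact (one a b v y h1 ha hv hb hy).mono (by omega)
    obtain ⟨a', g1, g2, g3, g4⟩ := I.chunk hw hU ha hv (a - b) b (by omega) h1
    have ha' : a' < s.n := (hMM g4).trans_lt (I.memD hU x).1
    have hc' : c - γ ≤ (k + 1) * γ := by push_cast at hc; linarith
    have g5 : Rh s.S (2 * k + 2) a' b := by
      by_cases hx' : a' ≤ s.σ x'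
      · have hD : x' ∈ s.D a' :=
          I.stayD hU ha' (Wk.edge (w := w) g4 (show x' ∈ s.M a' from .inr hx') h2) g3
        exact (ih a' b x' y _ h3 hc' ha' hD g2 hy).succ
      · have hmem := I.memD hU x'
        have hS : s.σ x' ∈ s.S a' := by
          by_cases hD : x' ∈ s.D a'
          · exact I.J a' ha' x' hD _ (by omega) (.base ⟨by rw [hU]; exact id, rfl⟩)
          · exact (I.K a' ha' x g3 x' hD h2).2
        exact .step hS (ih _ b x' y _ h3 hc' hmem.1 hmem.2 (hMM h3.left_mem) hy)
    rcases g1 with g1 | g1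
    · rw [← g1]; exact g5.mono (by omega)
    · exact .step g1 g5

end final
end St

theorem core [Finite V] {G : SimpleGraph V} {w : V → V → ℝ} {h : ℕ} {ρ : ℝ}
    (hw : ∀ a b, 0 ≤ w a b) (hs : ∀ a b, w a b = w b a) (hρ : 0 < ρ) (hh : 0 < h)
    (hm : ¬ HasCompleteMinor G h) :
    ∃ (σ : V → ℕ) (lab : V → ℕ × ℕ),
      (∀ v x, σ x = σ v → lab x = lab v → Wk G w {y | σ y = σ v ∧ lab y = lab v} v x ρ) ∧
      ∀ r : ℝ, ρ < r → ∀ v0 : V, ∃ F : Finset (ℕ × ℕ × ℕ),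
        (F.card : ℝ) ≤ ((h - 2 + 2 * ⌈4 * (h : ℝ) * r / ρ⌉₊).choose (h - 1) : ℝ) *
            (12 + 8 * r / ρ) * ((h : ℝ) - 1) ∧
        ∀ y, (∃ x, σ x = σ v0 ∧ lab x = lab v0 ∧ Wk G w {z | σ y ≤ σ z} x y r) →
          (σ y, lab y) ∈ F := by
  have hh' : (0 : ℝ) < h := by exact_mod_cast hh
  set γ : ℝ := ρ / (4 * h) with hγ
  have hγ0 : 0 < γ := by positivity
  have hγh : γ * h = ρ / 4 := by rw [hγ]; field_simp
  obtain ⟨s, I, hU⟩ := St.exists_final (γ := γ) hw hs hρ hm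
  have hnU : ∀ v, v ∉ s.U := fun v => by rw [hU]; exact id
  have hPt : ∀ v, s.Pt v = {y | s.σ y = s.σ v ∧ s.lab y = s.lab v} := by
    intro v; ext y; simp [St.Pt, hnU]
  have hM : ∀ X, s.M X = {z | X ≤ s.σ z} := by
    intro X; ext y; simp [St.M, hnU]
  have hE : ∀ v, ∃ z ∈ s.T, z ∈ s.Pt v ∧ Wk G w (s.Pt v) v z (ρ / 4) := by
    intro v
    obtain ⟨z, h1, h2, h3⟩ := I.E v (hnU v)
    refine ⟨z, h1, h2, h3.mono subset_rfl ?_⟩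
    have h4 := I.radb v (hnU v)
    have h5 := I.card _ (I.σn v (hnU v))
    rw [← hγh]
    have : (s.rad v : ℝ) ≤ h := by exact_mod_cast (by omega : s.rad v ≤ h)
    gcongr
  have hdiam : ∀ v x, s.σ x = s.σ v → s.lab x = s.lab v → Wk G w (s.Pt v) v x ρ := by
    intro v x h1 h2
    obtain ⟨z, a1, a2, a3⟩ := hE v
    obtain ⟨z', b1, b2, b3⟩ := hE x
    have e : s.Pt x = s.Pt v := by simp only [St.Pt, h1, h2]
    have e' : s.Pt z = s.Pt v := by simp only [St.Pt, a2.2.1, a2.2.2]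
    have h3 := I.Tdiam z a1 z' b1 (a2.2.1.trans (h1.symm.trans b2.2.1.symm))
      (a2.2.2.trans (h2.symm.trans b2.2.2.symm))
    rw [e'] at h3
    rw [e] at b3
    exact ((a3.trans h3).trans (b3.symm hs)).mono subset_rfl (by linarith)
  refine ⟨s.σ, s.lab, fun v x h1 h2 => by rw [← hPt]; exact hdiam v x h1 h2, ?_⟩
  intro r hr v0
  set N := ⌈4 * (h : ℝ) * r / ρ⌉₊ with hN
  have hrpos : 0 < r := hρ.trans hr
  have hN0 : 0 < N := by
    rw [hN, Nat.ceil_pos]; positivity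
  have hrN : r ≤ ((N - 1 : ℕ) + 1) * γ := by
    have h1 : 4 * (h : ℝ) * r / ρ ≤ N := Nat.le_ceil _
    have e : (((N - 1 : ℕ) : ℝ) + 1) = N := by
      have : N - 1 + 1 = N := by omega
      exact_mod_cast this
    rw [e, hγ]
    rw [div_le_iff₀ hρ] at h1
    rw [mul_div_assoc', le_div_iff₀ (by positivity)]
    linarith
  have hn0 := I.memD hU v0
  have hh2 : 2 ≤ h := by have := I.card _ hn0.1; omega
  -- supernode count
  have hrn : ∀ a < s.n, ∀ b e, Rh s.S e a b → b < s.n := by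
    intro a ha b e hb
    induction hb with
    | refl d a => exact ha
    | @step d a b x hx hr ih => exact ih ((I.Sn a ha x hx).trans ha)
  let S' : ℕ → Finset ℕ := fun a => if a < s.n then s.S a else ∅
  have S'e : ∀ a < s.n, S' a = s.S a := fun a ha => if_pos ha
  have S'm : ∀ a x, x ∈ S' a → a < s.n ∧ x ∈ s.S a := by
    intro a x hx
    by_cases ha : a < s.n
    · rw [S'e a ha] at hx; exact ⟨ha, hx⟩
    · simp [S', ha] at hx
  have Rconv : ∀ e a b, a < s.n → Rh s.S e a b → Rh S' e a b := by
    intro e a b ha hb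
    induction hb with
    | refl d a => exact .refl _ _
    | @step d a b x hx hr ih =>
      exact .step (by rw [S'e a ha]; exact hx) (ih ((I.Sn a ha x hx).trans ha))
  obtain ⟨R, hR, hR'⟩ := Rh.count _ (2 * (N - 1) + 1) (h - 1) le_rfl S' (by
      intro a x hx y hy hxy
      obtain ⟨ha, hx⟩ := S'm a x hx
      obtain ⟨-, hy⟩ := S'm a y hy
      have hyn := (I.Sn a ha y hy).trans ha
      rw [S'e y hyn]
      exact I.cl a ha x hx y hy hxy) (s.σ v0) (by
      intro b e _
      by_cases hb : b < s.n
      · rw [S'e b hb]; have := I.card b hb; omega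
      · simp [S', hb])
  let Re : V → Prop := fun y => ∃ x, s.σ x = s.σ v0 ∧ s.lab x = s.lab v0 ∧
    Wk G w {z | s.σ y ≤ s.σ z} x y r
  have hReR : ∀ y, Re y → s.σ y ∈ R.filter (· < s.n) := by
    rintro y ⟨x, h1, h2, h3⟩
    rw [Finset.mem_filter]
    refine ⟨hR' _ (Rconv _ _ _ hn0.1 ?_), (I.memD hU y).1⟩
    have hx := I.memD hU x
    rw [← h1]
    refine I.hop hw hγ0.le hU (N - 1) _ _ x y r (by rw [hM]; exact h3) hrN hx.1 hx.2 ?_ rfl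
    exact h3.left_mem
  set K := ⌊4 * r / ρ + 3⌋₊ + 1 with hK
  have hwin : ∀ y y', Re y → Re y' → s.σ y = s.σ y' → (s.lab y).2 ≤ (s.lab y').2 + K := by
    rintro y y' ⟨x, a1, a2, a3⟩ ⟨x', b1, b2, b3⟩ e
    obtain ⟨z, c1, c2, c3⟩ := hE y
    obtain ⟨z', d1, d2, d3⟩ := hE y'
    have hsub : ∀ v, s.σ y ≤ s.σ v → s.Pt v ⊆ s.M (s.σ y) := by
      intro v hv p hp
      rw [hM]
      have := hp.2.1
      change s.σ y ≤ s.σ p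
      omega
    rw [← hM] at a3 b3
    rw [← e] at b3
    have hxx := hdiam x x' (b1.trans a1.symm) (b2.trans a2.symm)
    have hxl : s.σ y ≤ s.σ x := by have := a3.left_mem; rw [hM] at this; exact this
    have w1 := (c3.mono (hsub y le_rfl) le_rfl).symm hs
    have w2 := (w1.trans (a3.symm hs)).trans (hxx.mono (hsub x hxl) le_rfl)
    have w3 := (w2.trans b3).trans (d3.mono (hsub y' e.le) le_rfl)
    have ez : s.σ z = s.σ y := c2.2.1
    have ez' : s.σ z' = s.σ y := d2.2.1.trans e.symm
    rw [← ez] at w3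
    have hδ := I.Tδ z c1 z' d1 (ez.trans ez'.symm) _ w3
    have l1 := (I.Tlab z c1).2.1
    have l2 := (I.Tlab z' d1).2
    rw [← c2.2.2, ← d2.2.2, l1, l2.1]
    have h1 : 2 * s.δ z / ρ ≤ 2 * s.δ z' / ρ + (4 * r / ρ + 3) := by
      have e : 2 * s.δ z' / ρ + (4 * r / ρ + 3) = (2 * s.δ z' + 4 * r + 3 * ρ) / ρ := by
        field_simp
        ring
      rw [e, div_le_div_iff_of_pos_right hρ]
      linarith
    have h2 := Nat.lt_floor_add_one (2 * s.δ z' / ρ)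
    have h3 := Nat.lt_floor_add_one (4 * r / ρ + 3)
    rw [← Nat.lt_add_one_iff]
    rw [Nat.floor_lt (div_nonneg (mul_nonneg zero_le_two (I.Tlab z c1).2.2) hρ.le)]
    rw [hK]
    push_cast
    linarith
  let m : ℕ → ℕ := fun β => sInf {k | ∃ y, Re y ∧ s.σ y = β ∧ (s.lab y).2 = k}
  refine ⟨(R.filter (· < s.n)).biUnion
    (fun β => {β} ×ˢ ((insert β (s.S β)) ×ˢ Finset.Icc (m β) (m β + K))), ?_, ?_⟩
  · have hc : ((R.filter (· < s.n)).biUnion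
      (fun β => {β} ×ˢ ((insert β (s.S β)) ×ˢ Finset.Icc (m β) (m β + K)))).card ≤
        (h - 2 + 2 * N).choose (h - 1) * ((h - 1) * (K + 1)) := by
      refine (Finset.card_biUnion_le_card_mul _ _ ((h - 1) * (K + 1)) ?_).trans ?_
      · intro β hβ
        have hβn := (Finset.mem_filter.1 hβ).2
        rw [Finset.card_product, Finset.card_product, Finset.card_singleton, one_mul, Nat.card_Icc]
        have h1 := Finset.card_insert_le β (s.S β)
        have h2 := I.card β hβn
        apply Nat.mul_le_mul
        · omega
        · omega
      · apply Nat.mul_le_mul_right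
        refine (Finset.card_filter_le _ _).trans (hR.trans ?_)
        have e : 2 * (N - 1) + 1 + (h - 1) = h - 2 + 2 * N := by omega
        rw [e]
    have hc' : ((((R.filter (· < s.n)).biUnion
      (fun β => {β} ×ˢ ((insert β (s.S β)) ×ˢ Finset.Icc (m β) (m β + K)))).card : ℕ) : ℝ) ≤
        (((h - 2 + 2 * N).choose (h - 1) * ((h - 1) * (K + 1)) : ℕ) : ℝ) := by exact_mod_cast hc
    refine hc'.trans ?_
    rw [Nat.cast_mul, Nat.cast_mul, Nat.cast_sub (by omega), mul_assoc]
    apply mul_le_mul_of_nonneg_left _ (Nat.cast_nonneg _)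
    rw [mul_comm]
    have h1 : (0 : ℝ) ≤ (h : ℝ) - 1 := by
      have : (2 : ℝ) ≤ h := by exact_mod_cast hh2
      linarith
    rw [Nat.cast_one]
    apply mul_le_mul_of_nonneg_right _ h1
    have h2 := Nat.floor_le (a := 4 * r / ρ + 3) (by positivity)
    have h3 : 8 * r / ρ = 2 * (4 * r / ρ) := by ring
    have h4 : 0 ≤ 4 * r / ρ := by positivity
    rw [hK, h3]
    push_cast
    linarith
  · intro y hy
    have hy' : Re y := hy
    rw [Finset.mem_biUnion]
    refine ⟨s.σ y, hReR y hy', ?_⟩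
    rw [Finset.mem_product, Finset.mem_product, Finset.mem_Icc, Finset.mem_singleton]
    refine ⟨rfl, ?_, ?_, ?_⟩
    · obtain ⟨z, c1, c2, c3⟩ := hE y
      have := (I.Tlab z c1).1
      rwa [c2.2.1, c2.2.2] at this
    · exact Nat.sInf_le ⟨y, hy', rfl, rfl⟩
    · have hne : {k | ∃ y', Re y' ∧ s.σ y' = s.σ y ∧ (s.lab y').2 = k}.Nonempty := ⟨_, y, hy', rfl, rfl⟩
      obtain ⟨y', g1, g2, g3⟩ := Nat.sInf_mem hne
      have := hwin y y' hy' g1 g2.symm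
      change (s.lab y).2 ≤ sInf _ + K
      rw [← g3]
      exact this

/-! Final assembly -/

theorem RS.toWk {G : SimpleGraph V} {w : V → V → ℝ} {A : Set V} {x y : V} {c : ℝ} {m : ℕ}
    (hy : y ∈ A) (h : RS G w {y} A x c m) : Wk G w A x y c := by
  induction h with
  | base hk => cases hk; exact .nil hy le_rfl
  | step hv ha hr ih => exact .cons hv ha ih le_rfl

theorem Wk.closed [Finite V] {G : SimpleGraph V} {w : V → V → ℝ} (hw : ∀ a b, 0 ≤ w a b)
    {A : Set V} {x y : V} {r : ℝ} (h : ∀ ε > 0, Wk G w A x y (r + ε)) : Wk G w A x y r := by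
  have hy := (h 1 one_pos).right_mem
  have ex : ∀ ε > 0, ∃ d m, d ≤ r + ε ∧ RS G w {y} A x d m := by
    intro ε hε
    obtain ⟨d, m, h1, h2⟩ := RS.of_wk (h ε hε) (RS.base (K := {y}) (Set.mem_singleton y))
    exact ⟨d, m, by linarith, h2⟩
  obtain ⟨d, m, -, h1⟩ := ex 1 one_pos
  obtain ⟨c, m, h2, h3, -⟩ := RS.exists_min hw ⟨d, m, h1⟩
  refine (h2.toWk hy).mono subset_rfl (le_of_forall_pos_le_add fun ε hε => ?_)
  obtain ⟨d, m, h4, h5⟩ := ex ε hε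
  exact (h3 d m h5).trans h4

/-- edges of finite weight -/
def fin' (G : SimpleGraph V) (w : Sym2 V → ℝ≥0∞) : SimpleGraph V where
  Adj u v := G.Adj u v ∧ w s(u, v) ≠ ⊤
  symm := ⟨fun u v h => ⟨h.1.symm, by rw [Sym2.eq_swap]; exact h.2⟩⟩
  loopless := ⟨fun u h => G.loopless.irrefl u h.1⟩

def wt (w : Sym2 V → ℝ≥0∞) (u v : V) : ℝ := (w s(u, v)).toReal

theorem minor_of_fin {G : SimpleGraph V} {w : Sym2 V → ℝ≥0∞} {h : ℕ}
    (hm : HasCompleteMinor (fin' G w) h) : HasCompleteMinor G h := by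
  obtain ⟨B, h1, h2, h3⟩ := hm
  refine ⟨B, fun i => (h1 i).mono ?_, h2, fun i j hij => ?_⟩
  · intro a b hab; exact hab.1
  · obtain ⟨u, hu, v, hv, ha⟩ := h3 i j hij
    exact ⟨u, hu, v, hv, ha.1⟩

theorem Wk.distOn_le {G : SimpleGraph V} {w : Sym2 V → ℝ≥0∞} {A : Set V} {u v : V} {c : ℝ}
    (h : Wk (fin' G w) (wt w) A u v c) : distOn G w A u v ≤ ENNReal.ofReal c := by
  have key : ∃ (hu : u ∈ A) (hv : v ∈ A) (p : (G.induce A).Walk ⟨u, hu⟩ ⟨v, hv⟩),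
      (p.edges.map (fun e => w (e.map Subtype.val))).sum ≤ ENNReal.ofReal c := by
    induction h with
    | nil h1 h2 => exact ⟨h1, h1, .nil, by simp⟩
    | @cons v u x c c' hv ha hk hcc ih =>
      obtain ⟨hu, hx, p, hp⟩ := ih
      have hadj : (G.induce A).Adj ⟨v, hv⟩ ⟨u, hu⟩ := ha.1
      refine ⟨hv, hx, .cons hadj p, ?_⟩
      have hc : 0 ≤ c := hk.nonneg (fun _ _ => ENNReal.toReal_nonneg)
      simp only [SimpleGraph.Walk.edges_cons, List.map_cons, List.sum_cons, Sym2.map_mk]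
      calc _ ≤ ENNReal.ofReal (wt w v u) + ENNReal.ofReal c := by
              gcongr
              rw [wt, ENNReal.ofReal_toReal ha.2]
        _ = ENNReal.ofReal (wt w v u + c) :=
              (ENNReal.ofReal_add ENNReal.toReal_nonneg hc).symm
        _ ≤ _ := ENNReal.ofReal_le_ofReal hcc
  obtain ⟨hu, hv, p, hp⟩ := key
  exact (iInf_le_of_le hu (iInf_le_of_le hv (iInf_le_of_le p hp)))

theorem Wk.of_walk {G : SimpleGraph V} {w : Sym2 V → ℝ≥0∞} {A : Set V} {a b : A}
    (p : (G.induce A).Walk a b) : ∀ c : ℝ, 0 ≤ c →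
    (p.edges.map (fun e => w (e.map Subtype.val))).sum ≤ ENNReal.ofReal c →
    Wk (fin' G w) (wt w) A a b c := by
  induction p with
  | nil => intro c hc _; exact .nil (Subtype.coe_prop _) hc
  | @cons v u x ha p ih =>
    intro c hc hp
    simp only [SimpleGraph.Walk.edges_cons, List.map_cons, List.sum_cons, Sym2.map_mk] at hp
    have h1 : w s((v : V), (u : V)) ≤ ENNReal.ofReal c := le_self_add.trans hp
    have ht : w s((v : V), (u : V)) ≠ ⊤ := ne_top_of_le_ne_top ENNReal.ofReal_ne_top h1
    have h2 : wt w v u ≤ c := ENNReal.toReal_le_of_le_ofReal hc h1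
    refine .cons v.2 (u := (u : V)) ⟨ha, ht⟩ (ih (c - wt w v u) (by linarith) ?_) (by linarith)
    rw [wt, ENNReal.ofReal_sub _ ENNReal.toReal_nonneg, ENNReal.ofReal_toReal ht]
    exact ENNReal.le_sub_of_add_le_left ht hp

theorem exists_wk [Finite V] {G : SimpleGraph V} {w : Sym2 V → ℝ≥0∞} {S A B : Set V} {r : ℝ}
    (hr : 0 ≤ r) (h : setDistOn G w S A B ≤ ENNReal.ofReal r) :
    ∃ a ∈ A, ∃ b ∈ B, Wk (fin' G w) (wt w) S a b r := by
  have hw : ∀ a b, 0 ≤ wt w a b := fun _ _ => ENNReal.toReal_nonneg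
  by_contra hcon
  push Not at hcon
  have h1 : ∀ p : V × V, ∃ ε > 0, p.1 ∈ A → p.2 ∈ B →
      ¬ Wk (fin' G w) (wt w) S p.1 p.2 (r + ε) := by
    rintro ⟨a, b⟩
    by_cases hab : a ∈ A ∧ b ∈ B
    · by_contra hc
      push Not at hc
      exact hcon a hab.1 b hab.2 (Wk.closed hw fun ε hε => (hc ε hε).2.2)
    · exact ⟨1, one_pos, fun h1 h2 => absurd ⟨h1, h2⟩ hab⟩
  choose f hf hf' using h1
  obtain ⟨ε, hε, hle⟩ : ∃ ε > 0, ∀ p, ε ≤ f p := by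
    cases isEmpty_or_nonempty (V × V) with
    | inl h => exact ⟨1, one_pos, fun p => h.elim p⟩
    | inr h =>
      obtain ⟨p, hp⟩ := Finite.exists_min f
      exact ⟨f p, hf p, hp⟩
  have h2 : setDistOn G w S A B < ENNReal.ofReal (r + ε) :=
    lt_of_le_of_lt h ((ENNReal.ofReal_lt_ofReal_iff (by linarith)).2 (by linarith))
  simp only [setDistOn, distOn, iInf_lt_iff] at h2
  obtain ⟨a, ha, b, hb, hu, hv, p, hp⟩ := h2
  exact hf' (a, b) ha hb
    ((Wk.of_walk p (r + ε) (by linarith) hp.le).mono subset_rfl (by linarith [hle (a, b)]))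

theorem nat_iSup_le {ι : Sort*} (f : ι → ℕ) (n : ℕ) (h : ∀ i, f i ≤ n) : (⨆ i, f i) ≤ n := by
  cases isEmpty_or_nonempty ι with
  | inl he => rw [ciSup_of_empty]; exact Nat.zero_le _
  | inr he => exact ciSup_le h

theorem stmt_2 {V : Type} [Fintype V] (h : ℕ) (hh : 0 < h)
    (G : SimpleGraph V) (w : Sym2 V → ℝ≥0∞) (hminor : ¬ HasCompleteMinor G h)
    (ρ : ℝ) (hρ : 0 < ρ) :
    ∃ (P : Set (Set V)) (le : Set V → Set V → Prop),
      Setoid.IsPartition P ∧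
      (∀ X ∈ P, ∀ u ∈ X, ∀ v ∈ X, distOn G w X u v ≤ ENNReal.ofReal ρ) ∧
      IsLinearOrderOn P le ∧
      ∀ r : ℝ, ρ < r →
        (wcol G w P le r : ℝ) ≤
          ((h - 2 + 2 * ⌈4 * (h : ℝ) * r / ρ⌉₊).choose (h - 1) : ℝ) *
            (12 + 8 * r / ρ) * ((h : ℝ) - 1) := by
  classical
  obtain ⟨σ, lab, hd, hc⟩ := core (G := fin' G w) (w := wt w) (h := h) (ρ := ρ)
    (fun _ _ => ENNReal.toReal_nonneg) (fun a b => by rw [wt, wt, Sym2.eq_swap]) hρ hh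
    (fun hm => hminor (minor_of_fin hm))
  let key : V → ℕ ×ₗ (ℕ ×ₗ ℕ) := fun v => toLex (σ v, toLex (lab v))
  have key_iff : ∀ x v, key x = key v ↔ σ x = σ v ∧ lab x = lab v := by
    intro x v
    simp [key]
  have key_le : ∀ x v, key x ≤ key v → σ x ≤ σ v := by
    intro x v hxv
    rcases Prod.Lex.le_iff.1 hxv with h1 | h1
    · exact h1.le
    · exact h1.1.le
  let fib : V → Set V := fun v => {y | σ y = σ v ∧ lab y = lab v}
  have mem_fib : ∀ y v, y ∈ fib v ↔ key y = key v := fun y v => (key_iff y v).symm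
  have self : ∀ v, v ∈ fib v := fun v => ⟨rfl, rfl⟩
  have fib_eq : ∀ u v, key u = key v → fib u = fib v := by
    intro u v e
    ext y
    rw [mem_fib, mem_fib, e]
  let le : Set V → Set V → Prop := fun X Y => ∃ x ∈ X, ∃ y ∈ Y, key x ≤ key y
  have le_iff : ∀ u v, le (fib u) (fib v) ↔ key u ≤ key v := by
    intro u v
    constructor
    · rintro ⟨x, hx, y, hy, hxy⟩
      rw [mem_fib] at hx hy
      rwa [← hx, ← hy]
    · intro e
      exact ⟨u, self u, v, self v, e⟩
  refine ⟨Set.range fib, le, ⟨?_, ?_⟩, ?_, ⟨?_, ?_, ?_, ?_⟩, ?_⟩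
  · rintro ⟨v, hv⟩
    have := self v
    rw [hv] at this
    exact this
  · intro a
    refine ⟨fib a, ⟨⟨a, rfl⟩, self a⟩, ?_⟩
    rintro _ ⟨⟨v, rfl⟩, hv⟩
    exact (fib_eq _ _ ((mem_fib _ _).1 hv)).symm
  · rintro _ ⟨z, rfl⟩ u hu v hv
    have e := (mem_fib _ _).1 hu
    rw [← fib_eq u z e] at hv ⊢
    exact (hd u v hv.1 hv.2).distOn_le
  · rintro _ ⟨u, rfl⟩
    exact (le_iff u u).2 le_rfl
  · rintro _ ⟨u, rfl⟩ _ ⟨v, rfl⟩ h1 h2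
    exact fib_eq _ _ (le_antisymm ((le_iff _ _).1 h1) ((le_iff _ _).1 h2))
  · rintro _ ⟨u, rfl⟩ _ ⟨v, rfl⟩ _ ⟨x, rfl⟩ h1 h2
    exact (le_iff _ _).2 (((le_iff _ _).1 h1).trans ((le_iff _ _).1 h2))
  · rintro _ ⟨u, rfl⟩ _ ⟨v, rfl⟩
    rw [le_iff, le_iff]
    exact le_total _ _
  · intro r hr
    have hr0 : 0 ≤ r := (hρ.trans hr).le
    have hb0 : 0 ≤ ((h - 2 + 2 * ⌈4 * (h : ℝ) * r / ρ⌉₊).choose (h - 1) : ℝ) *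
            (12 + 8 * r / ρ) * ((h : ℝ) - 1) := by
      have : (1 : ℝ) ≤ h := by exact_mod_cast hh
      have h2 : 0 ≤ (h : ℝ) - 1 := by linarith
      have h3 : 0 ≤ 8 * r / ρ := by positivity
      positivity
    refine le_trans (Nat.cast_le.2 ?_) (Nat.floor_le hb0)
    refine nat_iSup_le _ _ fun X => nat_iSup_le _ _ fun hX => ?_
    obtain ⟨v0, rfl⟩ := hX
    obtain ⟨F, hF, hF'⟩ := hc r hr v0
    refine le_trans ?_ (Nat.le_floor hF)
    rw [← Set.ncard_coe_finset F]
    have hsub : {Y | Y ∈ Set.range fib ∧ WReach G w (Set.range fib) le r (fib v0) Y} ⊆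
        (fun k : ℕ × ℕ × ℕ => {y | σ y = k.1 ∧ lab y = k.2}) '' (F : Set (ℕ × ℕ × ℕ)) := by
      rintro _ ⟨⟨y, rfl⟩, hY⟩
      obtain ⟨a, ha, b, hb, hab⟩ := exists_wk hr0 hY
      refine ⟨(σ y, lab y), ?_, rfl⟩
      have hyb : σ b = σ y ∧ lab b = lab y := hb
      rw [← hyb.1, ← hyb.2]
      refine hF' b ⟨a, ha.1, ha.2, hab.mono ?_ le_rfl⟩
      rintro z ⟨_, ⟨⟨u, rfl⟩, hu⟩, hz⟩
      have h1 := key_le _ _ ((le_iff _ _).1 hu)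
      have h2 : σ z = σ u := hz.1
      show σ b ≤ σ z
      rw [hyb.1, h2]
      exact h1
    refine (Set.ncard_le_ncard hsub (Set.toFinite _)).trans ?_
    exact Set.ncard_image_le F.finite_toSet

end ScatterDim
end

section
/- For every integer h ≥ 1, every real ε with 0 < ε ≤ 1, every real r > 0, and every K_h-minor-free edge-weighted graph G, there exists an r-cover 𝒟 of G such that every member of 𝒟 has weak diameter at most (4+ε)·r and the overlap of 𝒟 is at most C(h−2+2·⌈24h·ε⁻¹⌉, h−1) · (12+48ε⁻¹) · (h−1), where C(·,·) denotes the binomial coefficient. -/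
open scoped ENNReal

namespace ScatterDim

variable {V : Type}





/-- walk relation: walk from x to y of weight l, all vertices but the last in S -/
inductive Rw {V : Type} (G : SimpleGraph V) (c : V → V → ℝ) (S : Set V) : V → V → ℝ → Prop
  | nil (x : V) : Rw G c S x x 0
  | cons {x y z : V} {l : ℝ} (hx : x ∈ S) (ha : G.Adj x y) (hr : Rw G c S y z l) :
      Rw G c S x z (c x y + l)

section rw
variable {V : Type} {G : SimpleGraph V} {c : V → V → ℝ}

theorem Rw.mono {S S' : Set V} (hS : S ⊆ S') {x y : V} {l : ℝ} (h : Rw G c S x y l) :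
    Rw G c S' x y l := by
  induction h with
  | nil x => exact .nil x
  | cons hx ha _ ih => exact .cons (hS hx) ha ih

theorem Rw.trans {S : Set V} {x y z : V} {a b : ℝ} (h : Rw G c S x y a) (h2 : Rw G c S y z b) :
    Rw G c S x z (a + b) := by
  induction h with
  | nil x => simpa using h2
  | cons hx ha _ ih => rw [add_assoc]; exact .cons hx ha (ih h2)

theorem Rw.start_mem {S : Set V} {x y : V} {l : ℝ} (h : Rw G c S x y l) (hy : y ∈ S) : x ∈ S := by
  cases h with
  | nil => exact hy
  | cons hx _ _ => exact hx

theorem Rw.symm (hcs : ∀ x y, c x y = c y x) {S : Set V} {x y : V} {l : ℝ}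
    (h : Rw G c S x y l) (hy : y ∈ S) : Rw G c S y x l := by
  induction h with
  | nil x => exact .nil x
  | @cons x y z l hx ha hr ih =>
    have h1 : Rw G c S y x (c y x + 0) := .cons (hr.start_mem hy) ha.symm (.nil x)
    have := (ih hy).trans h1
    rw [add_comm (c x y), hcs x y]
    simpa using this

theorem Rw.nonneg (hc0 : ∀ x y, 0 ≤ c x y) {S : Set V} {x y : V} {l : ℝ}
    (h : Rw G c S x y l) : 0 ≤ l := by
  induction h with
  | nil x => exact le_rfl
  | cons hx ha _ ih => exact add_nonneg (hc0 _ _) ih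

/-- first exit from R -/
theorem Rw.exit {S R : Set V} {x z : V} {l : ℝ} (h : Rw G c S x z l) (hx : x ∈ R) (hz : z ∉ R) :
    ∃ p y l1 l2, Rw G c (S ∩ R) x y l1 ∧ y ∉ R ∧ p ∈ R ∧ p ∈ S ∧ G.Adj p y ∧ Rw G c S y z l2 ∧
      l = l1 + l2 := by
  induction h with
  | nil x => exact absurd hx hz
  | @cons x y z l hxS ha hr ih =>
    by_cases hy : y ∈ R
    · obtain ⟨p, q, l1, l2, h1, h2, h3, h3', h4, h5, h6⟩ := ih hy hz
      exact ⟨p, q, c x y + l1, l2, .cons ⟨hxS, hx⟩ ha h1, h2, h3, h3', h4, h5, by rw [h6]; ring⟩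
    · exact ⟨x, y, c x y + 0, l, .cons ⟨hxS, hx⟩ ha (.nil y), hy, hx, hxS, ha, hr, by ring⟩

/-- last exit from complement: last vertex outside E -/
theorem Rw.lastExit {S E : Set V} {x z : V} {l : ℝ} (hc0 : ∀ x y, 0 ≤ c x y)
    (h : Rw G c S x z l) (hx : x ∉ E) (hz : z ∈ E) :
    ∃ p y l2, p ∈ S ∧ p ∉ E ∧ y ∈ E ∧ G.Adj p y ∧ Rw G c S y z l2 ∧ c p y + l2 ≤ l := by
  induction h with
  | nil x => exact absurd hz hx
  | @cons x y z l hxS ha hr ih =>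
    by_cases hy : y ∈ E
    · exact ⟨x, y, l, hxS, hx, hy, ha, hr, le_rfl⟩
    · obtain ⟨p, q, l2, h1, h2, h3, h4, h5, h6⟩ := ih hy hz
      exact ⟨p, q, l2, h1, h2, h3, h4, h5, by have := hc0 x y; linarith⟩

/-- Dijkstra data -/
structure Dij (G : SimpleGraph V) (c : V → V → ℝ) (C B : Set V) (f : V → ℕ)
    (E : Set V) (d : V → ℝ) (nx : V → V) (rk : V → ℕ) (lab : V → ℕ) : Prop where
  sub : E ⊆ C
  adj : ∀ e ∈ E, G.Adj e (nx e)
  nxt : ∀ e ∈ E, (nx e ∈ E ∧ rk (nx e) < rk e) ∨ nx e ∈ B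
  deq : ∀ e ∈ E, d e = c e (nx e) + d (nx e)
  labeq : ∀ e ∈ E, lab e = lab (nx e)
  d0 : ∀ b ∈ B, d b = 0
  lab0 : ∀ b ∈ B, lab b = f b
  opt : ∀ e ∈ E, ∀ b ∈ B, ∀ l, Rw G c C e b l → d e ≤ l

theorem dijkstra [Finite V] (hc0 : ∀ x y, 0 ≤ c x y) (C B : Set V) (hCB : Disjoint C B)
    (f : V → ℕ) : ∃ E d nx rk lab, Dij G c C B f E d nx rk lab ∧
      ∀ x ∈ C, x ∉ E → ∀ b ∈ B, ∀ l, ¬ Rw G c C x b l := by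
  classical
  have key : ∀ m : ℕ, ∀ E d nx rk lab, Dij G c C B f E d nx rk lab → (Eᶜ : Set V).ncard = m →
      ∃ E d nx rk lab, Dij G c C B f E d nx rk lab ∧
      ∀ x ∈ C, x ∉ E → ∀ b ∈ B, ∀ l, ¬ Rw G c C x b l := by
    intro m
    induction m using Nat.strong_induction_on with
    | _ m ih =>
    intro E d nx rk lab hD hm
    by_cases hdone : ∀ x ∈ C, x ∉ E → ∀ b ∈ B, ∀ l, ¬ Rw G c C x b l
    · exact ⟨E, d, nx, rk, lab, hD, hdone⟩
    push Not at hdone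
    obtain ⟨x, hxC, hxE, b, hb, l, hl⟩ := hdone
    let P : Set (V × V) := {q | q.1 ∈ C ∧ q.1 ∉ E ∧ q.2 ∈ E ∪ B ∧ G.Adj q.1 q.2}
    have hxEB : x ∉ E ∪ B := fun h => h.elim hxE (fun h => Set.disjoint_left.1 hCB hxC h)
    have hPne : P.Nonempty := by
      obtain ⟨p, y, l2, h1, h2, h3, h4, h5, h6⟩ := hl.lastExit hc0 hxEB (Or.inr hb)
      exact ⟨(p, y), h1, fun h => h2 (Or.inl h), h3, h4⟩
    obtain ⟨⟨e, q⟩, ⟨heC, heE, hq, heq⟩, hmin⟩ :=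
      Set.exists_min_image P (fun q => c q.1 q.2 + d q.2) (Set.toFinite P) hPne
    simp only at heC heE hq heq
    have heB : e ∉ B := fun h => Set.disjoint_left.1 hCB heC h
    have hqe : q ≠ e := fun h => by subst h; exact hq.elim heE heB
    have hEe : ∀ y ∈ E, y ≠ e := fun y hy h => heE (h ▸ hy)
    have hBe : ∀ y ∈ B, y ≠ e := fun y hy h => heB (h ▸ hy)
    have hnxe : ∀ y ∈ E, nx y ≠ e := fun y hy h => by
      rcases hD.nxt y hy with h1 | h1
      · exact heE (h ▸ h1.1)
      · exact heB (h ▸ h1)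
    refine ih ((insert e E)ᶜ : Set V).ncard ?_ (insert e E)
      (Function.update d e (c e q + d q)) (Function.update nx e q)
      (Function.update rk e (rk q + 1)) (Function.update lab e (lab q)) ?_ rfl
    · rw [← hm]
      apply Set.ncard_lt_ncard _ (Set.toFinite _)
      refine ⟨Set.compl_subset_compl.2 (Set.subset_insert _ _), fun h => ?_⟩
      exact h heE (Set.mem_insert _ _)
    · constructor
      · exact Set.insert_subset heC hD.sub
      · intro y hy
        rcases hy with rfl | hy
        · simpa using heq
        · simpa [hEe y hy] using hD.adj y hy
      · intro y hy
        rcases hy with rfl | hy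
        · rcases hq with hq | hq
          · left; simp [hqe, hq]
          · right; simpa using hq
        · rcases hD.nxt y hy with h1 | h1
          · left; simp [hEe y hy, hnxe y hy, h1]
          · right; simpa [hEe y hy] using h1
      · intro y hy
        rcases hy with rfl | hy
        · simp [hqe]
        · simpa [hEe y hy, hnxe y hy] using hD.deq y hy
      · intro y hy
        rcases hy with rfl | hy
        · simp [hqe]
        · simpa [hEe y hy, hnxe y hy] using hD.labeq y hy
      · intro y hy
        simpa [hBe y hy] using hD.d0 y hy
      · intro y hy
        simpa [hBe y hy] using hD.lab0 y hy
      · intro y hy b' hb' l' hl'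
        rcases hy with rfl | hy
        · obtain ⟨p, z, l2, h1, h2, h3, h4, h5, h6⟩ :=
            hl'.lastExit (E := E ∪ B) hc0 (fun h => h.elim heE heB) (Or.inr hb')
          have h7 := hmin (p, z) ⟨h1, fun h => h2 (Or.inl h), h3, h4⟩
          simp only at h7
          have h8 : d z ≤ l2 := by
            rcases h3 with h3 | h3
            · exact hD.opt z h3 b' hb' l2 h5
            · rw [hD.d0 z h3]; exact h5.nonneg hc0
          simp; linarith
        · simpa [hEe y hy] using hD.opt y hy b' hb' l' hl'
  refine key _ ∅ (fun _ => 0) id (fun _ => 0) f ?_ rfl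
  constructor <;> simp

theorem Dij.nonneg {C B : Set V} {f : V → ℕ} {E d nx rk lab} (hc0 : ∀ x y, 0 ≤ c x y)
    (hD : Dij G c C B f E d nx rk lab) : ∀ e ∈ E, 0 ≤ d e := by
  intro e
  induction h : rk e using Nat.strong_induction_on generalizing e with
  | _ m ih =>
  intro he
  rw [hD.deq e he]
  rcases hD.nxt e he with h1 | h1
  · exact add_nonneg (hc0 _ _) (ih _ (h ▸ h1.2) _ rfl h1.1)
  · rw [hD.d0 _ h1]; simpa using hc0 _ _

/-- cells of the Voronoi partition -/
theorem Dij.cell {C B : Set V} {f : V → ℕ} {E d nx rk lab} (hc0 : ∀ x y, 0 ≤ c x y)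
    (hD : Dij G c C B f E d nx rk lab) (γ : ℝ) : ∀ e ∈ E, d e < γ →
      ∃ p b, b ∈ B ∧ f b = lab e ∧ p ∈ E ∧ G.Adj p b ∧
        Rw G c {v | v ∈ E ∧ d v < γ ∧ lab v = lab e} e b (d e) := by
  intro e
  induction h : rk e using Nat.strong_induction_on generalizing e with
  | _ m ih =>
  intro he hd
  rcases hD.nxt e he with h1 | h1
  · obtain ⟨p, b, hb, hf, hp, ha, hr⟩ := ih _ (h ▸ h1.2) _ rfl h1.1
      (by have := hD.deq e he; have := hc0 e (nx e); linarith)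
    refine ⟨p, b, hb, hf.trans (hD.labeq e he).symm, hp, ha, ?_⟩
    rw [hD.deq e he]
    refine .cons ⟨he, hd, rfl⟩ (hD.adj e he) (hr.mono ?_)
    rintro v ⟨hv1, hv2, hv3⟩
    exact ⟨hv1, hv2, hv3.trans (hD.labeq e he).symm⟩
  · refine ⟨e, nx e, h1, ?_, he, hD.adj e he, ?_⟩
    · rw [hD.labeq e he, hD.lab0 _ h1]
    · have := Rw.cons (c := c) (S := {v | v ∈ E ∧ d v < γ ∧ lab v = lab e}) ⟨he, hd, rfl⟩
        (hD.adj e he) (.nil (nx e))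
      rwa [hD.deq e he, hD.d0 _ h1]

/-- geodesics -/
theorem Dij.geod {C : Set V} {c0 : V} {f : V → ℕ} {E d nx rk lab} (hc0 : ∀ x y, 0 ≤ c x y)
    (hD : Dij G c C {c0} f E d nx rk lab) : ∀ e ∈ E,
      ∃ S : Set V, e ∈ S ∧ c0 ∈ S ∧ S ⊆ insert c0 E ∧ (∀ y ∈ S, d y ≤ d e) ∧
       (∀ y ∈ S, Rw G c S e y (d e - d y)) ∧
       (∀ y ∈ S, ∀ y' ∈ S, Rw G c S y y' |d y - d y'| ∨ Rw G c S y' y |d y - d y'|) := by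
  intro e
  induction h : rk e using Nat.strong_induction_on generalizing e with
  | _ m ih =>
  intro he
  have base : ∃ S : Set V, nx e ∈ S ∧ c0 ∈ S ∧ S ⊆ insert c0 E ∧ (∀ y ∈ S, d y ≤ d (nx e)) ∧
       (∀ y ∈ S, Rw G c S (nx e) y (d (nx e) - d y)) ∧
       (∀ y ∈ S, ∀ y' ∈ S, Rw G c S y y' |d y - d y'| ∨ Rw G c S y' y |d y - d y'|) := by
    rcases hD.nxt e he with h1 | h1
    · exact ih _ (h ▸ h1.2) _ rfl h1.1
    · rw [Set.mem_singleton_iff] at h1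
      refine ⟨{c0}, by simp [h1], by simp, by simp, ?_, ?_, ?_⟩
      · rintro y rfl; rw [h1]
      · rintro y rfl; rw [h1, sub_self]; exact .nil _
      · rintro y rfl y' rfl; rw [sub_self, abs_zero]; exact Or.inl (.nil _)
  obtain ⟨S, h1, h2, h3, h4, h5, h6⟩ := base
  have hde := hD.deq e he
  have hc := hc0 e (nx e)
  have h7 : ∀ y ∈ insert e S, Rw G c (insert e S) e y (d e - d y) := by
    rintro y (rfl | hy)
    · rw [sub_self]; exact .nil _
    · have := Rw.cons (Set.mem_insert e S) (hD.adj e he) ((h5 y hy).mono (Set.subset_insert e S))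
      rw [hde, add_sub_assoc]; exact this
  have h8 : ∀ y ∈ insert e S, d y ≤ d e := by
    rintro y (rfl | hy)
    · exact le_rfl
    · have := h4 y hy; linarith
  refine ⟨insert e S, Set.mem_insert _ _, Or.inr h2, ?_, h8, h7, ?_⟩
  · exact Set.insert_subset (Or.inr he) h3
  · rintro y hy y' hy'
    rcases id hy with rfl | hyS
    · left
      rw [abs_of_nonneg (by have := h8 y' hy'; linarith)]
      exact h7 y' hy'
    · rcases id hy' with rfl | hyS'
      · right
        rw [abs_sub_comm, abs_of_nonneg (by have := h8 y hy; linarith)]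
        exact h7 y hy
      · rcases h6 y hyS y' hyS' with h | h
        · exact Or.inl (h.mono (Set.subset_insert e S))
        · exact Or.inr (h.mono (Set.subset_insert e S))

end rw
section count
variable (K : ℕ → Finset ℕ)

def RReach : ℕ → ℕ → ℕ → Prop
  | 0, v, X => X = v
  | n + 1, v, X => X = v ∨ ∃ v' ∈ K v, X ≤ v' ∧ (∀ Z ∈ K v, X ≤ Z → v' ≤ Z) ∧ RReach n v' X

theorem RReach.self (n v : ℕ) : RReach K n v v := by
  cases n with
  | zero => rfl
  | succ n => exact Or.inl rfl

theorem RReach.count (M : ℕ) (hlt : ∀ j, ∀ i ∈ K j, i < j)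
    (hcl : ∀ m, ∀ i ∈ K m, ∀ j ∈ K m, i < j → i ∈ K j) (hM : ∀ j, (K j).card ≤ M) :
    ∀ n k i v, i + k = M → ∃ F : Finset ℕ,
      (∀ X, RReach K n v X → i ≤ ((K v).filter (· < X)).card → X ∈ F) ∧
      F.card ≤ (n + k).choose n := by
  intro n
  induction n with
  | zero =>
    intro k i v _
    exact ⟨{v}, fun X h _ => by simpa [RReach] using h, by simp⟩
  | succ n ih =>
    intro k
    induction k with
    | zero =>
      intro i v hi
      refine ⟨{v}, fun X h h2 => ?_, by simp⟩
      rcases h with h | ⟨v', hv', hX, hm, hr⟩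
      · simp [h]
      · exfalso
        have : ((K v).filter (· < X)).card < (K v).card := by
          apply Finset.card_lt_card
          refine ⟨Finset.filter_subset _ _, fun h => ?_⟩
          have := (Finset.mem_filter.1 (h hv')).2
          omega
        have := hM v
        omega
    | succ k ihk =>
      intro i v hi
      obtain ⟨F1, hF1, hc1⟩ := ihk (i + 1) v (by omega)
      by_cases hex : ∃ v' ∈ K v, ((K v).filter (· < v')).card = i
      · obtain ⟨v', hv', hci⟩ := hex
        obtain ⟨F2, hF2, hc2⟩ := ih (k + 1) i v' hi
        refine ⟨F1 ∪ F2, fun X h h2 => ?_, ?_⟩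
        · rw [Finset.mem_union]
          by_cases h3 : i + 1 ≤ ((K v).filter (· < X)).card
          · exact Or.inl (hF1 X h h3)
          have h4 : ((K v).filter (· < X)).card = i := by omega
          right
          rcases h with h | ⟨v2, hv2, hX, hm, hr⟩
          · exfalso
            have : ((K v).filter (· < v')).card < ((K v).filter (· < X)).card := by
              apply Finset.card_lt_card
              have := hlt v v' hv'
              refine ⟨fun a ha => ?_, fun h' => ?_⟩
              · simp only [Finset.mem_filter] at ha ⊢; exact ⟨ha.1, by omega⟩
              · have := h' (Finset.mem_filter.2 ⟨hv', by omega⟩)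
                simp at this
            omega
          · have e1 : (K v).filter (· < X) = (K v).filter (· < v2) := by
              ext a; simp only [Finset.mem_filter]
              constructor
              · rintro ⟨h5, h6⟩; exact ⟨h5, by omega⟩
              · rintro ⟨h5, h6⟩
                refine ⟨h5, ?_⟩
                by_contra h7
                have := hm a h5 (by omega)
                omega
            have e2 : v2 = v' := by
              by_contra hne
              have aux : ∀ a b, a ∈ K v → a < b → ((K v).filter (· < a)).card < ((K v).filter (· < b)).card := by
                intro a b ha hab
                apply Finset.card_lt_card
                refine ⟨fun q hq => ?_, fun h' => ?_⟩
                · simp only [Finset.mem_filter] at hq ⊢; exact ⟨hq.1, by omega⟩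
                · have := h' (Finset.mem_filter.2 ⟨ha, hab⟩)
                  simp at this
              rw [e1] at h4
              rcases lt_or_gt_of_ne hne with h8 | h8
              · have := aux _ _ hv2 h8; omega
              · have := aux _ _ hv' h8; omega
            subst e2
            apply hF2 X hr
            rw [← h4]
            apply Finset.card_le_card
            intro a ha
            rw [Finset.mem_filter] at ha ⊢
            exact ⟨hcl v a ha.1 v2 hv2 (by omega), ha.2⟩
        · have h1 := Finset.card_union_le F1 F2
          have h2 : (n + 1 + (k + 1)).choose (n + 1) = (n + (k + 1)).choose n + (n + 1 + k).choose (n + 1) := by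
            rw [show n + 1 + (k + 1) = (n + (k + 1)) + 1 by ring, Nat.choose_succ_succ,
              show n + (k + 1) = n + 1 + k by ring]
          omega
      · refine ⟨insert v F1, fun X h h2 => ?_, ?_⟩
        · rw [Finset.mem_insert]
          by_cases h3 : i + 1 ≤ ((K v).filter (· < X)).card
          · exact Or.inr (hF1 X h h3)
          rcases h with h | ⟨v2, hv2, hX, hm, hr⟩
          · exact Or.inl h
          · exfalso
            apply hex
            refine ⟨v2, hv2, ?_⟩
            have e1 : (K v).filter (· < X) = (K v).filter (· < v2) := by
              ext a; simp only [Finset.mem_filter]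
              constructor
              · rintro ⟨h5, h6⟩; exact ⟨h5, by omega⟩
              · rintro ⟨h5, h6⟩
                refine ⟨h5, ?_⟩
                by_contra h7
                have := hm a h5 (by omega)
                omega
            rw [← e1]; omega
        · have h1 := Finset.card_insert_le v F1
          have h2 : (n + 1 + (k + 1)).choose (n + 1) = (n + (k + 1)).choose n + (n + 1 + k).choose (n + 1) := by
            rw [show n + 1 + (k + 1) = (n + (k + 1)) + 1 by ring, Nat.choose_succ_succ,
              show n + (k + 1) = n + 1 + k by ring]
          have h3 : 0 < (n + (k + 1)).choose n := Nat.choose_pos (by omega)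
          omega

/-- ancestors -/
def AncK (B v : ℕ) : Prop := Relation.ReflTransGen (fun B v => v ∈ K B) B v

variable {K}

theorem AncK.le (hlt : ∀ j, ∀ i ∈ K j, i < j) {B v : ℕ} (h : AncK K B v) : v ≤ B := by
  induction h with
  | refl => exact le_rfl
  | tail _ h ih => exact ((hlt _ _ h).le).trans ih

theorem AncK.mem (hlt : ∀ j, ∀ i ∈ K j, i < j)
    (hcl : ∀ m, ∀ i ∈ K m, ∀ j ∈ K m, i < j → i ∈ K j) {B v Z : ℕ} (h : AncK K B v)
    (hZ : Z ∈ K B) (hZv : Z < v) : Z ∈ K v := by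
  induction h using Relation.ReflTransGen.head_induction_on with
  | refl => exact hZ
  | head h1 h2 ih =>
    have := AncK.le hlt h2
    exact ih (hcl _ _ hZ _ h1 (by omega))

theorem AncK.anc (hlt : ∀ j, ∀ i ∈ K j, i < j)
    (hcl : ∀ m, ∀ i ∈ K m, ∀ j ∈ K m, i < j → i ∈ K j) {B v Z : ℕ} (h : AncK K B v)
    (hZ : Z ∈ K B) (hZv : v ≤ Z) : AncK K Z v := by
  induction h using Relation.ReflTransGen.head_induction_on with
  | refl => exact absurd (hlt _ _ hZ) (by omega)
  | @head a b h1 h2 ih =>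
    rcases lt_trichotomy Z b with h | h | h
    · exact ih (hcl _ _ hZ _ h1 h)
    · subst h; exact h2
    · exact Relation.ReflTransGen.head (hcl _ _ h1 _ hZ h) h2

theorem AncK.exit (hlt : ∀ j, ∀ i ∈ K j, i < j)
    (hcl : ∀ m, ∀ i ∈ K m, ∀ j ∈ K m, i < j → i ∈ K j) {V : Type} {G : SimpleGraph V} {f : V → ℕ}
    (hedge : ∀ a b, G.Adj a b → f a < f b → f a ∈ K (f b)) {p z : V} {v : ℕ}
    (h : AncK K (f p) v) (ha : G.Adj p z) (hz : ¬ AncK K (f z) v) : f z < v ∧ f z ∈ K v := by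
  rcases lt_trichotomy (f z) (f p) with h1 | h1 | h1
  · have h2 := hedge z p ha.symm h1
    have h3 : f z < v := by
      by_contra h4
      exact hz (h.anc hlt hcl h2 (by omega))
    exact ⟨h3, h.mem hlt hcl h2 h3⟩
  · rw [h1] at hz; exact absurd h hz
  · exact absurd (Relation.ReflTransGen.head (hedge p z ha h1) h) hz

theorem minK (X v Z : ℕ) (hZ : Z ∈ K v) (hX : X ≤ Z)
    (hcl : ∀ m, ∀ i ∈ K m, ∀ j ∈ K m, i < j → i ∈ K j) :
    ∃ v' ∈ K v, X ≤ v' ∧ (∀ Z ∈ K v, X ≤ Z → v' ≤ Z) ∧ AncK K Z v' := by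
  obtain ⟨v', hv', hm⟩ := Finset.exists_min_image ((K v).filter (X ≤ ·)) id
    ⟨Z, Finset.mem_filter.2 ⟨hZ, hX⟩⟩
  rw [Finset.mem_filter] at hv'
  refine ⟨v', hv'.1, hv'.2, fun Z hZ hX => hm Z (Finset.mem_filter.2 ⟨hZ, hX⟩), ?_⟩
  have h1 : v' ≤ Z := hm Z (Finset.mem_filter.2 ⟨hZ, hX⟩)
  rcases h1.eq_or_lt with h | h
  · rw [h]; exact .refl
  · exact .single (hcl _ _ hv'.1 _ hZ h)

theorem walk_reach (hlt : ∀ j, ∀ i ∈ K j, i < j)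
    (hcl : ∀ m, ∀ i ∈ K m, ∀ j ∈ K m, i < j → i ∈ K j) {V : Type} {G : SimpleGraph V} {f : V → ℕ}
    {c : V → V → ℝ} (hc0 : ∀ x y, 0 ≤ c x y) {γ : ℝ}
    (hedge : ∀ a b, G.Adj a b → f a < f b → f a ∈ K (f b))
    (hbuf : ∀ x z l, f z < f x → f z ∉ K (f x) → Rw G c {v | f z ≤ f v} x z l → γ ≤ l) :
    ∀ (m : ℕ) v x y l, Rw G c {v | f y ≤ f v} x y l → AncK K (f x) v → f y ≤ v →
      l < (m + 1) * γ → RReach K (2 * m + 1) v (f y) := by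
  intro m
  induction m with
  | zero =>
    intro v x y l hw hxv hyv hl
    rcases hyv.eq_or_lt with h | h
    · rw [h]; exact RReach.self _ _ _
    obtain ⟨p, z, l1, l2, h1, h2, h3, h3', h4, h5, h6⟩ :=
      hw.exit (R := {q | AncK K (f q) v}) hxv (fun hh => by have := AncK.le hlt hh; omega)
    obtain ⟨hz1, hz2⟩ := AncK.exit hlt hcl hedge h3 h4 h2
    have hz3 : f y ≤ f z := h5.start_mem (by simp)
    obtain ⟨v', hv1, hv2, hv3, hv4⟩ := minK (f y) v (f z) hz2 hz3 hcl
    refine Or.inr ⟨v', hv1, hv2, hv3, ?_⟩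
    rcases hv2.eq_or_lt with h | h
    · rw [h]; exact RReach.self _ _ _
    exfalso
    obtain ⟨p', z', l3, l4, g1, g2, g3, g3', g4, g5, g6⟩ :=
      h5.exit (R := {q | AncK K (f q) v'}) hv4 (fun hh => by have := AncK.le hlt hh; omega)
    obtain ⟨hw1, hw2⟩ := AncK.exit hlt hcl hedge g3 g4 g2
    have hw3 : f y ≤ f z' := g5.start_mem (by simp)
    have hvv := hlt _ _ hv1
    have hxv' := AncK.le hlt hxv
    have n1 : f z' ∉ K v := fun hh => by have := hv3 _ hh hw3; omega
    have n2 : f z' ∉ K (f x) := fun hh => n1 (hxv.mem hlt hcl hh (by omega))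
    have := hbuf x z' (l1 + l3) (by omega) n2 (Rw.trans (h1.mono ?_) (g1.mono ?_))
    · have := g5.nonneg hc0
      simp at hl; linarith
    · rintro q ⟨_, hq⟩; have := AncK.le hlt hq; simp; omega
    · rintro q ⟨_, hq⟩; have := AncK.le hlt hq; simp; omega
  | succ m ih =>
    intro v x y l hw hxv hyv hl
    rcases hyv.eq_or_lt with h | h
    · rw [h]; exact RReach.self _ _ _
    obtain ⟨p, z, l1, l2, h1, h2, h3, h3', h4, h5, h6⟩ :=
      hw.exit (R := {q | AncK K (f q) v}) hxv (fun hh => by have := AncK.le hlt hh; omega)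
    obtain ⟨hz1, hz2⟩ := AncK.exit hlt hcl hedge h3 h4 h2
    have hz3 : f y ≤ f z := h5.start_mem (by simp)
    obtain ⟨v', hv1, hv2, hv3, hv4⟩ := minK (f y) v (f z) hz2 hz3 hcl
    refine Or.inr ⟨v', hv1, hv2, hv3, ?_⟩
    rcases hv2.eq_or_lt with h | h
    · rw [h]; exact RReach.self _ _ _
    obtain ⟨p', z', l3, l4, g1, g2, g3, g3', g4, g5, g6⟩ :=
      h5.exit (R := {q | AncK K (f q) v'}) hv4 (fun hh => by have := AncK.le hlt hh; omega)
    obtain ⟨hw1, hw2⟩ := AncK.exit hlt hcl hedge g3 g4 g2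
    have hw3 : f y ≤ f z' := g5.start_mem (by simp)
    have hvv := hlt _ _ hv1
    have hxv' := AncK.le hlt hxv
    have n1 : f z' ∉ K v := fun hh => by have := hv3 _ hh hw3; omega
    have n2 : f z' ∉ K (f x) := fun hh => n1 (hxv.mem hlt hcl hh (by omega))
    obtain ⟨v2, hu1, hu2, hu3, hu4⟩ := minK (f y) v' (f z') hw2 hw3 hcl
    refine Or.inr ⟨v2, hu1, hu2, hu3, ih v2 z' y l4 g5 hu4 hu2 ?_⟩
    have := hbuf x z' (l1 + l3) (by omega) n2 (Rw.trans (h1.mono ?_) (g1.mono ?_))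
    · push_cast at hl; linarith
    · rintro q ⟨_, hq⟩; have := AncK.le hlt hq; simp; omega
    · rintro q ⟨_, hq⟩; have := AncK.le hlt hq; simp; omega

end count
section cover
variable {V : Type} {G : SimpleGraph V} {c : V → V → ℝ}

theorem Rw.lip {f : V → ℕ} {j : ℕ} {t : V → ℝ}
    (ht : ∀ u v, G.Adj u v → j ≤ f u → j ≤ f v → t u ≤ c u v + t v) {x y : V} {l : ℝ}
    (h : Rw G c {v | j ≤ f v} x y l) (hy : j ≤ f y) : t x ≤ l + t y := by
  induction h with
  | nil => simp
  | @cons x y z l hx ha hr ih =>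
    have h1 := ih hy
    have h2 := ht x y ha hx (hr.start_mem hy)
    linarith

/-- all vertices on a short walk are in the ball -/
theorem Rw.ball (hc0 : ∀ x y, 0 ≤ c x y) {v0 : V} {L : ℝ} {x y : V} {l a : ℝ}
    (h0 : Rw G c Set.univ v0 x a)
    (h : Rw G c Set.univ x y l) (hl : a + l < L) :
    Rw G c {u | ∃ b, b < L ∧ Rw G c Set.univ v0 u b} x y l := by
  induction h generalizing a with
  | nil => exact .nil _
  | @cons x y z l hx ha hr ih =>
    have h1 := hr.nonneg hc0
    have h2 := hc0 x y
    refine .cons ⟨a, by linarith, h0⟩ ha (ih (a := a + c x y) ?_ (by linarith))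
    have := h0.trans (Rw.cons (c := c) (S := Set.univ) (Set.mem_univ x) ha (.nil y))
    simpa using this

theorem cover_of_decomp [Finite V] [Nonempty V] (hc0 : ∀ x y, 0 ≤ c x y)
    (hcs : ∀ x y, c x y = c y x) {K : ℕ → Finset ℕ} {f : V → ℕ} {h : ℕ} {γ ε r : ℝ}
    (hε : 0 < ε) (hε1 : ε ≤ 1) (hr : 0 < r) (hγ : γ * h = ε * r / 8)
    (S : ℕ → ℕ → Set V) (t : ℕ → V → ℝ)
    (hlt : ∀ j, ∀ i ∈ K j, i < j)
    (hcl : ∀ m, ∀ i ∈ K m, ∀ j ∈ K m, i < j → i ∈ K j)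
    (hM : ∀ j, (K j).card + 2 ≤ h)
    (hedge : ∀ a b, G.Adj a b → f a < f b → f a ∈ K (f b))
    (hbuf : ∀ x z l, f z < f x → f z ∉ K (f x) → Rw G c {v | f z ≤ f v} x z l → γ ≤ l)
    (ht : ∀ j u v, G.Adj u v → j ≤ f u → j ≤ f v → t j u ≤ c u v + t j v)
    (hgeo : ∀ j k y y', y ∈ S j k → y' ∈ S j k → Rw G c {v | j ≤ f v} y y' |t j y - t j y'|)
    (hS : ∀ j k y, y ∈ S j k → f y = j ∧ k ∈ insert j (K j))
    (hrad : ∀ a, ∃ k s l, s ∈ S (f a) k ∧ Rw G c {v | f a ≤ f v} a s l ∧ l ≤ γ * h) :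
    ∃ 𝒟 : Set (Set V),
      (∀ v, ∃ A ∈ 𝒟, ∀ u l, l < (1 + ε / 16) * r → Rw G c Set.univ v u l → u ∈ A) ∧
      (∀ A ∈ 𝒟, ∀ u ∈ A, ∀ v ∈ A, ∃ l, l ≤ (4 + ε) * r ∧ Rw G c Set.univ u v l) ∧
      (∀ v : V, ({A | A ∈ 𝒟 ∧ v ∈ A}.ncard : ℝ) ≤
        ((h - 2 + 2 * ⌈24 * (h : ℝ) / ε⌉₊).choose (h - 1) : ℝ) *
          (12 + 48 / ε) * ((h : ℝ) - 1)) := by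
  classical
  have hh2 : 2 ≤ h := le_trans (Nat.le_add_left _ _) (hM 0)
  have hhpos : (0 : ℝ) < h := by exact_mod_cast (by omega : 0 < h)
  set D : ℝ := ε * r / 8 with hD
  have hDpos : 0 < D := by positivity
  set L : ℝ := (2 + ε / 2) * r with hL
  have hrep : ∀ j k (b : ℤ), ∃ y, (∃ s ∈ S j k, ⌊t j s / D⌋ = b) → (y ∈ S j k ∧ ⌊t j y / D⌋ = b) := by
    intro j k b
    by_cases hx : ∃ s ∈ S j k, ⌊t j s / D⌋ = b
    · obtain ⟨s, hs⟩ := hx; exact ⟨s, fun _ => hs⟩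
    · exact ⟨Classical.arbitrary V, fun h => absurd h hx⟩
  choose rep hrep using hrep
  let Cl : (Σ _ : ℕ, ℕ × ℤ) → Set V := fun q =>
    {u | ∃ l, l ≤ L ∧ Rw G c {v | q.1 ≤ f v} u (rep q.1 q.2.1 q.2.2) l}
  let Valid : (Σ _ : ℕ, ℕ × ℤ) → Prop := fun q => rep q.1 q.2.1 q.2.2 ∈ S q.1 q.2.1 ∧
    ⌊t q.1 (rep q.1 q.2.1 q.2.2) / D⌋ = q.2.2
  refine ⟨{A | ∃ q, Valid q ∧ A = Cl q}, ?_, ?_, ?_⟩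
  · intro v
    set Bl : Set V := {u | ∃ b, b < (1 + ε / 16) * r ∧ Rw G c Set.univ v u b} with hBl
    have hvB : v ∈ Bl := ⟨0, by positivity, .nil v⟩
    obtain ⟨x, ⟨lx, hlx, hwx⟩, hmin⟩ := Set.exists_min_image Bl f (Set.toFinite _) ⟨v, hvB⟩
    obtain ⟨k, s, l, hs, hws, hl⟩ := hrad x
    set b : ℤ := ⌊t (f x) s / D⌋ with hb
    obtain ⟨hy1, hy2⟩ := hrep (f x) k b ⟨s, hs, rfl⟩
    set y := rep (f x) k b with hy
    refine ⟨_, ⟨⟨f x, k, b⟩, ⟨hy1, hy2⟩, rfl⟩, ?_⟩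
    intro u lu hlu hwu
    have hsub : Bl ⊆ {v | f x ≤ f v} := fun q hq => hmin q hq
    have w1 : Rw G c {v | f x ≤ f v} u v lu :=
      (((Rw.nil v).ball hc0 hwu (by linarith)).mono hsub).symm hcs (hsub ⟨lu, hlu, hwu⟩)
    have w2 : Rw G c {v | f x ≤ f v} v x lx := ((Rw.nil v).ball hc0 hwx (by linarith)).mono hsub
    have w3 := hgeo (f x) k s y hs hy1
    have h3 : |t (f x) s - t (f x) y| ≤ D := by
      have e1 := Int.abs_sub_lt_one_of_floor_eq_floor (hb.symm.trans hy2.symm)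
      rw [← sub_div, abs_div, abs_of_pos hDpos, div_lt_one hDpos] at e1
      exact e1.le
    refine ⟨_, ?_, ((w1.trans w2).trans hws).trans w3⟩
    have : L = 2 * ((1 + ε / 16) * r) + ε * r / 8 + D + ε * r / 8 := by rw [hL, hD]; ring
    have : 0 < ε * r / 8 := hDpos
    linarith
  · rintro A ⟨q, hq, rfl⟩ u ⟨l, hl, hw⟩ v ⟨l', hl', hw'⟩
    refine ⟨l + l', by rw [hL] at hl hl'; linarith, (hw.mono (Set.subset_univ _)).trans
      ((hw'.mono (Set.subset_univ _)).symm hcs (Set.mem_univ _))⟩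
  · intro u
    set N := ⌈24 * (h : ℝ) / ε⌉₊ with hN
    have hN1 : 24 * (h : ℝ) / ε ≤ N := Nat.le_ceil _
    have hNpos : 0 < N := Nat.ceil_pos.2 (by positivity)
    clear_value N
    obtain ⟨m, rfl⟩ : ∃ m, N = m + 1 := ⟨N - 1, by omega⟩
    have hLN : L < (m + 1) * γ := by
      have hγ' : γ = ε * r / 8 / h := by rw [← hD, ← hγ]; field_simp
      have e1 : (24 * (h : ℝ) / ε) * γ = 3 * r := by rw [hγ']; field_simp; ring
      have e2 : 0 < γ := by rw [hγ']; positivity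
      push_cast at hN1
      have e3 := mul_le_mul_of_nonneg_right hN1 e2.le
      rw [e1] at e3
      have : L < 3 * r := by rw [hL]; nlinarith
      linarith
    obtain ⟨F, hF, hFc⟩ := RReach.count K (h - 1) hlt hcl (fun j => by have := hM j; omega)
      (2 * m + 1) (h - 1) 0 (f u) (by omega)
    have hch : (2 * m + 1 + (h - 1)).choose (2 * m + 1) = (h - 2 + 2 * (m + 1)).choose (h - 1) := by
      rw [Nat.choose_symm_add]; congr 1; omega
    rw [hch] at hFc
    let Fin1 : Finset (Σ _ : ℕ, ℕ × ℤ) := F.sigma (fun j => (insert j (K j)) ×ˢ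
      Finset.Icc ⌊(t j u - L) / D⌋ ⌊(t j u + L) / D⌋)
    have hsub : {A | A ∈ {A | ∃ q, Valid q ∧ A = Cl q} ∧ u ∈ A} ⊆ (Fin1.image Cl : Finset (Set V)) := by
      rintro A ⟨⟨⟨j, k, b⟩, ⟨hq1, hq2⟩, rfl⟩, l, hl, hw⟩
      simp only at hq1 hq2 hl hw
      rw [Finset.mem_coe, Finset.mem_image]
      refine ⟨⟨j, k, b⟩, ?_, rfl⟩
      obtain ⟨hy1, hy2⟩ := hS _ _ _ hq1
      set y := rep j k b with hy
      have hju : j ≤ f u := hw.start_mem (by simp [hy1])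
      have l1 : t j u ≤ l + t j y := hw.lip (ht j) hy1.ge
      have l2 : t j y ≤ l + t j u := (hw.symm hcs (by simp [hy1])).lip (ht j) hju
      rw [Finset.mem_sigma]
      refine ⟨?_, ?_⟩
      · have := walk_reach hlt hcl hc0 hedge hbuf m (f u) u y l (by rw [hy1]; exact hw) .refl
          (by rw [hy1]; exact hju) (by linarith)
        rw [hy1] at this
        exact hF j this (Nat.zero_le _)
      · simp only [Finset.mem_product, Finset.mem_Icc]
        refine ⟨hy2, ?_, ?_⟩
        · rw [← hq2]; apply Int.floor_le_floor; gcongr; linarith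
        · rw [← hq2]; apply Int.floor_le_floor; gcongr; linarith
    have h1 : {A | A ∈ {A | ∃ q, Valid q ∧ A = Cl q} ∧ u ∈ A}.ncard ≤ Fin1.card := by
      calc _ ≤ ((Fin1.image Cl : Finset (Set V)) : Set (Set V)).ncard :=
            Set.ncard_le_ncard hsub (Finset.finite_toSet _)
        _ ≤ _ := by rw [Set.ncard_coe_finset]; exact Finset.card_image_le
    have h2 : (Fin1.card : ℝ) ≤ F.card * (((h : ℝ) - 1) * (12 + 48 / ε)) := by
      rw [Finset.card_sigma]
      push_cast
      rw [← nsmul_eq_mul]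
      apply Finset.sum_le_card_nsmul
      intro j _
      rw [Finset.card_product]
      push_cast
      have hh1 : (0 : ℝ) ≤ (h : ℝ) - 1 := by
        have : (1 : ℝ) ≤ h := by exact_mod_cast (by omega : 1 ≤ h)
        linarith
      apply mul_le_mul _ _ (by positivity) hh1
      · have e1 := Finset.card_insert_le j (K j)
        have e2 := hM j
        have : ((insert j (K j)).card : ℝ) + 1 ≤ h := by exact_mod_cast (by omega)
        linarith
      · rw [Int.card_Icc]
        have e0 : (t j u + L) / D = (t j u - L) / D + (32 / ε + 8) := by
          rw [hL, hD]; field_simp; ring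
        have e1 := Int.floor_le ((t j u + L) / D)
        have e2 := Int.lt_floor_add_one ((t j u - L) / D)
        have e3 : ((⌊(t j u + L) / D⌋ + 1 - ⌊(t j u - L) / D⌋ : ℤ) : ℝ) ≤ 32 / ε + 10 := by
          push_cast; linarith
        have e4 : 32 / ε + 10 ≤ 12 + 48 / ε := by
          have : 32 / ε ≤ 48 / ε := by gcongr; norm_num
          linarith
        have e5 : 0 ≤ 12 + 48 / ε := by positivity
        rcases le_total 0 (⌊(t j u + L) / D⌋ + 1 - ⌊(t j u - L) / D⌋) with h6 | h6
        · have := Int.toNat_of_nonneg h6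
          have e7 : (((⌊(t j u + L) / D⌋ + 1 - ⌊(t j u - L) / D⌋).toNat : ℤ) : ℝ) ≤ 12 + 48 / ε := by
            rw [this]; linarith
          exact_mod_cast e7
        · rw [Int.toNat_of_nonpos h6]; simpa using e5
    have h3 : (F.card : ℝ) ≤ ((h - 2 + 2 * (m + 1)).choose (h - 1) : ℝ) := by exact_mod_cast hFc
    have hh1 : (0 : ℝ) ≤ (h : ℝ) - 1 := by
        have : (1 : ℝ) ≤ h := by exact_mod_cast (by omega : 1 ≤ h)
        linarith
    calc _ ≤ (Fin1.card : ℝ) := by exact_mod_cast h1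
      _ ≤ _ := h2
      _ ≤ ((h - 2 + 2 * (m + 1)).choose (h - 1) : ℝ) * (((h : ℝ) - 1) * (12 + 48 / ε)) := by
        gcongr
      _ = _ := by ring
end cover
section build
variable {V : Type}

structure CSt (V : Type) where
  A : Set V
  f : V → ℕ
  n : ℕ
  K : ℕ → Finset ℕ
  κ : V → Finset ℕ
  S : ℕ → ℕ → Set V
  t : ℕ → V → ℝ
  root : ℕ → V

namespace CSt

def part (σ : CSt V) (j : ℕ) : Set V := {v | v ∈ σ.A ∧ σ.f v = j}
def allow (σ : CSt V) (j : ℕ) : Set V := {v | v ∈ σ.A → j ≤ σ.f v}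
def good (σ : CSt V) (R : Set V) (i : ℕ) : Prop :=
  ∀ v ∈ R, (v ∈ σ.A → σ.f v ≠ i) ∧ (v ∉ σ.A → i ∉ σ.κ v)
def buf (σ : CSt V) (G : SimpleGraph V) (c : V → V → ℝ) (γ : ℝ) (i : ℕ) (x : V) : Prop :=
  ∃ R : Set V, x ∈ R ∧ σ.good R i ∧
    ∀ z l, z ∉ R → z ∈ σ.allow i → Rw G c (σ.allow i) x z l → γ ≤ l
def Rad (σ : CSt V) (G : SimpleGraph V) (c : V → V → ℝ) (a : V) (ρ : ℝ) : Prop :=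
  ∃ k s l, s ∈ σ.S (σ.f a) k ∧ Rw G c (σ.part (σ.f a)) a s l ∧ l ≤ ρ

structure Inv (σ : CSt V) (G : SimpleGraph V) (c : V → V → ℝ) (γ : ℝ) (h : ℕ) : Prop where
  f_lt : ∀ a ∈ σ.A, σ.f a < σ.n
  κ_lt : ∀ u ∉ σ.A, ∀ i ∈ σ.κ u, i < σ.n
  K_lt : ∀ j, ∀ i ∈ σ.K j, i < j
  K_out : ∀ j, σ.n ≤ j → σ.K j = ∅
  uu : ∀ u ∉ σ.A, ∀ v ∉ σ.A, G.Adj u v → σ.κ u = σ.κ v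
  ua : ∀ u ∉ σ.A, ∀ a ∈ σ.A, G.Adj u a → σ.f a ∈ σ.κ u
  aa : ∀ a ∈ σ.A, ∀ b ∈ σ.A, G.Adj a b → σ.f a < σ.f b → σ.f a ∈ σ.K (σ.f b)
  clκ : ∀ u ∉ σ.A, ∀ i ∈ σ.κ u, ∀ j ∈ σ.κ u, i < j → i ∈ σ.K j
  clK : ∀ m, ∀ i ∈ σ.K m, ∀ j ∈ σ.K m, i < j → i ∈ σ.K j
  Kadj : ∀ j, ∀ i ∈ σ.K j, ∃ a ∈ σ.part i, ∃ b ∈ σ.part j, G.Adj a b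
  Kcard : ∀ j < σ.n, (σ.K j).card + 2 ≤ h
  bufU : ∀ u ∉ σ.A, ∀ i < σ.n, i ∉ σ.κ u → σ.buf G c γ i u
  bufA : ∀ x ∈ σ.A, ∀ i < σ.f x, i ∉ σ.K (σ.f x) → σ.buf G c γ i x
  lip : ∀ j < σ.n, ∀ u ∈ σ.allow j, ∀ v ∈ σ.allow j, G.Adj u v → σ.t j u ≤ c u v + σ.t j v
  geo : ∀ j < σ.n, ∀ k, ∀ y ∈ σ.S j k, ∀ y' ∈ σ.S j k,
    Rw G c (σ.part j) y y' |σ.t j y - σ.t j y'|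
  Ssub : ∀ j < σ.n, ∀ k, ∀ y ∈ σ.S j k, y ∈ σ.part j ∧ k ∈ insert j (σ.K j)
  rad : ∀ a ∈ σ.A, σ.Rad G c a (γ * (σ.K (σ.f a)).card)
  radb : ∀ a ∈ σ.A, ∀ u ∉ σ.A, G.Adj u a → σ.Rad G c a (γ * (σ.K (σ.f a) \ σ.κ u).card)
  rootm : ∀ j < σ.n, σ.root j ∈ σ.part j ∧ ∀ a ∈ σ.part j, ∃ l, Rw G c (σ.part j) a (σ.root j) l

/-- component of u0 among unassigned -/
def comp (σ : CSt V) (G : SimpleGraph V) (c : V → V → ℝ) (u0 : V) : Set V :=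
  {v | v ∉ σ.A ∧ ∃ l, Rw G c σ.Aᶜ v u0 l}

variable {G : SimpleGraph V} {c : V → V → ℝ} {γ : ℝ} {h : ℕ} {σ : CSt V}

theorem comp_adj {u0 u v : V} (hu : u ∈ σ.comp G c u0) (hv : v ∉ σ.A) (ha : G.Adj u v) :
    v ∈ σ.comp G c u0 := by
  obtain ⟨h1, l, hl⟩ := hu
  exact ⟨hv, _, .cons hv ha.symm hl⟩

theorem comp_walk {u0 v : V} {l : ℝ} (hu0 : u0 ∉ σ.A) (hl : Rw G c σ.Aᶜ v u0 l) :
    Rw G c (σ.comp G c u0) v u0 l := by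
  induction hl with
  | nil => exact .nil _
  | cons hx ha hr ih => exact .cons ⟨hx, _, .cons hx ha hr⟩ ha (ih hu0)

theorem comp_κ (hI : σ.Inv G c γ h) {u0 v : V} (hu0 : u0 ∉ σ.A) (hv : v ∈ σ.comp G c u0) :
    σ.κ v = σ.κ u0 := by
  obtain ⟨h1, l, hl⟩ := hv
  clear h1
  induction hl with
  | nil => rfl
  | @cons x y z l hx ha hr ih =>
    rw [← ih hu0]
    exact hI.uu x hx y (hr.start_mem hu0) ha

theorem self_comp {u0 : V} (hu0 : u0 ∉ σ.A) : u0 ∈ σ.comp G c u0 := ⟨hu0, 0, .nil _⟩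

open Classical in
/-- growing step -/
theorem grow [Finite V] (hc0 : ∀ x y, 0 ≤ c x y) (hγ : 0 ≤ γ) (hI : σ.Inv G c γ h)
    {u0 : V} (hu0 : u0 ∉ σ.A) {Y : ℕ} (hY : Y ∈ σ.κ u0)
    (hYn : ∀ u ∈ σ.comp G c u0, ∀ a ∈ σ.A, G.Adj u a → σ.f a ≠ Y) :
    ∃ σ' : CSt V, σ'.Inv G c γ h ∧ σ.A ⊆ σ'.A ∧ (∀ v, σ'.κ v ⊆ σ.κ v) ∧
      σ'.κ u0 = (σ.κ u0).erase Y := by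
  set C := σ.comp G c u0 with hC
  set B : Set V := {a | a ∈ σ.A ∧ Y < σ.f a ∧ ∃ u ∈ C, G.Adj u a} with hB
  have hCB : Disjoint C B := Set.disjoint_left.2 fun v hv hb => hv.1 hb.1
  obtain ⟨E0, d, nx, rk, lab, hD, hE0⟩ := dijkstra (G := G) hc0 C B hCB σ.f
  set E : Set V := {v | v ∈ E0 ∧ d v < γ} with hE
  have hEC : E ⊆ C := fun v hv => hD.sub hv.1
  have hCA : ∀ v ∈ C, v ∉ σ.A := fun v hv => hv.1
  have hEA : ∀ v ∈ E, v ∉ σ.A := fun v hv => hCA v (hEC hv)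
  have hAE : ∀ v ∈ σ.A, v ∉ E := fun v hv he => hEA v he hv
  have hκC : ∀ v ∈ C, σ.κ v = σ.κ u0 := fun v hv => comp_κ hI hu0 hv
  have hBκ : ∀ b ∈ B, σ.f b ∈ σ.κ u0 := by
    rintro b ⟨hb, _, u, hu, ha⟩
    rw [← hκC u hu]; exact hI.ua u (hCA u hu) b hb ha
  have hcell : ∀ e ∈ E, ∃ p b, b ∈ B ∧ σ.f b = lab e ∧ p ∈ C ∧ G.Adj p b ∧
      Rw G c {v | v ∈ E ∧ lab v = lab e} e b (d e) := by
    intro e he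
    obtain ⟨p, b, h1, h2, h3, h4, h5⟩ := hD.cell hc0 γ e he.1 he.2
    refine ⟨p, b, h1, h2, hD.sub h3, h4, h5.mono ?_⟩
    exact fun v hv => ⟨⟨hv.1, hv.2.1⟩, hv.2.2⟩
  have hlab : ∀ e ∈ E, lab e ∈ σ.κ u0 ∧ Y < lab e := by
    intro e he
    obtain ⟨p, b, h1, h2, -⟩ := hcell e he
    rw [← h2]; exact ⟨hBκ b h1, h1.2.1⟩
  let σ' : CSt V := { σ with
    A := σ.A ∪ E
    f := fun v => if v ∈ E then lab v else σ.f v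
    κ := fun v => if v ∈ C then (σ.κ v).erase Y else σ.κ v }
  have fE : ∀ v ∈ E, σ'.f v = lab v := fun v hv => if_pos hv
  have fA : ∀ v ∈ σ.A, σ'.f v = σ.f v := fun v hv => if_neg (hAE v hv)
  have κC : ∀ v ∈ C, σ'.κ v = (σ.κ u0).erase Y := fun v hv => by
    rw [← hκC v hv]; exact if_pos hv
  have κN : ∀ v ∉ C, σ'.κ v = σ.κ v := fun v hv => if_neg hv
  have κsub : ∀ v, σ'.κ v ⊆ σ.κ v := by
    intro v
    by_cases hv : v ∈ C
    · rw [κC v hv, hκC v hv]; exact Finset.erase_subset _ _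
    · rw [κN v hv]
  have A' : σ'.A = σ.A ∪ E := rfl
  have hAsub : σ.A ⊆ σ'.A := Set.subset_union_left
  have nA : ∀ v, v ∉ σ'.A → v ∉ σ.A := fun v hv h => hv (hAsub h)
  have partsub : ∀ j, σ.part j ⊆ σ'.part j := fun j v hv => ⟨hAsub hv.1, (fA v hv.1).trans hv.2⟩
  have allowsub : ∀ j, σ'.allow j ⊆ σ.allow j := fun j v hv hA => by
    rw [← fA v hA]; exact hv (hAsub hA)
  -- membership of labels of E
  have fκ : ∀ a ∈ σ'.A, ∀ u ∈ C, (u = a ∨ G.Adj u a) → σ'.f a ∈ σ.κ u0 ∧ (σ'.f a ≠ Y) := by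
    rintro a (ha | ha) u hu hua
    · rw [fA a ha]
      rcases hua with rfl | hua
      · exact absurd ha (hCA _ hu)
      · exact ⟨hκC u hu ▸ hI.ua u (hCA u hu) a ha hua, hYn u hu a ha hua⟩
    · rw [fE a ha]; exact ⟨(hlab a ha).1, (hlab a ha).2.ne'⟩
  have bufmono : ∀ i x, σ.buf G c γ i x → σ'.buf G c γ i x := by
    rintro i x ⟨R, h1, h2, h3⟩
    refine ⟨R, h1, fun v hv => ⟨?_, ?_⟩, fun z l hz hza hw => h3 z l hz (allowsub i hza) (hw.mono (allowsub i))⟩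
    · rintro (hA | hE)
      · rw [fA v hA]; exact (h2 v hv).1 hA
      · rw [fE v hE]
        intro hh
        apply (h2 v hv).2 (hEA v hE)
        rw [hκC v (hEC hE), ← hh]; exact (hlab v hE).1
    · intro hA hh
      exact (h2 v hv).2 (nA v hA) (κsub v hh)
  have radmono : ∀ a ∈ σ.A, ∀ ρ ρ', ρ ≤ ρ' → σ.Rad G c a ρ → σ'.Rad G c a ρ' := by
    rintro a ha ρ ρ' hρ ⟨k, s, l, h1, h2, h3⟩
    refine ⟨k, s, l, ?_, ?_, h3.trans hρ⟩
    · rw [fA a ha]; exact h1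
    · rw [fA a ha]; exact h2.mono (partsub _)
  -- walk from e in part
  have hwalkE : ∀ e ∈ E, ∃ b ∈ σ.A, σ.f b = lab e ∧ (∃ p ∈ C, G.Adj p b) ∧
      Rw G c (σ'.part (lab e)) e b (d e) := by
    intro e he
    obtain ⟨p, b, h1, h2, h3, h4, h5⟩ := hcell e he
    refine ⟨b, h1.1, h2, ⟨p, h3, h4⟩, h5.mono ?_⟩
    exact fun v hv => ⟨Or.inr hv.1, (fE v hv.1).trans hv.2⟩
  have hradE : ∀ e ∈ E, σ'.Rad G c e (γ * (σ.K (lab e) \ (σ.κ u0).erase Y).card) := by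
    intro e he
    obtain ⟨b, hb, h2, ⟨p, hp, hpb⟩, hw⟩ := hwalkE e he
    obtain ⟨k, s, l, g1, g2, g3⟩ := hI.radb b hb p (hCA p hp) hpb
    refine ⟨k, s, d e + l, ?_, ?_, ?_⟩
    · rw [fE e he, ← h2]; exact g1
    · rw [fE e he]
      refine hw.trans ?_
      rw [h2] at g2
      exact g2.mono (partsub _)
    · rw [h2, hκC p hp] at g3
      have hYK : Y ∈ σ.K (lab e) := hI.clκ u0 hu0 Y hY _ (hlab e he).1 (hlab e he).2
      have hcard : (σ.K (lab e) \ σ.κ u0).card + 1 ≤ (σ.K (lab e) \ (σ.κ u0).erase Y).card := by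
        apply Finset.card_lt_card
        refine ⟨fun x hx => ?_, fun hh => ?_⟩
        · simp only [Finset.mem_sdiff, Finset.mem_erase] at hx ⊢; tauto
        · have := hh (Finset.mem_sdiff.2 ⟨hYK, Finset.notMem_erase _ _⟩)
          exact (Finset.mem_sdiff.1 this).2 hY
      have hcard' : ((σ.K (lab e) \ σ.κ u0).card : ℝ) + 1 ≤ (σ.K (lab e) \ (σ.κ u0).erase Y).card := by
        exact_mod_cast hcard
      have := he.2
      nlinarith
  refine ⟨σ', ?_, hAsub, κsub, κC u0 (self_comp hu0)⟩
  constructor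
  · -- f_lt
    rintro a (ha | ha)
    · rw [fA a ha]; exact hI.f_lt a ha
    · rw [fE a ha]; exact hI.κ_lt u0 hu0 _ (hlab a ha).1
  · intro u hu i hi
    exact hI.κ_lt u (nA u hu) i (κsub u hi)
  · exact hI.K_lt
  · exact hI.K_out
  · -- uu
    intro u hu v hv ha
    by_cases huC : u ∈ C
    · rw [κC u huC, κC v (comp_adj huC (nA v hv) ha)]
    · by_cases hvC : v ∈ C
      · exact absurd (comp_adj hvC (nA u hu) ha.symm) huC
      · rw [κN u huC, κN v hvC]; exact hI.uu u (nA u hu) v (nA v hv) ha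
  · -- ua
    intro u hu a ha hua
    by_cases huC : u ∈ C
    · rw [κC u huC, Finset.mem_erase]
      have := fκ a ha u huC (Or.inr hua)
      exact ⟨this.2, this.1⟩
    · rw [κN u huC]
      rcases ha with ha | ha
      · rw [fA a ha]; exact hI.ua u (nA u hu) a ha hua
      · exact absurd (comp_adj (hEC ha) (nA u hu) hua.symm) huC
  · -- aa
    have hcl2 : ∀ a ∈ σ'.A, ∀ b ∈ σ'.A, ∀ u ∈ C, (u = a ∨ G.Adj u a) → (u = b ∨ G.Adj u b) →
        σ'.f a < σ'.f b → σ'.f a ∈ σ.K (σ'.f b) := by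
      intro a ha b hb u hu h1 h2 hlt
      exact hI.clκ u0 hu0 _ (fκ a ha u hu h1).1 _ (fκ b hb u hu h2).1 hlt
    intro a ha b hb hab hlt
    by_cases haE : a ∈ E
    · exact hcl2 a ha b hb a (hEC haE) (Or.inl rfl) (Or.inr hab) hlt
    · by_cases hbE : b ∈ E
      · exact hcl2 a ha b hb b (hEC hbE) (Or.inr hab.symm) (Or.inl rfl) hlt
      · have ha' : a ∈ σ.A := ha.resolve_right haE
        have hb' : b ∈ σ.A := hb.resolve_right hbE
        rw [fA a ha', fA b hb'] at hlt ⊢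
        exact hI.aa a ha' b hb' hab hlt
  · -- clκ
    intro u hu i hi j hj hij
    exact hI.clκ u (nA u hu) i (κsub u hi) j (κsub u hj) hij
  · exact hI.clK
  · intro j i hi
    obtain ⟨a, ha, b, hb, hab⟩ := hI.Kadj j i hi
    exact ⟨a, partsub _ ha, b, partsub _ hb, hab⟩
  · exact hI.Kcard
  · -- bufU
    intro u hu i hi hiu
    by_cases hiu' : i ∈ σ.κ u
    · have huC : u ∈ C := by
        by_contra huC
        rw [κN u huC] at hiu; exact hiu hiu'
      have hiY : i = Y := by
        by_contra hne
        apply hiu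
        rw [κC u huC, Finset.mem_erase]
        exact ⟨hne, hκC u huC ▸ hiu'⟩
      subst hiY
      refine ⟨C, huC, fun v hv => ⟨?_, ?_⟩, ?_⟩
      · rintro hA
        exact (fκ v hA v hv (Or.inl rfl)).2
      · intro _; rw [κC v hv]; exact Finset.notMem_erase _ _
      · intro z l hz hza hw
        obtain ⟨p, y, l1, l2, h1, h2, h3, h3', h4, h5, h6⟩ := hw.exit huC hz
        have hya : y ∈ σ'.allow i := h5.start_mem hza
        have hyA : y ∈ σ.A := by
          by_contra hyA
          exact h2 (comp_adj h3 hyA h4)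
        have hyi : i ≤ σ.f y := allowsub i hya hyA
        have hyB : y ∈ B := ⟨hyA, lt_of_le_of_ne hyi (hYn p h3 y hyA h4).symm, p, h3, h4⟩
        have h7 : Rw G c C u y l1 := h1.mono Set.inter_subset_right
        have h8 : 0 ≤ l2 := h5.nonneg hc0
        have huE0 : u ∈ E0 := by
          by_contra hc
          exact hE0 u huC hc y hyB l1 h7
        have h9 := hD.opt u huE0 y hyB l1 h7
        have h10 : γ ≤ d u := by
          by_contra hlt
          exact hu (Or.inr ⟨huE0, not_le.1 hlt⟩)
        linarith
    · exact bufmono i u (hI.bufU u (nA u hu) i hi hiu')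
  · -- bufA
    rintro x (hx | hx) i hi hiK
    · rw [fA x hx] at hi hiK
      exact bufmono i x (hI.bufA x hx i hi hiK)
    · rw [fE x hx] at hi hiK
      apply bufmono i x
      refine hI.bufU x (hEA x hx) i (hi.trans (hI.κ_lt u0 hu0 _ (hlab x hx).1)) ?_
      rw [hκC x (hEC hx)]
      intro hh
      exact hiK (hI.clκ u0 hu0 i hh _ (hlab x hx).1 hi)
  · intro j hj u hu v hv ha
    exact hI.lip j hj u (allowsub j hu) v (allowsub j hv) ha
  · intro j hj k y hy y' hy'
    exact (hI.geo j hj k y hy y' hy').mono (partsub j)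
  · intro j hj k y hy
    have := hI.Ssub j hj k y hy
    exact ⟨partsub j this.1, this.2⟩
  · -- rad
    rintro a (ha | ha)
    · refine radmono a ha _ _ ?_ (hI.rad a ha)
      rw [fA a ha]
    · obtain ⟨k, s, l, g1, g2, g3⟩ := hradE a ha
      refine ⟨k, s, l, g1, g2, g3.trans ?_⟩
      rw [fE a ha]
      have : ((σ.K (lab a) \ (σ.κ u0).erase Y).card : ℝ) ≤ (σ.K (lab a)).card := by
        exact_mod_cast Finset.card_le_card Finset.sdiff_subset
      exact mul_le_mul_of_nonneg_left this hγ
  · -- radb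
    rintro a (ha | ha) u hu hua
    · refine radmono a ha _ _ ?_ (hI.radb a ha u (nA u hu) hua)
      rw [fA a ha]
      have : ((σ.K (σ.f a) \ σ.κ u).card : ℝ) ≤ (σ.K (σ.f a) \ σ'.κ u).card := by
        exact_mod_cast Finset.card_le_card (Finset.sdiff_subset_sdiff le_rfl (κsub u))
      exact mul_le_mul_of_nonneg_left this hγ
    · have huC : u ∈ C := comp_adj (hEC ha) (nA u hu) hua.symm
      rw [fE a ha, κC u huC]
      exact hradE a ha
  · -- root
    intro j hj
    obtain ⟨h1, h2⟩ := hI.rootm j hj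
    refine ⟨partsub j h1, ?_⟩
    rintro a ⟨ha | ha, hfa⟩
    · rw [fA a ha] at hfa
      obtain ⟨l, hl⟩ := h2 a ⟨ha, hfa⟩
      exact ⟨l, hl.mono (partsub j)⟩
    · rw [fE a ha] at hfa
      obtain ⟨b, hb, h3, -, hw⟩ := hwalkE a ha
      obtain ⟨l, hl⟩ := h2 b ⟨hb, h3.trans hfa⟩
      rw [hfa] at hw
      exact ⟨_, hw.trans (hl.mono (partsub j))⟩

theorem spt [Finite V] (hc0 : ∀ x y, 0 ≤ c x y) (hcs : ∀ x y, c x y = c y x) (C : Set V) {u0 : V}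
    (hu0 : u0 ∈ C) (hconn : ∀ v ∈ C, ∃ l, Rw G c C v u0 l) :
    ∃ t : V → ℝ, (∀ u ∈ C, ∀ v ∈ C, G.Adj u v → t u ≤ c u v + t v) ∧
      ∀ v ∈ C, ∃ P : Set V, P ⊆ C ∧ v ∈ P ∧ u0 ∈ P ∧
        ∀ y ∈ P, ∀ y' ∈ P, Rw G c P y y' |t y - t y'| := by
  obtain ⟨E, d, nx, rk, lab, hD, hE⟩ := dijkstra (G := G) hc0 (C \ {u0}) {u0}
    (Set.disjoint_left.2 fun v hv hb => hv.2 hb) (fun _ => 0)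
  have hshort : ∀ v ∈ C, v ≠ u0 → ∀ l, Rw G c C v u0 l → ∃ l1 ≤ l, Rw G c (C \ {u0}) v u0 l1 := by
    intro v hv hne l hl
    obtain ⟨p, y, l1, l2, h1, h2, h3, h3', h4, h5, h6⟩ :=
      hl.exit (R := {u0}ᶜ) hne (by simp)
    have : y = u0 := by simpa using h2
    subst this
    exact ⟨l1, by linarith [h5.nonneg hc0], h1⟩
  have hmem : ∀ v ∈ C, v ≠ u0 → v ∈ E := by
    intro v hv hne
    by_contra hvE
    obtain ⟨l, hl⟩ := hconn v hv
    obtain ⟨l1, -, h1⟩ := hshort v hv hne l hl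
    exact hE v ⟨hv, hne⟩ hvE u0 rfl l1 h1
  have hd0 : d u0 = 0 := hD.d0 u0 rfl
  have hEC : E ⊆ C := fun v hv => (hD.sub hv).1
  have hwalk : ∀ v ∈ C, Rw G c C v u0 (d v) := by
    intro v hv
    by_cases hne : v = u0
    · subst hne; rw [hd0]; exact .nil _
    · obtain ⟨S, h1, h2, h3, h4, h5, h6⟩ := hD.geod hc0 v (hmem v hv hne)
      have := h5 u0 h2
      rw [hd0, sub_zero] at this
      exact this.mono (h3.trans (Set.insert_subset hu0 hEC))
  refine ⟨d, ?_, ?_⟩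
  · intro u hu v hv ha
    by_cases hne : u = u0
    · rw [hne, hd0]
      exact add_nonneg (hc0 _ _) ((hwalk v hv).nonneg hc0)
    · obtain ⟨l1, h1, h2⟩ := hshort u hu hne _ (.cons hu ha (hwalk v hv))
      exact (hD.opt u (hmem u hu hne) u0 rfl l1 h2).trans h1
  · intro v hv
    by_cases hne : v = u0
    · subst hne
      refine ⟨{v}, by simpa using hv, rfl, rfl, ?_⟩
      intro y hy y' hy'
      rw [Set.mem_singleton_iff.1 hy, Set.mem_singleton_iff.1 hy', sub_self, abs_zero]
      exact .nil _
    · obtain ⟨S, h1, h2, h3, h4, h5, h6⟩ := hD.geod hc0 v (hmem v hv hne)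
      refine ⟨S, h3.trans (Set.insert_subset hu0 hEC), h1, h2, ?_⟩
      intro y hy y' hy'
      rcases h6 y hy y' hy' with h | h
      · exact h
      · exact h.symm hcs hy

theorem rw_reach {S : Set V} {x y : V} {l : ℝ} (hr : Rw G c S x y l) (hx : x ∈ S) (hy : y ∈ S) :
    (G.induce S).Reachable ⟨x, hx⟩ ⟨y, hy⟩ := by
  induction hr with
  | nil => exact .refl _
  | @cons x y z l hx' ha hr ih =>
    have hyS := hr.start_mem hy
    refine .trans (SimpleGraph.Adj.reachable ?_) (ih hyS hy)
    exact ha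

theorem rw_conn {S : Set V} {x0 : V} (hx0 : x0 ∈ S) (hS : ∀ v ∈ S, ∃ l, Rw G c S v x0 l) :
    (G.induce S).Connected := by
  rw [SimpleGraph.connected_iff_exists_forall_reachable]
  refine ⟨⟨x0, hx0⟩, ?_⟩
  rintro ⟨v, hv⟩
  obtain ⟨l, hl⟩ := hS v hv
  exact (rw_reach hl hv hx0).symm

theorem minor_of_finset {ι : Type} (s : Finset ι) (B : ι → Set V) (hs : h ≤ s.card)
    (h1 : ∀ i ∈ s, (G.induce (B i)).Connected)
    (h2 : ∀ i ∈ s, ∀ j ∈ s, i ≠ j → Disjoint (B i) (B j))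
    (h3 : ∀ i ∈ s, ∀ j ∈ s, i ≠ j → ∃ u ∈ B i, ∃ v ∈ B j, G.Adj u v) :
    HasCompleteMinor G h := by
  let e : Fin h → ι := fun i => (s.equivFin.symm (Fin.castLE hs i)).1
  have he : ∀ i, e i ∈ s := fun i => (s.equivFin.symm (Fin.castLE hs i)).2
  have hinj : ∀ i j, i ≠ j → e i ≠ e j := by
    intro i j hij hh
    have := s.equivFin.symm.injective (Subtype.ext hh)
    exact hij (Fin.castLE_injective hs this)
  exact ⟨fun i => B (e i), fun i => h1 _ (he i), fun i j hij => h2 _ (he i) _ (he j) (hinj i j hij),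
    fun i j hij => h3 _ (he i) _ (he j) (hinj i j hij)⟩

theorem κ_card (hI : σ.Inv G c γ h) {u0 : V} (hu0 : u0 ∉ σ.A) (hm : ¬ HasCompleteMinor G h)
    (hadj : ∀ Y ∈ σ.κ u0, ∃ u ∈ σ.comp G c u0, ∃ a ∈ σ.A, G.Adj u a ∧ σ.f a = Y) :
    (σ.κ u0).card + 2 ≤ h := by
  by_contra hlt
  apply hm
  let B : Option ℕ → Set V := fun o => o.elim (σ.comp G c u0) σ.part
  have hij : ∀ i ∈ σ.κ u0, ∀ j ∈ σ.κ u0, i < j → ∃ u ∈ σ.part i, ∃ v ∈ σ.part j, G.Adj u v :=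
    fun i hi j hj hlt => hI.Kadj j i (hI.clκ u0 hu0 i hi j hj hlt)
  refine minor_of_finset (Finset.insertNone (σ.κ u0)) B (by rw [Finset.card_insertNone]; omega)
    ?_ ?_ ?_
  · rintro (_ | i) hi
    · exact rw_conn (self_comp hu0) fun v hv => hv.2.imp fun l hl => comp_walk hu0 hl
    · have := hI.rootm i (hI.κ_lt u0 hu0 i (Finset.some_mem_insertNone.1 hi))
      exact rw_conn this.1 this.2
  · rintro (_ | i) hi (_ | j) hj hne
    · exact absurd rfl hne
    · exact Set.disjoint_left.2 fun v hv hv' => hv.1 hv'.1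
    · exact Set.disjoint_left.2 fun v hv hv' => hv'.1 hv.1
    · refine Set.disjoint_left.2 fun v hv hv' => hne ?_
      rw [← hv.2, ← hv'.2]
  · rintro (_ | i) hi (_ | j) hj hne
    · exact absurd rfl hne
    · obtain ⟨u, hu, a, ha, hua, hf⟩ := hadj j (Finset.some_mem_insertNone.1 hj)
      exact ⟨u, hu, a, ⟨ha, hf⟩, hua⟩
    · obtain ⟨u, hu, a, ha, hua, hf⟩ := hadj i (Finset.some_mem_insertNone.1 hi)
      exact ⟨a, ⟨ha, hf⟩, u, hu, hua.symm⟩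
    · have hi' := Finset.some_mem_insertNone.1 hi
      have hj' := Finset.some_mem_insertNone.1 hj
      rcases lt_trichotomy i j with hl | hl | hl
      · exact hij i hi' j hj' hl
      · exact absurd (congrArg some hl) hne
      · obtain ⟨u, hu, v, hv, huv⟩ := hij j hj' i hi' hl
        exact ⟨v, hv, u, hu, huv.symm⟩

open Classical in
/-- creating a new part -/
theorem create [Finite V] (hc0 : ∀ x y, 0 ≤ c x y) (hcs : ∀ x y, c x y = c y x) (hγ : 0 ≤ γ)
    (hI : σ.Inv G c γ h) {u0 : V} (hu0 : u0 ∉ σ.A) (hcard : (σ.κ u0).card + 2 ≤ h)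
    (hadj : ∀ Y ∈ σ.κ u0, ∃ u ∈ σ.comp G c u0, ∃ a ∈ σ.A, G.Adj u a ∧ σ.f a = Y) :
    ∃ σ' : CSt V, σ'.Inv G c γ h ∧ σ.A ⊆ σ'.A ∧ u0 ∈ σ'.A := by
  set C := σ.comp G c u0 with hC
  have hu0C : u0 ∈ C := self_comp hu0
  obtain ⟨t0, hlip, hP⟩ := spt hc0 hcs C hu0C
    fun v hv => hv.2.imp fun l hl => comp_walk hu0 hl
  have hP' : ∀ v, ∃ P : Set V, v ∈ C → P ⊆ C ∧ v ∈ P ∧ u0 ∈ P ∧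
        ∀ y ∈ P, ∀ y' ∈ P, Rw G c P y y' |t0 y - t0 y'| := by
    intro v
    by_cases hv : v ∈ C
    · obtain ⟨P, h⟩ := hP v hv; exact ⟨P, fun _ => h⟩
    · exact ⟨∅, fun h => absurd h hv⟩
  choose P hP using hP'
  have hx : ∀ Y, ∃ u, Y ∈ σ.κ u0 → u ∈ C ∧ ∃ a ∈ σ.A, G.Adj u a ∧ σ.f a = Y := by
    intro Y
    by_cases hY : Y ∈ σ.κ u0
    · obtain ⟨u, h⟩ := hadj Y hY; exact ⟨u, fun _ => h⟩
    · exact ⟨u0, fun h => absurd h hY⟩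
  choose x hx using hx
  have hκn : ∀ u ∉ σ.A, σ.n ∉ σ.κ u := fun u hu hh => lt_irrefl _ (hI.κ_lt u hu _ hh)
  let Sn : ℕ → Set V := fun k => {v | (k = σ.n ∧ v = u0) ∨ (k ∈ σ.κ u0 ∧ v ∈ P (x k))}
  let T : Set V := {v | ∃ k, v ∈ Sn k}
  have hSnT : ∀ k, Sn k ⊆ T := fun k v hv => ⟨k, hv⟩
  have hTC : T ⊆ C := by
    rintro v ⟨k, ⟨-, rfl⟩ | ⟨hk, hv⟩⟩
    · exact hu0C
    · exact (hP _ (hx k hk).1).1 hv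
  have hu0T : u0 ∈ T := ⟨σ.n, Or.inl ⟨rfl, rfl⟩⟩
  have hSgeo : ∀ k, ∀ y ∈ Sn k, ∀ y' ∈ Sn k, Rw G c T y y' |t0 y - t0 y'| := by
    rintro k y (⟨hk, rfl⟩ | ⟨hk, hy⟩) y' (⟨hk', hy'⟩ | ⟨hk', hy'⟩)
    · subst hy'; simpa using Rw.nil y'
    · rw [hk] at hk'; exact absurd hk' (hκn _ hu0)
    · rw [hk'] at hk; exact absurd hk (hκn _ hu0)
    · refine ((hP _ (hx k hk).1).2.2.2 y hy y' hy').mono ?_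
      exact fun v hv => ⟨k, Or.inr ⟨hk, hv⟩⟩
  have hTroot : ∀ v ∈ T, ∃ l, Rw G c T v u0 l := by
    rintro v ⟨k, hv⟩
    refine ⟨_, hSgeo k v hv u0 ?_⟩
    rcases hv with ⟨hk, -⟩ | ⟨hk, -⟩
    · exact Or.inl ⟨hk, rfl⟩
    · exact Or.inr ⟨hk, (hP _ (hx k hk).1).2.2.1⟩
  have hCA : ∀ v ∈ C, v ∉ σ.A := fun v hv => hv.1
  have hTA : ∀ v ∈ T, v ∉ σ.A := fun v hv => hCA v (hTC hv)
  have hAT : ∀ v ∈ σ.A, v ∉ T := fun v hv he => hTA v he hv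
  have hκC : ∀ v ∈ C, σ.κ v = σ.κ u0 := fun v hv => comp_κ hI hu0 hv
  let σ' : CSt V :=
    { A := σ.A ∪ T
      f := fun v => if v ∈ T then σ.n else σ.f v
      n := σ.n + 1
      K := fun j => if j = σ.n then σ.κ u0 else σ.K j
      κ := fun v => if v ∈ C then insert σ.n (σ.κ u0) else σ.κ v
      S := fun j => if j = σ.n then Sn else σ.S j
      t := fun j => if j = σ.n then (fun v => if v ∈ C then t0 v else 0) else σ.t j
      root := fun j => if j = σ.n then u0 else σ.root j }
  have fT : ∀ v ∈ T, σ'.f v = σ.n := fun v hv => if_pos hv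
  have fA : ∀ v ∈ σ.A, σ'.f v = σ.f v := fun v hv => if_neg (hAT v hv)
  have κC : ∀ v ∈ C, σ'.κ v = insert σ.n (σ.κ u0) := fun v hv => if_pos hv
  have κN : ∀ v ∉ C, σ'.κ v = σ.κ v := fun v hv => if_neg hv
  have Kn : σ'.K σ.n = σ.κ u0 := if_pos rfl
  have Kj : ∀ j, j ≠ σ.n → σ'.K j = σ.K j := fun j hj => if_neg hj
  have Snn : σ'.S σ.n = Sn := if_pos rfl
  have Sj : ∀ j, j ≠ σ.n → σ'.S j = σ.S j := fun j hj => if_neg hj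
  have tn : σ'.t σ.n = fun v => if v ∈ C then t0 v else 0 := if_pos rfl
  have tj : ∀ j, j ≠ σ.n → σ'.t j = σ.t j := fun j hj => if_neg hj
  have rn : σ'.root σ.n = u0 := if_pos rfl
  have rj : ∀ j, j ≠ σ.n → σ'.root j = σ.root j := fun j hj => if_neg hj
  have n' : σ'.n = σ.n + 1 := rfl
  have hPT : ∀ i ∈ σ.κ u0, x i ∈ T := fun i hi => ⟨i, Or.inr ⟨hi, (hP _ (hx i hi).1).2.1⟩⟩
  have hSk : ∀ k, ∀ y ∈ Sn k, k ∈ insert σ.n (σ.κ u0) := by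
    rintro k y (⟨hk, -⟩ | ⟨hk, -⟩)
    · rw [hk]; exact Finset.mem_insert_self _ _
    · exact Finset.mem_insert_of_mem hk
  have hfne : ∀ a ∈ σ.A, σ.f a ≠ σ.n := fun a ha => (hI.f_lt a ha).ne
  have κmem : ∀ v ∉ σ.A, ∀ i, i ≠ σ.n → (i ∈ σ'.κ v ↔ i ∈ σ.κ v) := by
    intro v hv i hi
    by_cases hvC : v ∈ C
    · rw [κC v hvC, hκC v hvC, Finset.mem_insert]; simp [hi]
    · rw [κN v hvC]
  have κnC : ∀ v ∉ σ.A, σ.n ∈ σ'.κ v → v ∈ C := by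
    intro v hv hn
    by_contra hvC
    rw [κN v hvC] at hn; exact hκn v hv hn
  have hAsub : σ.A ⊆ σ'.A := Set.subset_union_left
  have hTsub : T ⊆ σ'.A := Set.subset_union_right
  have nA : ∀ v, v ∉ σ'.A → v ∉ σ.A := fun v hv h => hv (hAsub h)
  have partsub : ∀ j, σ.part j ⊆ σ'.part j := fun j v hv => ⟨hAsub hv.1, (fA v hv.1).trans hv.2⟩
  have partT : T ⊆ σ'.part σ.n := fun v hv => ⟨hTsub hv, fT v hv⟩
  have partT' : ∀ v ∈ σ'.part σ.n, v ∈ T := by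
    rintro v ⟨hv | hv, hf⟩
    · rw [fA v hv] at hf; exact absurd hf (hfne v hv)
    · exact hv
  have allowsub : ∀ j, σ'.allow j ⊆ σ.allow j := fun j v hv hA => by
    rw [← fA v hA]; exact hv (hAsub hA)
  have allown : ∀ v ∈ σ'.allow σ.n, v ∉ σ.A := by
    intro v hv hA
    have := allowsub _ hv hA
    exact absurd (hI.f_lt v hA) (not_lt.2 this)
  have bufmono : ∀ i x, i ≠ σ.n → σ.buf G c γ i x → σ'.buf G c γ i x := by
    rintro i x hin ⟨R, h1, h2, h3⟩
    refine ⟨R, h1, fun v hv => ⟨?_, ?_⟩, fun z l hz hza hw => h3 z l hz (allowsub i hza) (hw.mono (allowsub i))⟩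
    · rintro (hA | hE)
      · rw [fA v hA]; exact (h2 v hv).1 hA
      · rw [fT v hE]; exact hin.symm
    · intro hA hh
      exact (h2 v hv).2 (nA v hA) ((κmem v (nA v hA) i hin).1 hh)
  have radmono : ∀ a ∈ σ.A, ∀ ρ ρ', ρ ≤ ρ' → σ.Rad G c a ρ → σ'.Rad G c a ρ' := by
    rintro a ha ρ ρ' hρ ⟨k, s, l, h1, h2, h3⟩
    refine ⟨k, s, l, ?_, ?_, h3.trans hρ⟩
    · rw [fA a ha, Sj _ (hfne a ha)]; exact h1
    · rw [fA a ha]; exact h2.mono (partsub _)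
  have radT : ∀ a ∈ T, ∀ m : ℕ, σ'.Rad G c a (γ * m) := by
    intro a ha m
    obtain ⟨k, hk⟩ := id ha
    refine ⟨k, a, 0, ?_, .nil _, by positivity⟩
    rw [fT a ha, Snn]; exact hk
  refine ⟨σ', ?_, hAsub, hTsub hu0T⟩
  constructor
  · -- f_lt
    rintro a (ha | ha)
    · rw [fA a ha, n']; have := hI.f_lt a ha; omega
    · rw [fT a ha, n']; omega
  · intro u hu i hi
    by_cases hin : i = σ.n
    · omega
    · have := hI.κ_lt u (nA u hu) i ((κmem u (nA u hu) i hin).1 hi); omega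
  · intro j i hi
    by_cases hj : j = σ.n
    · subst hj; rw [Kn] at hi; exact hI.κ_lt u0 hu0 i hi
    · rw [Kj j hj] at hi; exact hI.K_lt j i hi
  · intro j hj
    rw [n'] at hj
    rw [Kj j (by omega)]; exact hI.K_out j (by omega)
  · -- uu
    intro u hu v hv ha
    by_cases huC : u ∈ C
    · rw [κC u huC, κC v (comp_adj huC (nA v hv) ha)]
    · by_cases hvC : v ∈ C
      · exact absurd (comp_adj hvC (nA u hu) ha.symm) huC
      · rw [κN u huC, κN v hvC]; exact hI.uu u (nA u hu) v (nA v hv) ha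
  · -- ua
    rintro u hu a (ha | ha) hua
    · rw [fA a ha, κmem u (nA u hu) _ (hfne a ha)]
      exact hI.ua u (nA u hu) a ha hua
    · rw [fT a ha, κC u (comp_adj (hTC ha) (nA u hu) hua.symm)]
      exact Finset.mem_insert_self _ _
  · -- aa
    rintro a (ha | ha) b (hb | hb) hab hlt
    · rw [fA a ha, fA b hb] at hlt ⊢
      rw [Kj _ (hfne b hb)]
      exact hI.aa a ha b hb hab hlt
    · rw [fA a ha, fT b hb, Kn, ← hκC b (hTC hb)]
      exact hI.ua b (hTA b hb) a ha hab.symm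
    · rw [fT a ha, fA b hb] at hlt
      have := hI.f_lt b hb; omega
    · rw [fT a ha, fT b hb] at hlt; omega
  · -- clκ
    intro u hu i hi j hj hij
    have huA := nA u hu
    by_cases hjn : j = σ.n
    · subst hjn
      rw [Kn, ← hκC u (κnC u huA hj)]
      exact (κmem u huA i hij.ne).1 hi
    · have hj' := (κmem u huA j hjn).1 hj
      have hjl := hI.κ_lt u huA j hj'
      rw [Kj j hjn]
      exact hI.clκ u huA i ((κmem u huA i (by omega)).1 hi) j hj' hij
  · -- clK
    intro m i hi j hj hij
    by_cases hm : m = σ.n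
    · subst hm
      rw [Kn] at hi hj
      rw [Kj j (hI.κ_lt u0 hu0 j hj).ne]
      exact hI.clκ u0 hu0 i hi j hj hij
    · rw [Kj m hm] at hi hj
      have hmn : m < σ.n := by
        by_contra hh
        rw [hI.K_out m (not_lt.1 hh)] at hj
        simp at hj
      have := hI.K_lt m j hj
      rw [Kj j (by omega)]
      exact hI.clK m i hi j hj hij
  · -- Kadj
    intro j i hi
    by_cases hj : j = σ.n
    · subst hj
      rw [Kn] at hi
      obtain ⟨hxC, a, ha, hxa, hf⟩ := hx i hi
      refine ⟨a, partsub i ⟨ha, hf⟩, x i, partT ?_, hxa.symm⟩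
      exact hPT i hi
    · rw [Kj j hj] at hi
      obtain ⟨a, ha, b, hb, hab⟩ := hI.Kadj j i hi
      exact ⟨a, partsub _ ha, b, partsub _ hb, hab⟩
  · intro j hj
    by_cases hjn : j = σ.n
    · subst hjn; rw [Kn]; exact hcard
    · rw [Kj j hjn]; exact hI.Kcard j (by omega)
  · -- bufU
    intro u hu i hi hiu
    by_cases hin : i = σ.n
    · subst hin
      have huC : u ∉ C := fun huC => hiu (by rw [κC u huC]; exact Finset.mem_insert_self _ _)
      refine ⟨{v | v ∉ σ.A ∧ v ∉ C}, ⟨nA u hu, huC⟩, ?_, ?_⟩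
      · rintro v ⟨hv1, hv2⟩
        refine ⟨?_, fun _ hh => hv2 (κnC v hv1 hh)⟩
        rintro (hv | hv)
        · exact absurd hv hv1
        · exact absurd (hTC hv) hv2
      · intro z l hz hza hw
        exfalso
        obtain ⟨p, y, l1, l2, h1, h2, h3, h3', h4, h5, h6⟩ :=
          hw.exit (R := {v | v ∉ σ.A ∧ v ∉ C}) ⟨nA u hu, huC⟩ hz
        have hyA := allown y (h5.start_mem hza)
        have hyC : y ∈ C := by
          by_contra hyC
          exact h2 ⟨hyA, hyC⟩
        exact h3.2 (comp_adj hyC h3.1 h4.symm)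
    · apply bufmono i u hin
      refine hI.bufU u (nA u hu) i (by omega) ?_
      rwa [← κmem u (nA u hu) i hin]
  · -- bufA
    rintro y (hy | hy) i hi hiK
    · rw [fA y hy] at hi hiK
      rw [Kj _ (hfne y hy)] at hiK
      have := hI.f_lt y hy
      exact bufmono i y (by omega) (hI.bufA y hy i hi hiK)
    · rw [fT y hy] at hi hiK
      rw [Kn, ← hκC y (hTC hy)] at hiK
      exact bufmono i y hi.ne (hI.bufU y (hTA y hy) i hi hiK)
  · -- lip
    intro j hj u hu v hv ha
    by_cases hjn : j = σ.n
    · subst hjn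
      have huA := allown u hu
      have hvA := allown v hv
      rw [tn]
      dsimp only
      by_cases huC : u ∈ C
      · have hvC := comp_adj huC hvA ha
        rw [if_pos huC, if_pos hvC]
        exact hlip u huC v hvC ha
      · have hvC : v ∉ C := fun hvC => huC (comp_adj hvC huA ha.symm)
        rw [if_neg huC, if_neg hvC]
        simpa using hc0 u v
    · rw [tj j hjn]
      exact hI.lip j (by omega) u (allowsub j hu) v (allowsub j hv) ha
  · -- geo
    intro j hj k y hy y' hy'
    by_cases hjn : j = σ.n
    · subst hjn
      rw [Snn] at hy hy'
      rw [tn]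
      dsimp only
      rw [if_pos (hTC (hSnT k hy)), if_pos (hTC (hSnT k hy'))]
      exact (hSgeo k y hy y' hy').mono partT
    · rw [Sj j hjn] at hy hy'
      rw [tj j hjn]
      exact (hI.geo j (by omega) k y hy y' hy').mono (partsub j)
  · -- Ssub
    intro j hj k y hy
    by_cases hjn : j = σ.n
    · subst hjn
      rw [Snn] at hy
      rw [Kn]
      exact ⟨partT (hSnT k hy), hSk k y hy⟩
    · rw [Sj j hjn] at hy
      rw [Kj j hjn]
      have := hI.Ssub j (by omega) k y hy
      exact ⟨partsub j this.1, this.2⟩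
  · -- rad
    rintro a (ha | ha)
    · refine radmono a ha _ _ ?_ (hI.rad a ha)
      rw [fA a ha, Kj _ (hfne a ha)]
    · exact radT a ha _
  · -- radb
    rintro a (ha | ha) u hu hua
    · refine radmono a ha _ _ ?_ (hI.radb a ha u (nA u hu) hua)
      rw [fA a ha, Kj _ (hfne a ha)]
      have : ((σ.K (σ.f a) \ σ.κ u).card : ℝ) ≤ (σ.K (σ.f a) \ σ'.κ u).card := by
        refine Nat.cast_le.2 (Finset.card_le_card ?_)
        intro i hi
        rw [Finset.mem_sdiff] at hi ⊢
        have h1 := hI.K_lt _ i hi.1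
        have h2 := hI.f_lt a ha
        rw [κmem u (nA u hu) i (by omega)]
        exact hi
      exact mul_le_mul_of_nonneg_left this hγ
    · exact radT a ha _
  · -- root
    intro j hj
    by_cases hjn : j = σ.n
    · subst hjn
      rw [rn]
      refine ⟨partT hu0T, fun a ha => ?_⟩
      obtain ⟨l, hl⟩ := hTroot a (partT' a ha)
      exact ⟨l, hl.mono partT⟩
    · rw [rj j hjn]
      obtain ⟨h1, h2⟩ := hI.rootm j (by omega)
      refine ⟨partsub j h1, ?_⟩
      rintro a ⟨ha | ha, hfa⟩
      · rw [fA a ha] at hfa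
        obtain ⟨l, hl⟩ := h2 a ⟨ha, hfa⟩
        exact ⟨l, hl.mono (partsub j)⟩
      · rw [fT a ha] at hfa; exact absurd hfa.symm hjn

open Classical in
theorem finish [Finite V] (hc0 : ∀ x y, 0 ≤ c x y) (hcs : ∀ x y, c x y = c y x) (hγ : 0 ≤ γ)
    (hm : ¬ HasCompleteMinor G h) :
    ∀ N M : ℕ, ∀ σ : CSt V, σ.Inv G c γ h → (σ.Aᶜ).ncard = N →
      (∑ᶠ v, (σ.κ v).card) = M → ∃ σ' : CSt V, σ'.Inv G c γ h ∧ σ'.A = Set.univ := by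
  have := Fintype.ofFinite V
  intro N
  induction N using Nat.strong_induction_on with
  | _ N ihN =>
  intro M
  induction M using Nat.strong_induction_on with
  | _ M ihM =>
  intro σ hI hN hM
  by_cases hA : σ.A = Set.univ
  · exact ⟨σ, hI, hA⟩
  obtain ⟨u0, hu0⟩ := (Set.ne_univ_iff_exists_notMem _).1 hA
  have hlt : ∀ σ' : CSt V, σ.A ⊆ σ'.A → σ.A ≠ σ'.A → (σ'.Aᶜ).ncard < N := by
    intro σ' hs hne
    rw [← hN]
    refine Set.ncard_lt_ncard ?_ (Set.toFinite _)
    exact compl_lt_compl_iff_lt.2 (hs.ssubset_of_ne hne)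
  by_cases hadj : ∀ Y ∈ σ.κ u0, ∃ u ∈ σ.comp G c u0, ∃ a ∈ σ.A, G.Adj u a ∧ σ.f a = Y
  · obtain ⟨σ', hI', hs, hu⟩ := create hc0 hcs hγ hI hu0 (κ_card hI hu0 hm hadj) hadj
    exact ihN _ (hlt σ' hs fun he => hu0 (he ▸ hu)) _ σ' hI' rfl rfl
  · push Not at hadj
    obtain ⟨Y, hY, hYn⟩ := hadj
    obtain ⟨σ', hI', hs, hκ, hκ0⟩ := grow hc0 hγ hI hu0 hY hYn
    by_cases he : σ.A = σ'.A
    · refine ihM _ ?_ σ' hI' (he ▸ hN) rfl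
      rw [← hM, finsum_eq_sum_of_fintype, finsum_eq_sum_of_fintype]
      refine Finset.sum_lt_sum (fun v _ => Finset.card_le_card (hκ v)) ⟨u0, Finset.mem_univ _, ?_⟩
      rw [hκ0]
      exact Finset.card_erase_lt_of_mem hY
    · exact ihN _ (hlt σ' hs he) _ σ' hI' rfl rfl

theorem exists_full [Finite V] (hc0 : ∀ x y, 0 ≤ c x y) (hcs : ∀ x y, c x y = c y x) (hγ : 0 ≤ γ)
    (hm : ¬ HasCompleteMinor G h) [Nonempty V] :
    ∃ σ' : CSt V, σ'.Inv G c γ h ∧ σ'.A = Set.univ := by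
  let σ : CSt V := ⟨∅, fun _ => 0, 0, fun _ => ∅, fun _ => ∅, fun _ _ => ∅, fun _ _ => 0,
    fun _ => Classical.arbitrary V⟩
  refine finish hc0 hcs hγ hm _ _ σ ?_ rfl rfl
  constructor <;> simp [σ]

end CSt
end build

open Classical in
theorem real_cover {V : Type} [Finite V] [Nonempty V] {G : SimpleGraph V} {c : V → V → ℝ}
    (hc0 : ∀ x y, 0 ≤ c x y)
    (hcs : ∀ x y, c x y = c y x) {h : ℕ} (hh : 1 ≤ h) {ε r : ℝ}
    (hε : 0 < ε) (hε1 : ε ≤ 1) (hr : 0 < r) (hm : ¬ HasCompleteMinor G h) :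
    ∃ 𝒟 : Set (Set V),
      (∀ v, ∃ A ∈ 𝒟, ∀ u l, l < (1 + ε / 16) * r → Rw G c Set.univ v u l → u ∈ A) ∧
      (∀ A ∈ 𝒟, ∀ u ∈ A, ∀ v ∈ A, ∃ l, l ≤ (4 + ε) * r ∧ Rw G c Set.univ u v l) ∧
      (∀ v : V, ({A | A ∈ 𝒟 ∧ v ∈ A}.ncard : ℝ) ≤
        ((h - 2 + 2 * ⌈24 * (h : ℝ) / ε⌉₊).choose (h - 1) : ℝ) *
          (12 + 48 / ε) * ((h : ℝ) - 1)) := by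
  have hhpos : (0 : ℝ) < h := by exact_mod_cast hh
  have hγ : 0 ≤ ε * r / (8 * h) := by positivity
  obtain ⟨σ, hI, hA⟩ := CSt.exists_full (γ := ε * r / (8 * h)) hc0 hcs hγ hm
  have mA : ∀ v, v ∈ σ.A := fun v => hA ▸ Set.mem_univ v
  have fl : ∀ v, σ.f v < σ.n := fun v => hI.f_lt v (mA v)
  have hcard : ∀ j, (σ.K j).card + 2 ≤ h := by
    intro j
    by_cases hj : j < σ.n
    · exact hI.Kcard j hj
    · rw [hI.K_out j (not_lt.1 hj)]
      have := hI.Kcard _ (fl (Classical.arbitrary V))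
      simp; omega
  have hpart : ∀ j, σ.part j ⊆ {v | j ≤ σ.f v} := fun j v hv => hv.2.ge
  have hallow : ∀ j, {v | j ≤ σ.f v} ⊆ σ.allow j := fun j v hv _ => hv
  refine cover_of_decomp hc0 hcs (K := σ.K) (f := σ.f) (γ := ε * r / (8 * h)) hε hε1 hr
    (by field_simp) (fun j k => if j < σ.n then σ.S j k else ∅)
    (fun j v => if j < σ.n then σ.t j v else 0) hI.K_lt hI.clK hcard
    (fun a b hab hlt => hI.aa a (mA a) b (mA b) hab hlt) ?_ ?_ ?_ ?_ ?_
  · intro x z l hlt hK hw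
    obtain ⟨R, h1, h2, h3⟩ := hI.bufA x (mA x) _ hlt hK
    refine h3 z l (fun hz => (h2 z hz).1 (mA z) rfl) (fun _ => le_rfl) (hw.mono (hallow _))
  · intro j u v ha hu hv
    have hj : j < σ.n := hu.trans_lt (fl u)
    simp only [if_pos hj]
    exact hI.lip j hj u (fun _ => hu) v (fun _ => hv) ha
  · intro j k y y' hy hy'
    by_cases hj : j < σ.n
    · simp only [if_pos hj] at hy hy' ⊢
      exact (hI.geo j hj k y hy y' hy').mono (hpart j)
    · simp [if_neg hj] at hy
  · intro j k y hy
    by_cases hj : j < σ.n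
    · simp only [if_pos hj] at hy
      have := hI.Ssub j hj k y hy
      exact ⟨this.1.2, this.2⟩
    · simp [if_neg hj] at hy
  · intro a
    obtain ⟨k, s, l, h1, h2, h3⟩ := hI.rad a (mA a)
    refine ⟨k, s, l, ?_, h2.mono (hpart _), h3.trans ?_⟩
    · rw [if_pos (fl a)]; exact h1
    · refine mul_le_mul_of_nonneg_left ?_ hγ
      have := hcard (σ.f a)
      exact_mod_cast (by omega : (σ.K (σ.f a)).card ≤ h)

theorem minor_mono {V : Type} {G G' : SimpleGraph V} (hle : G' ≤ G) {h : ℕ}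
    (hm : HasCompleteMinor G' h) : HasCompleteMinor G h := by
  obtain ⟨B, h1, h2, h3⟩ := hm
  refine ⟨B, fun i => (h1 i).mono ?_, h2, fun i j hij => ?_⟩
  · exact fun a b hab => hle hab
  · obtain ⟨u, hu, v, hv, huv⟩ := h3 i j hij
    exact ⟨u, hu, v, hv, hle huv⟩

/-- edges of finite weight -/
def finG {V : Type} (G : SimpleGraph V) (w : Sym2 V → ℝ≥0∞) : SimpleGraph V where
  Adj x y := G.Adj x y ∧ w s(x, y) ≠ ⊤
  symm := ⟨fun x y hxy => ⟨hxy.1.symm, by rw [Sym2.eq_swap]; exact hxy.2⟩⟩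
  loopless := ⟨fun x hx => G.loopless.irrefl x hx.1⟩

theorem rw_of_walk {V : Type} {G : SimpleGraph V} {w : Sym2 V → ℝ≥0∞} {u v : V} (p : G.Walk u v) :
    walkWeight w p ≠ ⊤ → Rw (finG G w) (fun x y => (w s(x, y)).toReal) Set.univ u v
      (walkWeight w p).toReal := by
  induction p with
  | nil => intro _; simpa [walkWeight] using Rw.nil _
  | @cons a b d ha p ih =>
    intro hne
    have hE : walkWeight w (SimpleGraph.Walk.cons ha p) = w s(a, b) + walkWeight w p := by
      simp [walkWeight]
    rw [hE] at hne ⊢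
    rw [ENNReal.add_ne_top] at hne
    rw [ENNReal.toReal_add hne.1 hne.2]
    exact .cons (Set.mem_univ _) ⟨ha, hne.1⟩ (ih hne.2)

theorem walk_of_rw {V : Type} {G : SimpleGraph V} {w : Sym2 V → ℝ≥0∞} {u v : V} {l : ℝ}
    (hr : Rw (finG G w) (fun x y => (w s(x, y)).toReal) Set.univ u v l) :
    ∃ p : G.Walk u v, walkWeight w p = ENNReal.ofReal l := by
  induction hr with
  | nil => exact ⟨.nil, by simp [walkWeight]⟩
  | @cons x y z l hx ha hr ih =>
    obtain ⟨p, hp⟩ := ih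
    refine ⟨.cons ha.1 p, ?_⟩
    have hE : walkWeight w (SimpleGraph.Walk.cons ha.1 p) = w s(x, y) + walkWeight w p := by
      simp [walkWeight]
    rw [hE, hp, ENNReal.ofReal_add ENNReal.toReal_nonneg
      (hr.nonneg fun _ _ => ENNReal.toReal_nonneg), ENNReal.ofReal_toReal ha.2]

theorem stmt_4 {V : Type} [Fintype V] (h : ℕ) (hh : 1 ≤ h)
    (ε : ℝ) (hε0 : 0 < ε) (hε1 : ε ≤ 1) (r : ℝ) (hr : 0 < r)
    (G : SimpleGraph V) (w : Sym2 V → ℝ≥0∞) (hminor : ¬ HasCompleteMinor G h) :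
    ∃ 𝒟 : Set (Set V),
      IsCover G w r 𝒟 ∧
      (∀ A ∈ 𝒟, ∀ u ∈ A, ∀ v ∈ A, gdist G w u v ≤ ENNReal.ofReal ((4 + ε) * r)) ∧
      (∀ v : V, ({A | A ∈ 𝒟 ∧ v ∈ A}.ncard : ℝ) ≤
        ((h - 2 + 2 * ⌈24 * (h : ℝ) / ε⌉₊).choose (h - 1) : ℝ) *
          (12 + 48 / ε) * ((h : ℝ) - 1)) := by
  rcases isEmpty_or_nonempty V with hV | hV
  · exact ⟨∅, fun v => hV.elim v, by simp, fun v => hV.elim v⟩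
  obtain ⟨𝒟, h1, h2, h3⟩ := real_cover (G := finG G w) (c := fun x y => (w s(x, y)).toReal)
    (fun _ _ => ENNReal.toReal_nonneg) (fun x y => by rw [Sym2.eq_swap]) hh hε0 hε1 hr
    (fun hm => hminor (minor_mono (G' := finG G w) (fun a b hab => hab.1) hm))
  refine ⟨𝒟, ?_, ?_, h3⟩
  · intro v
    obtain ⟨A, hA, hc⟩ := h1 v
    refine ⟨A, hA, fun u hu => ?_⟩
    have hpos : 0 < (1 + ε / 16) * r := by positivity
    have hlt : gdist G w v u < ENNReal.ofReal ((1 + ε / 16) * r) := by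
      refine hu.trans_lt ((ENNReal.ofReal_lt_ofReal_iff hpos).2 ?_)
      have : 0 < ε / 16 * r := by positivity
      linarith
    obtain ⟨p, hp⟩ := iInf_lt_iff.1 hlt
    refine hc u _ ?_ (rw_of_walk p hp.ne_top)
    exact (ENNReal.lt_ofReal_iff_toReal_lt hp.ne_top).1 hp
  · intro A hA u hu v hv
    obtain ⟨l, hl, hw⟩ := h2 A hA u hu v hv
    obtain ⟨p, hp⟩ := walk_of_rw hw
    exact (iInf_le _ p).trans (hp ▸ ENNReal.ofReal_le_ofReal hl)

end ScatterDim
end
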